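/- arXiv:1910.05604 — 2 statements merged into one kernel-verified Lean document; each statement's English description precedes it below -/
import Mathlib

section
/- Let M : ℝ² → ℝ be smooth with all partial derivatives up to order 9 square-integrable on ℝ², let Ω := {x∈ℝ³ : x₁ > M(x₂,x₃)}, let μ̂, ν̂ > 0 be constants, and let k ∈ {0,1,2}. Then there exists a constant C > 0 (depending on Ω) such that whenever u : closure(Ω) → ℝ³ is of class C^{k+2} with ∫_Ω|∇^j u|² dx < ∞ for 0 ≤ j ≤ k+2, f := −μ̂Δu − ν̂∇(div u) satisfies ‖f‖_{H^k(Ω)} < ∞, u = 0 on ∂Ω, and u(x) → 0 as |x| → ∞, then ( ∫_Ω |∇^{k+2}u|² dx )^{1/2} ≤ C ( ‖f‖_{H^k(Ω)} + ( ∫_Ω |u|² dx )^{1/2} ). -/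
/- STATEMENT 11: elliptic estimate for the Lamé system −μ̂Δu − ν̂∇(div u) = f
with zero Dirichlet boundary condition and decay at infinity, on the perturbed
half-space Ω. -/

noncomputable section

open MeasureTheory Real Set Filter

abbrev E3 : Type := EuclideanSpace ℝ (Fin 3)
abbrev E2 : Type := EuclideanSpace ℝ (Fin 2)

/-- Projection on the tangential variables `x' = (x₂, x₃)`. -/
def proj2 (x : E3) : E2 := (WithLp.equiv 2 (Fin 2 → ℝ)).symm ![x 1, x 2]

/-- The perturbed half-space `Ω = {x : x₁ > M(x₂,x₃)}`. -/
def Omg (M : E2 → ℝ) : Set E3 := {x : E3 | M (proj2 x) < x 0}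

/-- The boundary point `(M(x'), x')` of `∂Ω` over `x' ∈ ℝ²`. -/
def gph (M : E2 → ℝ) (x' : E2) : E3 := (WithLp.equiv 2 (Fin 3 → ℝ)).symm ![M x', x' 0, x' 1]

/-- The vector in `ℝ³` with the given coordinates. -/
def vecE3 (v : Fin 3 → ℝ) : E3 := (WithLp.equiv 2 (Fin 3 → ℝ)).symm v

/-- Partial derivative `∂ᵢf`. -/
def pd (i : Fin 3) (f : E3 → ℝ) (x : E3) : ℝ := fderiv ℝ f x (EuclideanSpace.single i 1)

/-- Divergence `div u = ∑ᵢ ∂ᵢuᵢ`. -/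
def vdiv (u : E3 → E3) (x : E3) : ℝ := ∑ i, pd i (fun y => u y i) x

/-- Gradient `∇f`. -/
def grad (f : E3 → ℝ) (x : E3) : E3 := vecE3 fun i => pd i f x

/-- Componentwise Laplacian `Δu`. -/
def vlap (u : E3 → E3) (x : E3) : E3 := vecE3 fun i => ∑ j, pd j (pd j fun y => u y i) x


/-- coordinate vector -/
abbrev eb (i : Fin 3) : E3 := EuclideanSpace.single i (1:ℝ)

/-- `proj2` as a continuous linear map -/
def projL : E3 →L[ℝ] E2 :=
  LinearMap.toContinuousLinearMap
    { toFun := proj2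
      map_add' := by
        intro x y; ext i; fin_cases i <;> simp [proj2]
      map_smul' := by
        intro c x; ext i; fin_cases i <;> simp [proj2] }

lemma projL_apply (x : E3) : projL x = proj2 x := rfl

lemma proj2_add_smul_eb (x : E3) (t : ℝ) : proj2 (x + t • eb 0) = proj2 x := by
  ext i; fin_cases i <;> simp [proj2]

lemma gph_proj2 (M : E2 → ℝ) (x : E3) (h : M (proj2 x) = x 0) : gph M (proj2 x) = x := by
  ext i; fin_cases i <;> simp [gph, h] <;> simp [proj2]

lemma proj2_gph (M : E2 → ℝ) (x' : E2) : proj2 (gph M x') = x' := by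
  ext i; fin_cases i <;> simp [gph, proj2]

lemma le_mem_closure (M : E2 → ℝ) (x : E3) (h : M (proj2 x) ≤ x 0) : x ∈ closure (Omg M) := by
  have ht : Tendsto (fun t : ℝ => x + t • eb 0) (nhdsWithin 0 (Ioi 0)) (nhds x) := by
    have : Continuous (fun t : ℝ => x + t • eb 0) := by fun_prop
    have h2 := this.tendsto 0
    simp only [zero_smul, add_zero] at h2
    exact h2.mono_left nhdsWithin_le_nhds
  refine mem_closure_of_tendsto ht ?_
  filter_upwards [self_mem_nhdsWithin] with t ht
  simp only [Omg, Set.mem_ofPred_eq, proj2_add_smul_eb]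
  have : (0:ℝ) < t := ht
  simp
  linarith

/-- reflection coefficients -/
def rc : Fin 5 → ℝ := ![15, -40, 45, -24, 5]

lemma rc_sum (j : ℕ) (hj : j ≤ 4) : ∑ m : Fin 5, rc m * (-((m:ℕ):ℝ) - 1) ^ j = 1 := by
  simp [Fin.sum_univ_five, rc]
  interval_cases j <;> norm_num

/-- the coordinate functional y ↦ y 0 times vector -/
def RL (m : Fin 5) : E3 →L[ℝ] E3 :=
  ContinuousLinearMap.id ℝ E3 +
    (-((m:ℕ):ℝ) - 2) • ((EuclideanSpace.proj (0 : Fin 3) : E3 →L[ℝ] ℝ).smulRight (eb 0))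

lemma RL_apply (m : Fin 5) (y : E3) :
    RL m y = (y - y 0 • eb 0) + (-((m:ℕ):ℝ) - 1) • (y 0 • eb 0) := by
  simp only [RL, add_apply, smul_apply,
    ContinuousLinearMap.smulRight_apply, ContinuousLinearMap.id_apply]
  have : (EuclideanSpace.proj (0 : Fin 3) : E3 →L[ℝ] ℝ) y = y 0 := rfl
  rw [this]
  module

lemma RL_zero (m : Fin 5) (y : E3) : (RL m y) 0 = (-((m:ℕ):ℝ) - 1) * y 0 := by
  rw [RL_apply]; simp

lemma RL_fix (m : Fin 5) (y : E3) (h : y 0 = 0) : RL m y = y := by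
  rw [RL_apply]; simp [h]

lemma multi_match {j : ℕ} (hj : j ≤ 4) (q : ContinuousMultilinearMap ℝ (fun _ : Fin j => E3) E3) :
    ∑ m : Fin 5, rc m • q.compContinuousLinearMap (fun _ => RL m) = q := by
  ext1 w
  simp only [sum_apply, smul_apply,
    ContinuousMultilinearMap.compContinuousLinearMap_apply]
  have key : ∀ c : ℝ, q (fun i => (w i - w i 0 • eb 0) + c • (w i 0 • eb 0)) =
      ∑ s : Finset (Fin j), c ^ (s.card) •
        q (s.piecewise (fun i => w i 0 • eb 0) (fun i => w i - w i 0 • eb 0)) := by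
    intro c
    have h1 : (fun i => (w i - w i 0 • eb 0) + c • (w i 0 • eb 0)) =
      (fun i => c • (w i 0 • eb 0)) + (fun i => (w i - w i 0 • eb 0)) := by
      funext i; simp [add_comm]
    rw [h1, q.map_add_univ]
    refine Finset.sum_congr rfl fun s _ => ?_
    have h2 := q.map_piecewise_smul (fun _ => c)
      (s.piecewise (fun i => w i 0 • eb 0) (fun i => w i - w i 0 • eb 0)) s
    rw [Finset.prod_const] at h2
    rw [← h2]
    congr 1
    funext i
    by_cases hi : i ∈ s <;> simp [hi]
  simp_rw [RL_apply, key]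
  simp_rw [Finset.smul_sum, smul_smul]
  rw [Finset.sum_comm]
  have h3 : ∀ s : Finset (Fin j), ∑ m : Fin 5, (rc m * (-((m:ℕ):ℝ) - 1) ^ s.card) •
        q (s.piecewise (fun i => w i 0 • eb 0) (fun i => w i - w i 0 • eb 0)) =
      (1:ℝ) ^ s.card • q (s.piecewise (fun i => w i 0 • eb 0) (fun i => w i - w i 0 • eb 0)) := by
    intro s
    rw [← Finset.sum_smul, rc_sum _ ((Finset.card_le_univ s).trans (by simpa using hj)), one_pow]
  simp_rw [h3]
  rw [← key 1]
  congr 1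
  funext i; simp

/-- Extension from the closed half space. -/
lemma halfspace_ext (n : ℕ) (hn : n ≤ 4) (v : E3 → E3)
    (hv : ContDiffOn ℝ n v {y : E3 | 0 ≤ y 0}) :
    ∃ w : E3 → E3, ContDiff ℝ n w ∧ ∀ y : E3, 0 ≤ y 0 → w y = v y := by
  classical
  set H : Set E3 := {y : E3 | 0 ≤ y 0} with hH
  set H' : Set E3 := {y : E3 | y 0 ≤ 0} with hH'
  have hc0 : Continuous (fun y : E3 => y 0) := by fun_prop
  have Hcl : IsClosed H := isClosed_le continuous_const hc0
  have Hcl' : IsClosed H' := isClosed_le hc0 continuous_const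
  have hconv : Convex ℝ H := by
    intro x hx y hy a b ha hb _
    simp only [hH, Set.mem_ofPred_eq] at *
    simp only [PiLp.add_apply, PiLp.smul_apply, smul_eq_mul]
    positivity
  have hint : (interior H).Nonempty := by
    refine ⟨eb 0, ?_⟩
    rw [mem_interior]
    refine ⟨{y : E3 | 0 < y 0}, fun y hy => ?_, isOpen_lt continuous_const hc0, ?_⟩
    · simp only [hH, Set.mem_ofPred_eq] at *
      exact hy.le
    · simp
  have hud := uniqueDiffOn_convex hconv hint
  have hp := hv.ftaylorSeriesWithin hud
  set p := ftaylorSeriesWithin ℝ v H with hpdef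
  -- the reflected series
  have hR : ∀ m : Fin 5, H' ⊆ (RL m) ⁻¹' H := by
    intro m y hy
    simp only [mem_preimage, hH, Set.mem_ofPred_eq, RL_zero, hH'] at *
    have : (0:ℝ) ≤ (m:ℕ) := by positivity
    nlinarith
  have hpm : ∀ m : Fin 5, HasFTaylorSeriesUpToOn n (v ∘ RL m)
      (fun x k => (p (RL m x) k).compContinuousLinearMap fun _ => RL m) H' := fun m =>
    (hp.compContinuousLinearMap (RL m)).mono (hR m)
  set q : E3 → FormalMultilinearSeries ℝ E3 E3 :=
    fun x k => ∑ m : Fin 5, rc m • (p (RL m x) k).compContinuousLinearMap fun _ => RL m with hq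
  have hqmatch : ∀ x : E3, x 0 = 0 → ∀ k ≤ 4, q x k = p x k := by
    intro x hx k hk
    simp only [hq, RL_fix _ x hx]
    exact multi_match hk (p x k)
  set P : E3 → FormalMultilinearSeries ℝ E3 E3 := fun x => if 0 ≤ x 0 then p x else q x with hP
  have hP1 : ∀ x ∈ H, P x = p x := fun x hx => if_pos hx
  have hP2 : ∀ x ∈ H', ∀ k ≤ 4, P x k = q x k := by
    intro x hx k hk
    by_cases h0 : 0 ≤ x 0
    · have : x 0 = 0 := le_antisymm hx h0
      rw [hP1 x h0, hqmatch x this k hk]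
    · simp [hP, h0]
  have hun : ∀ x : E3, x ∈ H ∨ x ∈ H' := fun x => le_total 0 (x 0)
  have hqd : ∀ m : ℕ, (m:ℕ∞) < n → ∀ x ∈ H',
      HasFDerivWithinAt (q · m) (q x m.succ).curryLeft H' x := by
    intro m hm x hx
    have := HasFDerivWithinAt.fun_sum (u := Finset.univ) (fun i _ =>
      ((hpm i).fderivWithin m (by exact_mod_cast hm) x hx).const_smul (rc i))
    have h2 : HasFDerivWithinAt (fun y => q y m) _ H' x := this
    refine h2.congr_fderiv ?_
    ext1 a
    ext1 b
    simp [hq, ContinuousMultilinearMap.curryLeft_apply]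
  have hqc : ∀ m : ℕ, m ≤ n → ContinuousOn (q · m) H' := by
    intro m hm
    refine continuousOn_finset_sum _ fun i _ => ?_
    exact ((hpm i).cont m (by exact_mod_cast hm)).const_smul (rc i)
  refine ⟨fun x => (P x 0).curry0, ?_, ?_⟩
  · have : HasFTaylorSeriesUpToOn n (fun x => (P x 0).curry0) P univ := by
      refine ⟨fun x _ => rfl, ?_, ?_⟩
      · intro m hm x _
        have hm' : m < n := by exact_mod_cast hm
        rw [hasFDerivWithinAt_univ]
        have hA : HasFDerivWithinAt (P · m) (P x m.succ).curryLeft H x := by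
          by_cases hx : x ∈ H
          · rw [hP1 x hx]
            exact (hp.fderivWithin m hm x hx).congr (fun y hy => by rw [hP1 y hy]) (by rw [hP1 x hx])
          · have : x ∉ closure H := by rwa [Hcl.closure_eq]
            exact HasFDerivWithinAt.of_notMem_closure this
        have hB : HasFDerivWithinAt (P · m) (P x m.succ).curryLeft H' x := by
          by_cases hx : x ∈ H'
          · rw [hP2 x hx m.succ (by omega)]
            exact (hqd m (by exact_mod_cast hm) x hx).congr
              (fun y hy => by rw [hP2 y hy m (by omega)]) (by rw [hP2 x hx m (by omega)])
          · have : x ∉ closure H' := by rwa [Hcl'.closure_eq]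
            exact HasFDerivWithinAt.of_notMem_closure this
        have := hA.union hB
        rw [show H ∪ H' = univ from eq_univ_of_forall hun, hasFDerivWithinAt_univ] at this
        exact this
      · intro m hm
        have hm' : m ≤ n := by exact_mod_cast hm
        rw [show (univ : Set E3) = H ∪ H' from (eq_univ_of_forall hun).symm]
        refine ContinuousOn.union_of_isClosed ?_ ?_ Hcl Hcl'
        · exact (hp.cont m hm).congr (fun y hy => by rw [hP1 y hy])
        · exact (hqc m hm').congr (fun y hy => by rw [hP2 y hy m (by omega)])
    rw [← contDiffOn_univ]
    exact this.contDiffOn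
  · intro y hy
    have : y ∈ H := hy
    simp only [hP1 y this]
    exact hp.zero_eq y this

/-- Extension from the closure of the perturbed half space. -/
lemma omg_ext (M : E2 → ℝ) (hM : ContDiff ℝ (⊤ : ℕ∞) M) (n : ℕ) (hn : n ≤ 4) (u : E3 → E3)
    (hu : ContDiffOn ℝ n u (closure (Omg M))) :
    ∃ w : E3 → E3, ContDiff ℝ n w ∧ ∀ x : E3, M (proj2 x) ≤ x 0 → w x = u x := by
  have hMp : ContDiff ℝ n (fun x : E3 => M (proj2 x)) := by
    have := (hM.of_le (m := (n : WithTop ℕ∞)) (by exact_mod_cast le_top)).comp projL.contDiff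
    exact this
  have hc : ContDiff ℝ n (fun y : E3 => y + M (proj2 y) • eb 0) :=
    contDiff_id.add (hMp.smul contDiff_const)
  have hc' : ContDiff ℝ n (fun y : E3 => y + (-M (proj2 y)) • eb 0) :=
    contDiff_id.add (hMp.neg.smul contDiff_const)
  obtain ⟨w, hw, hw'⟩ := halfspace_ext n hn (fun y => u (y + M (proj2 y) • eb 0)) (by
    refine hu.comp hc.contDiffOn ?_
    intro y hy
    refine le_mem_closure M _ ?_
    rw [proj2_add_smul_eb]
    simpa using hy)
  refine ⟨fun x => w (x + (-M (proj2 x)) • eb 0), hw.comp hc', ?_⟩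
  intro x hx
  show w (x + (-M (proj2 x)) • eb 0) = u x
  rw [hw']
  · simp only [proj2_add_smul_eb]
    congr 1
    module
  · simpa using hx


lemma sob1 {F : Type*} [NormedAddCommGroup F] [NormedSpace ℝ F] [CompleteSpace F]
    (φ φ' : ℝ → F) (hφ : ∀ t, HasDerivAt φ (φ' t) t) (hc : Continuous φ') :
    ‖φ 0‖ ^ 2 ≤ 2 * ∫ t in (0:ℝ)..1, (‖φ t‖ ^ 2 + ‖φ' t‖ ^ 2) := by
  have hcφ : Continuous φ := continuous_iff_continuousAt.2 fun t => (hφ t).continuousAt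
  have hd : ∀ t, HasDerivAt (fun t => (1 - t) • φ t) ((1 - t) • φ' t + (-1:ℝ) • φ t) t := by
    intro t
    have h1 : HasDerivAt (fun t : ℝ => 1 - t) (-1) t := by
      simpa using (hasDerivAt_id t).const_sub 1
    exact h1.smul (hφ t)
  have hI : ∫ t in (0:ℝ)..1, ((1 - t) • φ' t + (-1:ℝ) • φ t) = - φ 0 := by
    rw [intervalIntegral.integral_eq_sub_of_hasDerivAt (fun t _ => hd t)]
    · simp
    · apply Continuous.intervalIntegrable; fun_prop
  have h1 : ‖φ 0‖ ≤ ∫ t in (0:ℝ)..1, (‖φ t‖ + ‖φ' t‖) := by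
    rw [← norm_neg, ← hI]
    refine (intervalIntegral.norm_integral_le_integral_norm zero_le_one).trans ?_
    refine intervalIntegral.integral_mono_on zero_le_one ?_ ?_ ?_
    · apply Continuous.intervalIntegrable; fun_prop
    · apply Continuous.intervalIntegrable; fun_prop
    · intro t ht
      refine (norm_add_le _ _).trans ?_
      rw [norm_smul, norm_smul, norm_neg, norm_one, one_mul, add_comm]
      have : ‖1 - t‖ ≤ 1 := by
        rw [Real.norm_eq_abs, abs_le]; constructor <;> linarith [ht.1, ht.2]
      nlinarith [norm_nonneg (φ' t)]
  set p : ℝ → ℝ := fun t => ‖φ t‖ + ‖φ' t‖ with hp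
  have hpc : Continuous p := by fun_prop
  set c := ∫ t in (0:ℝ)..1, p t with hcdef
  have h2 : 0 ≤ ∫ t in (0:ℝ)..1, (p t - c) ^ 2 :=
    intervalIntegral.integral_nonneg zero_le_one fun t _ => sq_nonneg _
  have h3 : ∫ t in (0:ℝ)..1, (p t - c) ^ 2 = (∫ t in (0:ℝ)..1, p t ^ 2) - c ^ 2 := by
    have : ∀ t, (p t - c) ^ 2 = (p t ^ 2 - (2 * c) * p t) + c ^ 2 := fun t => by ring
    simp_rw [this]
    rw [intervalIntegral.integral_add, intervalIntegral.integral_sub,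
      intervalIntegral.integral_const_mul, ← hcdef]
    · simp; ring
    all_goals apply Continuous.intervalIntegrable; fun_prop
  have h4 : ∫ t in (0:ℝ)..1, p t ^ 2 ≤ ∫ t in (0:ℝ)..1, 2 * (‖φ t‖ ^ 2 + ‖φ' t‖ ^ 2) := by
    refine intervalIntegral.integral_mono_on zero_le_one ?_ ?_ ?_
    · apply Continuous.intervalIntegrable; fun_prop
    · apply Continuous.intervalIntegrable; fun_prop
    · intro t _
      simp only [hp]
      nlinarith [sq_nonneg (‖φ t‖ - ‖φ' t‖)]
  rw [intervalIntegral.integral_const_mul] at h4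
  have h5 : ‖φ 0‖ ^ 2 ≤ c ^ 2 := pow_le_pow_left₀ (norm_nonneg _) h1 2
  linarith

lemma sob_line (M : E2 → ℝ) (hM : ContDiff ℝ (⊤ : ℕ∞) M) (j : ℕ) (y e : E2) (he : ‖e‖ = 1) :
    ‖iteratedFDeriv ℝ j M y‖ ^ 2 ≤ 2 * ∫ t in (0:ℝ)..1,
      (‖iteratedFDeriv ℝ j M (y + t • e)‖ ^ 2 + ‖iteratedFDeriv ℝ (j+1) M (y + t • e)‖ ^ 2) := by
  have hcont : ∀ i : ℕ, Continuous (iteratedFDeriv ℝ i M) := fun i =>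
    hM.continuous_iteratedFDeriv (by exact_mod_cast le_top)
  have hdiff : Differentiable ℝ (iteratedFDeriv ℝ j M) :=
    hM.differentiable_iteratedFDeriv (by exact_mod_cast WithTop.coe_lt_top j)
  have hfc : Continuous (fderiv ℝ (iteratedFDeriv ℝ j M)) := by
    have : ContDiff ℝ 1 (iteratedFDeriv ℝ j M) :=
      hM.iteratedFDeriv_right (by exact_mod_cast le_top)
    exact this.continuous_fderiv (by simp)
  have h := sob1 (fun t : ℝ => iteratedFDeriv ℝ j M (y + t • e))
    (fun t => fderiv ℝ (iteratedFDeriv ℝ j M) (y + t • e) e)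
    (fun t => by
      have h1 : HasDerivAt (fun t : ℝ => y + t • e) e t := by
        simpa using ((hasDerivAt_id t).smul_const e).const_add y
      exact (hdiff _).hasFDerivAt.comp_hasDerivAt t h1)
    (by fun_prop)
  simp only [zero_smul, add_zero] at h
  refine h.trans ?_
  gcongr 2 * ?_
  refine intervalIntegral.integral_mono_on zero_le_one ?_ ?_ ?_
  · apply Continuous.intervalIntegrable; fun_prop
  · apply Continuous.intervalIntegrable
    have := hcont j
    have := hcont (j+1)
    fun_prop
  · intro t _
    gcongr
    refine (ContinuousLinearMap.le_opNorm _ _).trans ?_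
    rw [he, mul_one, norm_fderiv_iteratedFDeriv]

lemma iter_le_integral (h : E2 → ℝ) (hc : Continuous h) (h0 : ∀ x, 0 ≤ h x) (hi : Integrable h)
    (x : E2) :
    ∫ s in (0:ℝ)..1, ∫ t in (0:ℝ)..1, h (x + s • EuclideanSpace.single 0 1
      + t • EuclideanSpace.single 1 1) ≤ ∫ y, h y := by
  let Ψ : ℝ × ℝ ≃ᵐ E2 := (MeasurableEquiv.finTwoArrow (α := ℝ)).symm.trans
    (MeasurableEquiv.toLp 2 (Fin 2 → ℝ))
  have hΨ : MeasurePreserving Ψ volume volume :=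
    (volume_preserving_finTwoArrow ℝ).symm.trans
      (PiLp.volume_preserving_toLp (Fin 2))
  have hΨe : ∀ p : ℝ × ℝ, x + p.1 • EuclideanSpace.single 0 1 + p.2 • EuclideanSpace.single 1 1
      = x + Ψ p := by
    intro p
    rw [add_assoc]
    congr 1
    ext i; fin_cases i <;> simp [Ψ, MeasurableEquiv.finTwoArrow]
  have hi2 : Integrable (fun p : ℝ × ℝ => h (x + Ψ p)) :=
    hΨ.integrable_comp_emb Ψ.measurableEmbedding |>.2 (hi.comp_add_left x)
  have hE : ∫ p : ℝ × ℝ, h (x + Ψ p) = ∫ y, h y := by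
    rw [hΨ.integral_comp Ψ.measurableEmbedding (fun y => h (x + y))]
    exact integral_add_left_eq_self h x
  rw [← hE]
  have : ∫ s in (0:ℝ)..1, ∫ t in (0:ℝ)..1, h (x + s • EuclideanSpace.single 0 1
      + t • EuclideanSpace.single 1 1) = ∫ p in (Ioc (0:ℝ) 1 ×ˢ Ioc (0:ℝ) 1), h (x + Ψ p) := by
    rw [Measure.volume_eq_prod, setIntegral_prod]
    · simp_rw [intervalIntegral.integral_of_le zero_le_one, ← hΨe]
    · rw [← Measure.volume_eq_prod]; exact hi2.integrableOn
  rw [this]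
  exact setIntegral_le_integral hi2 (Eventually.of_forall fun p => h0 _)

lemma M_bound (M : E2 → ℝ) (hM : ContDiff ℝ (⊤ : ℕ∞) M)
    (hMint : ∀ j ≤ 9, Integrable fun x' : E2 => ‖iteratedFDeriv ℝ j M x'‖ ^ 2) :
    ∃ B : ℝ, 0 ≤ B ∧ ∀ j ≤ 7, ∀ x, ‖iteratedFDeriv ℝ j M x‖ ≤ B := by
  have hcont : ∀ i : ℕ, Continuous (iteratedFDeriv ℝ i M) := fun i =>
    hM.continuous_iteratedFDeriv (by exact_mod_cast le_top)
  have key : ∀ j ≤ 7, ∃ B : ℝ, 0 ≤ B ∧ ∀ x, ‖iteratedFDeriv ℝ j M x‖ ≤ B := by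
    intro j hj
    set N : ℕ → E2 → ℝ := fun i x => ‖iteratedFDeriv ℝ i M x‖ ^ 2 with hN
    have hNc : ∀ i, Continuous (N i) := fun i => (hcont i).norm.pow 2
    have hNc0 := hNc j
    have hNc1 := hNc (j+1)
    have hNc2 := hNc (j+2)
    set h : E2 → ℝ := fun x => N j x + N (j+1) x + (N (j+1) x + N (j+2) x) with hh
    have hhc : Continuous h := by fun_prop
    have hint : Integrable h :=
      ((hMint j (by omega)).add (hMint (j+1) (by omega))).add
        ((hMint (j+1) (by omega)).add (hMint (j+2) (by omega)))
    have h0 : ∀ x, 0 ≤ h x := fun x => by simp only [hh, hN]; positivity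
    have hA : ∀ x, N j x ≤ 4 * ∫ y, h y := by
      intro x
      have s1 := sob_line M hM j x (EuclideanSpace.single 0 1) (by simp)
      have s2 : ∫ t in (0:ℝ)..1, (N j (x + t • EuclideanSpace.single 0 1)
          + N (j+1) (x + t • EuclideanSpace.single 0 1)) ≤
          ∫ s in (0:ℝ)..1, 2 * ∫ t in (0:ℝ)..1, h (x + s • EuclideanSpace.single 0 1
            + t • EuclideanSpace.single 1 1) := by
        refine intervalIntegral.integral_mono_on zero_le_one ?_ ?_ ?_
        · apply Continuous.intervalIntegrable; fun_prop
        · apply Continuous.intervalIntegrable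
          apply Continuous.mul continuous_const
          apply intervalIntegral.continuous_parametric_intervalIntegral_of_continuous' (f := fun s t =>
            h (x + s • EuclideanSpace.single 0 1 + t • EuclideanSpace.single 1 1))
          fun_prop
        · intro s _
          have a1 := sob_line M hM j (x + s • EuclideanSpace.single 0 1)
            (EuclideanSpace.single 1 1) (by simp)
          have a2 := sob_line M hM (j+1) (x + s • EuclideanSpace.single 0 1)
            (EuclideanSpace.single 1 1) (by simp)
          refine (add_le_add a1 a2).trans (le_of_eq ?_)
          rw [← mul_add, ← intervalIntegral.integral_add]
          · apply Continuous.intervalIntegrable; fun_prop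
          · apply Continuous.intervalIntegrable; fun_prop
      rw [intervalIntegral.integral_const_mul] at s2
      have s3 := iter_le_integral h hhc h0 hint x
      have s1' : N j x ≤ 2 * ∫ t in (0:ℝ)..1, (N j (x + t • EuclideanSpace.single 0 1)
          + N (j+1) (x + t • EuclideanSpace.single 0 1)) := s1
      linarith
    refine ⟨Real.sqrt (4 * ∫ y, h y), Real.sqrt_nonneg _, fun x => ?_⟩
    exact Real.le_sqrt_of_sq_le (hA x)
  choose! B hB0 hB using key
  refine ⟨∑ j ∈ Finset.range 8, B j, Finset.sum_nonneg fun j hj => hB0 j (by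
    have := Finset.mem_range.1 hj; omega), fun j hj x => (hB j hj x).trans ?_⟩
  exact Finset.single_le_sum (f := B) (fun i hi => hB0 i (by
    have := Finset.mem_range.1 hi; omega)) (Finset.mem_range.2 (by omega))


/-- directional derivative along the coordinate direction `i`, vector valued -/
def Dv {F : Type*} [NormedAddCommGroup F] [NormedSpace ℝ F] (i : Fin 3) (g : E3 → F) (x : E3) : F :=
  fderiv ℝ g x (eb i)

lemma continuous_proj2 : Continuous proj2 := projL.continuous

lemma isOpen_Omg (M : E2 → ℝ) (hM : Continuous M) : IsOpen (Omg M) :=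
  isOpen_lt (hM.comp continuous_proj2) (by fun_prop)

lemma graph_null (M : E2 → ℝ) (hM : Continuous M) :
    volume {x : E3 | M (proj2 x) = x 0} = 0 := by
  refine Measure.addHaar_eq_zero_of_disjoint_translates volume
    (fun n : ℕ => ((1:ℝ) / ((n:ℝ) + 1)) • eb 0) ?_ ?_ ?_
  · rw [Metric.isBounded_iff_subset_closedBall (0 : E3)]
    refine ⟨1, ?_⟩
    rintro _ ⟨n, rfl⟩
    simp only [Metric.mem_closedBall, dist_zero_right, norm_smul]
    rw [Real.norm_of_nonneg (by positivity)]
    simp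
    exact inv_le_one_of_one_le₀ (by linarith [Nat.cast_nonneg (α := ℝ) n])
  · intro m n hmn
    simp only [Function.onFun, Set.singleton_add, Set.disjoint_left, Set.mem_image,
      Set.mem_ofPred_eq]
    rintro _ ⟨y, hy, rfl⟩ ⟨z, hz, hzy⟩
    apply hmn
    have h0 : z = y + ((1:ℝ) / ((m:ℝ) + 1) - (1:ℝ) / ((n:ℝ) + 1)) • eb 0 := by
      have h1 : z = ((1:ℝ) / ((m:ℝ) + 1)) • eb 0 + y - ((1:ℝ) / ((n:ℝ) + 1)) • eb 0 := by
        rw [← hzy]; abel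
      rw [h1]; module
    rw [h0, proj2_add_smul_eb, hy] at hz
    simp at hz
    have h2 : ((m:ℝ)+1)⁻¹ = ((n:ℝ)+1)⁻¹ := by linarith
    have h3 := inv_injective h2
    have h4 : (m:ℝ) = n := by linarith
    exact_mod_cast h4
  · exact (isClosed_eq (hM.comp continuous_proj2) (by fun_prop)).measurableSet

lemma indicator_lip (M : E2 → ℝ) {K : NNReal} (hL : LipschitzWith K (fun x : E3 => M (proj2 x)))
    (a : E3 → ℝ) {C : NNReal} (ha : LipschitzWith C a)
    (h0 : ∀ x : E3, M (proj2 x) = x 0 → a x = 0) :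
    ∃ C' : NNReal, LipschitzWith C' ((Omg M).indicator a) := by
  have hx0 : LipschitzWith 1 (fun x : E3 => x 0) := by
    refine LipschitzWith.of_dist_le_mul fun x y => ?_
    rw [NNReal.coe_one, one_mul, dist_eq_norm, dist_eq_norm]
    exact PiLp.norm_apply_le (x - y) 0
  have h1 : LipschitzWith (K + 1) (fun x : E3 => M (proj2 x) - x 0) := hL.sub hx0
  have h2 : LipschitzWith (K + 1) (fun x : E3 => max (M (proj2 x) - x 0) 0) := h1.max_const 0
  have h3 : LipschitzWith (K + 1) (fun x : E3 => (max (M (proj2 x) - x 0) 0) • eb 0) := by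
    refine LipschitzWith.of_dist_le_mul fun x y => ?_
    have := h2.dist_le_mul x y
    rw [dist_eq_norm] at this ⊢
    rw [← sub_smul, norm_smul]
    simpa using this
  have h4 : LipschitzWith (1 + (K + 1))
      (fun x : E3 => x + (max (M (proj2 x) - x 0) 0) • eb 0) := LipschitzWith.id.add h3
  refine ⟨C * (1 + (K + 1)), ?_⟩
  convert ha.comp h4 using 1
  funext x
  simp only [Function.comp]
  by_cases hx : x ∈ Omg M
  · rw [indicator_of_mem hx]
    have : M (proj2 x) < x 0 := hx
    rw [max_eq_right (by linarith)]
    simp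
  · rw [indicator_of_notMem hx]
    have : x 0 ≤ M (proj2 x) := not_lt.1 hx
    rw [max_eq_left (by linarith), h0]
    rw [proj2_add_smul_eb]
    simp

lemma lineDeriv_indicator (M : E2 → ℝ) (hM : Continuous M) (a : E3 → ℝ)
    (ha : Differentiable ℝ a) (i : Fin 3) :
    ∀ᵐ x : E3, lineDeriv ℝ ((Omg M).indicator a) x (eb i) = (Omg M).indicator (Dv i a) x := by
  have hn := graph_null M hM
  have : ∀ᵐ x : E3, ¬ (M (proj2 x) = x 0) := by
    rw [ae_iff]; simpa using hn
  filter_upwards [this] with x hx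
  rcases lt_or_gt_of_ne hx with h | h
  · have hmem : x ∈ Omg M := h
    rw [indicator_of_mem hmem]
    have he : (Omg M).indicator a =ᶠ[nhds x] a := by
      filter_upwards [(isOpen_Omg M hM).mem_nhds hmem] with y hy
      exact indicator_of_mem hy a
    rw [he.lineDeriv_eq, (ha x).lineDeriv_eq_fderiv]
    rfl
  · have hmem : x ∉ Omg M := not_lt.2 h.le
    rw [indicator_of_notMem hmem]
    have ho : IsOpen {y : E3 | y 0 < M (proj2 y)} :=
      isOpen_lt (by fun_prop) (hM.comp continuous_proj2)
    have he : (Omg M).indicator a =ᶠ[nhds x] fun _ => (0:ℝ) := by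
      filter_upwards [ho.mem_nhds h] with y hy
      have hy1 : y 0 < M (proj2 y) := hy
      have hy2 : y ∉ Omg M := not_lt.2 hy1.le
      exact indicator_of_notMem hy2 a
    rw [he.lineDeriv_eq]
    simp [lineDeriv]

lemma lip_of_cs (a : E3 → ℝ) (ha : ContDiff ℝ 1 a) (hc : HasCompactSupport a) :
    ∃ C : NNReal, LipschitzWith C a :=
  ha.lipschitzWith_of_hasCompactSupport hc (by simp)

/-- exchange identity for Lipschitz functions of compact support -/
lemma exch_lip (A b : E3 → ℝ) {C C' : NNReal} (hA : LipschitzWith C A) (hAc : HasCompactSupport A)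
    (hb : LipschitzWith C' b) (hbc : HasCompactSupport b) (v w : E3) :
    ∫ x, lineDeriv ℝ A x v * lineDeriv ℝ b x w = ∫ x, lineDeriv ℝ A x w * lineDeriv ℝ b x v := by
  have key : ∀ f : E3 → ℝ, ∀ K : NNReal, LipschitzWith K f → HasCompactSupport f → ∀ z : E3,
      Integrable (fun x => lineDeriv ℝ f x z) := by
    intro f K hf hfc z
    have h1 := hf.memLp_lineDeriv (μ := volume) z
    have h2 : Function.support (fun x => lineDeriv ℝ f x z) ⊆ tsupport f := by
      intro x hx
      by_contra hxs
      apply hx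
      have he : f =ᶠ[nhds x] fun _ => (0:ℝ) := notMem_tsupport_iff_eventuallyEq.1 hxs
      show lineDeriv ℝ f x z = 0
      rw [he.lineDeriv_eq]
      simp [lineDeriv]
    rw [← integrableOn_iff_integrable_of_support_subset h2]
    exact (h1.locallyIntegrable le_top).integrableOn_isCompact hfc
  have hib := key b C' hb hbc w
  have hiA := key A C hA hAc w
  have L1 := hA.integral_inv_smul_sub_mul_tendsto_integral_lineDeriv_mul hib v
  have L2 := hb.integral_inv_smul_sub_mul_tendsto_integral_lineDeriv_mul hiA (-v)
  -- the two difference quotients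
  have heq : ∀ t : ℝ, ∫ x, (t⁻¹ • (A (x + t • v) - A x)) * lineDeriv ℝ b x w =
      - ∫ x, (t⁻¹ • (b (x + t • (-v)) - b x)) * lineDeriv ℝ A x w := by
    intro t
    have hbA : ∀ f g : E3 → ℝ, ∀ K K' : NNReal, LipschitzWith K f → HasCompactSupport f →
        LipschitzWith K' g → HasCompactSupport g →
        Integrable (fun x => f x * lineDeriv ℝ g x w) := by
      intro f g K K' hf hfc hg hgc
      obtain ⟨Q, hQ⟩ := hfc.exists_bound_of_continuous hf.continuous
      refine (key g K' hg hgc w).bdd_mul hf.continuous.aestronglyMeasurable (c := Q) ?_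
      exact Eventually.of_forall hQ
    have ibp : ∀ f g : E3 → ℝ, ∀ K K' : NNReal, LipschitzWith K f → HasCompactSupport f →
        LipschitzWith K' g → HasCompactSupport g →
        ∫ x, f x * lineDeriv ℝ g x w = - ∫ x, g x * lineDeriv ℝ f x w := by
      intro f g K K' hf hfc hg hgc
      have := hg.integral_lineDeriv_mul_eq (μ := volume) hf hfc w
      simp_rw [mul_comm (f _)]
      rw [this, ← integral_neg]
      simp only [lineDeriv_neg]
      congr 1; funext x; ring
    set As : E3 → ℝ := fun x => A (x + t • v) with hAs
    set bs : E3 → ℝ := fun x => b (x + t • (-v)) with hbs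
    have hAsL : LipschitzWith C As := by
      refine LipschitzWith.of_dist_le_mul fun x y => ?_
      simpa using hA.dist_le_mul (x + t • v) (y + t • v)
    have hAsc : HasCompactSupport As := hAc.comp_homeomorph (Homeomorph.addRight (t • v))
    have hbsL : LipschitzWith C' bs := by
      refine LipschitzWith.of_dist_le_mul fun x y => ?_
      simpa only [dist_add_right] using hb.dist_le_mul (x + t • (-v)) (y + t • (-v))
    have hbsc : HasCompactSupport bs := hbc.comp_homeomorph (Homeomorph.addRight (t • (-v)))
    have e1 : ∫ x, (t⁻¹ • (A (x + t • v) - A x)) * lineDeriv ℝ b x w =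
        t⁻¹ * (∫ x, As x * lineDeriv ℝ b x w) - t⁻¹ * (∫ x, A x * lineDeriv ℝ b x w) := by
      rw [← mul_sub, ← integral_sub (hbA As b _ _ hAsL hAsc hb hbc) (hbA A b _ _ hA hAc hb hbc),
        ← integral_const_mul]
      congr 1; funext x; simp only [hAs, smul_eq_mul]; ring
    have e2 : ∫ x, (t⁻¹ • (b (x + t • (-v)) - b x)) * lineDeriv ℝ A x w =
        t⁻¹ * (∫ x, bs x * lineDeriv ℝ A x w) - t⁻¹ * (∫ x, b x * lineDeriv ℝ A x w) := by
      rw [← mul_sub, ← integral_sub (hbA bs A _ _ hbsL hbsc hA hAc) (hbA b A _ _ hb hbc hA hAc),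
        ← integral_const_mul]
      congr 1; funext x; simp only [hbs, smul_eq_mul]; ring
    rw [e1, e2, ibp As b _ _ hAsL hAsc hb hbc, ibp A b _ _ hA hAc hb hbc]
    have e3 : ∫ x, b x * lineDeriv ℝ As x w = ∫ x, bs x * lineDeriv ℝ A x w := by
      rw [← integral_add_right_eq_self (fun x => bs x * lineDeriv ℝ A x w) (t • v)]
      congr 1; funext x
      simp only [hbs, hAs, lineDeriv]
      congr 2
      · congr 1; simp
      · congr 1; funext s; congr 1; abel
    rw [e3]; ring
  have L3 : Tendsto (fun t : ℝ => ∫ x, (t⁻¹ • (A (x + t • v) - A x)) * lineDeriv ℝ b x w)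
      (nhdsWithin 0 (Ioi 0)) (nhds (-∫ x, lineDeriv ℝ b x (-v) * lineDeriv ℝ A x w)) := by
    simp_rw [heq]; exact L2.neg
  have := tendsto_nhds_unique L1 L3
  rw [this, ← integral_neg]
  simp only [lineDeriv_neg]
  congr 1; funext x; ring


lemma exists_local (a b : E3 → ℝ) (hac : HasCompactSupport a) (hb : ContDiff ℝ 1 b) :
    ∃ b' : E3 → ℝ, ContDiff ℝ 1 b' ∧ HasCompactSupport b' ∧
      ∀ x ∈ tsupport a, b' =ᶠ[nhds x] b := by
  obtain ⟨r, hr⟩ := hac.isBounded.subset_ball (0 : E3)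
  let f : ContDiffBump (0 : E3) := ⟨max r 1, max r 1 + 1, by positivity, by linarith⟩
  refine ⟨fun x => f x * b x, f.contDiff.mul hb, f.hasCompactSupport.mul_right, ?_⟩
  intro x hx
  have h1 : x ∈ Metric.ball (0:E3) (max r 1) :=
    Metric.ball_subset_ball (le_max_left _ _) (hr hx)
  filter_upwards [Metric.isOpen_ball.mem_nhds h1] with y hy
  rw [f.one_of_mem_closedBall (Metric.ball_subset_closedBall hy), one_mul]

lemma Dv_eq_zero_of_notMem {a : E3 → ℝ} {x : E3} (hx : x ∉ tsupport a) (i : Fin 3) :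
    Dv i a x = 0 := by
  have he : a =ᶠ[nhds x] fun _ => (0:ℝ) := notMem_tsupport_iff_eventuallyEq.1 hx
  simp [Dv, he.fderiv_eq]

lemma cs_indicator (M : E2 → ℝ) (a : E3 → ℝ) (hac : HasCompactSupport a) :
    HasCompactSupport ((Omg M).indicator a) :=
  hac.mono (by
    intro x hx
    rw [Function.mem_support] at hx ⊢
    intro h
    apply hx
    by_cases hm : x ∈ Omg M
    · rw [indicator_of_mem hm, h]
    · rw [indicator_of_notMem hm])

lemma exch_cs (M : E2 → ℝ) (hM : Continuous M) {K : NNReal}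
    (hL : LipschitzWith K (fun x : E3 => M (proj2 x))) (a b : E3 → ℝ)
    (ha : ContDiff ℝ 1 a) (hac : HasCompactSupport a) (hb : ContDiff ℝ 1 b)
    (h0 : ∀ x : E3, M (proj2 x) = x 0 → a x = 0) (i j : Fin 3) :
    ∫ x in Omg M, Dv i a x * Dv j b x = ∫ x in Omg M, Dv j a x * Dv i b x := by
  obtain ⟨b', hb', hbc', hbe⟩ := exists_local a b hac hb
  obtain ⟨C, hC⟩ := lip_of_cs a ha hac
  obtain ⟨C2, hC2⟩ := indicator_lip M hL a hC h0
  obtain ⟨C3, hC3⟩ := lip_of_cs b' hb' hbc'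
  have key : ∀ i j : Fin 3, ∫ x, lineDeriv ℝ ((Omg M).indicator a) x (eb i) * lineDeriv ℝ b' x (eb j)
      = ∫ x in Omg M, Dv i a x * Dv j b x := by
    intro i j
    rw [← integral_indicator (isOpen_Omg M hM).measurableSet]
    apply integral_congr_ae
    filter_upwards [lineDeriv_indicator M hM a (ha.differentiable (by simp)) i] with x hx
    rw [hx, ((hb'.differentiable (by simp)) x).lineDeriv_eq_fderiv]
    by_cases hm : x ∈ Omg M
    · rw [indicator_of_mem hm, indicator_of_mem hm]
      by_cases ht : x ∈ tsupport a
      · rw [(hbe x ht).fderiv_eq]; rfl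
      · rw [Dv_eq_zero_of_notMem ht]; simp
    · rw [indicator_of_notMem hm, indicator_of_notMem hm, zero_mul]
  rw [← key i j, ← key j i]
  exact exch_lip _ _ hC2 (cs_indicator M a hac) hC3 hbc' _ _

lemma ibp_cs (M : E2 → ℝ) (hM : Continuous M) {K : NNReal}
    (hL : LipschitzWith K (fun x : E3 => M (proj2 x))) (a b : E3 → ℝ)
    (ha : ContDiff ℝ 1 a) (hac : HasCompactSupport a) (hb : ContDiff ℝ 1 b)
    (h0 : ∀ x : E3, M (proj2 x) = x 0 → a x = 0) (i : Fin 3) :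
    ∫ x in Omg M, Dv i a x * b x = - ∫ x in Omg M, a x * Dv i b x := by
  obtain ⟨b', hb', hbc', hbe⟩ := exists_local a b hac hb
  obtain ⟨C, hC⟩ := lip_of_cs a ha hac
  obtain ⟨C2, hC2⟩ := indicator_lip M hL a hC h0
  obtain ⟨C3, hC3⟩ := lip_of_cs b' hb' hbc'
  have h := hC2.integral_lineDeriv_mul_eq (μ := volume) hC3 hbc' (eb i)
  have e1 : ∫ x, lineDeriv ℝ ((Omg M).indicator a) x (eb i) * b' x =
      ∫ x in Omg M, Dv i a x * b x := by
    rw [← integral_indicator (isOpen_Omg M hM).measurableSet]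
    apply integral_congr_ae
    filter_upwards [lineDeriv_indicator M hM a (ha.differentiable (by simp)) i] with x hx
    rw [hx]
    by_cases hm : x ∈ Omg M
    · rw [indicator_of_mem hm, indicator_of_mem hm]
      by_cases ht : x ∈ tsupport a
      · rw [(hbe x ht).eq_of_nhds]
      · rw [Dv_eq_zero_of_notMem ht]; simp
    · rw [indicator_of_notMem hm, indicator_of_notMem hm, zero_mul]
  have e2 : ∫ x, lineDeriv ℝ b' x (-(eb i)) * (Omg M).indicator a x =
      - ∫ x in Omg M, a x * Dv i b x := by
    rw [← integral_indicator (isOpen_Omg M hM).measurableSet, ← integral_neg]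
    congr 1
    funext x
    rw [lineDeriv_neg, ((hb'.differentiable (by simp)) x).lineDeriv_eq_fderiv]
    by_cases hm : x ∈ Omg M
    · rw [indicator_of_mem hm, indicator_of_mem hm]
      by_cases ht : x ∈ tsupport a
      · rw [(hbe x ht).fderiv_eq]; simp only [Dv]; ring
      · have : a x = 0 := image_eq_zero_of_notMem_tsupport ht
        rw [this]; simp
    · rw [indicator_of_notMem hm, indicator_of_notMem hm]; simp
  rw [← e1, h, e2]

lemma exists_cutoff : ∃ (χ : ℕ → E3 → ℝ) (C : ℝ), 0 ≤ C ∧ (∀ n, ContDiff ℝ 1 (χ n)) ∧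
    (∀ n, HasCompactSupport (χ n)) ∧ (∀ n x, |χ n x| ≤ 1) ∧ (∀ n i x, |Dv i (χ n) x| ≤ C) ∧
    ∀ x, ∀ᶠ n in atTop, χ n x = 1 ∧ ∀ i, Dv i (χ n) x = 0 := by
  let f : ContDiffBump (0 : E3) := ⟨1, 2, by norm_num, by norm_num⟩
  have hf1 : ContDiff ℝ 1 f := f.contDiff
  have hfc : Continuous (fderiv ℝ f) := hf1.continuous_fderiv (by simp)
  obtain ⟨C, hC⟩ := (f.hasCompactSupport.fderiv ℝ).exists_bound_of_continuous hfc
  have hder : ∀ (n : ℕ) (i : Fin 3) (x : E3),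
      Dv i (fun x => f (((n:ℝ) + 1)⁻¹ • x)) x = fderiv ℝ f (((n:ℝ) + 1)⁻¹ • x) (((n:ℝ) + 1)⁻¹ • eb i) := by
    intro n i x
    have h1 : HasFDerivAt (fun x : E3 => ((n:ℝ) + 1)⁻¹ • x)
      (((n:ℝ) + 1)⁻¹ • ContinuousLinearMap.id ℝ E3) x := ((((n:ℝ) + 1)⁻¹ • ContinuousLinearMap.id ℝ E3).hasFDerivAt)
    have h2 := ((hf1.differentiable (by simp)) (((n:ℝ) + 1)⁻¹ • x)).hasFDerivAt.comp x h1
    have h3 : fderiv ℝ (fun x => f (((n:ℝ) + 1)⁻¹ • x)) x = _ := h2.fderiv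
    simp only [Dv, h3]
    simp
  refine ⟨fun n x => f (((n:ℝ) + 1)⁻¹ • x), C, (norm_nonneg _).trans (hC 0), ?_, ?_, ?_, ?_, ?_⟩
  · intro n
    exact hf1.comp (contDiff_const_smul _)
  · intro n
    have hne : ((n:ℝ) + 1)⁻¹ ≠ 0 := by positivity
    exact f.hasCompactSupport.comp_homeomorph (Homeomorph.smulOfNeZero _ hne)
  · intro n x
    rw [abs_of_nonneg f.nonneg]; exact f.le_one
  · intro n i x
    rw [hder, ← Real.norm_eq_abs]
    refine (ContinuousLinearMap.le_opNorm _ _).trans ?_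
    have h1 : ‖((n:ℝ) + 1)⁻¹ • eb i‖ ≤ 1 := by
      rw [norm_smul, Real.norm_of_nonneg (by positivity)]
      simp
      exact inv_le_one_of_one_le₀ (by linarith [Nat.cast_nonneg (α := ℝ) n])
    calc _ ≤ C * 1 := mul_le_mul (hC _) h1 (norm_nonneg _) ((norm_nonneg _).trans (hC 0))
      _ = C := mul_one C
  · intro x
    filter_upwards [eventually_gt_atTop (⌈‖x‖⌉₊)] with n hn
    have hlt : ‖((n:ℝ) + 1)⁻¹ • x‖ < 1 := by
      rw [norm_smul, Real.norm_of_nonneg (by positivity), inv_mul_lt_iff₀ (by positivity)]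
      have := Nat.le_ceil ‖x‖
      have h2 : ((⌈‖x‖⌉₊ : ℕ) : ℝ) < n := by exact_mod_cast hn
      linarith
    have hmem : ((n:ℝ) + 1)⁻¹ • x ∈ Metric.ball (0:E3) 1 := by simpa using hlt
    have he : f =ᶠ[nhds (((n:ℝ) + 1)⁻¹ • x)] fun _ => (1:ℝ) := by
      filter_upwards [Metric.isOpen_ball.mem_nhds hmem] with y hy
      exact f.one_of_mem_closedBall (Metric.ball_subset_closedBall hy)
    refine ⟨he.eq_of_nhds, fun i => ?_⟩
    rw [hder, he.fderiv_eq]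
    simp

lemma Dv_mul {a b : E3 → ℝ} (ha : ContDiff ℝ 1 a) (hb : ContDiff ℝ 1 b) (i : Fin 3) (x : E3) :
    Dv i (fun x => a x * b x) x = a x * Dv i b x + Dv i a x * b x := by
  have h := ((ha.differentiable (by simp)) x).hasFDerivAt.mul
    ((hb.differentiable (by simp)) x).hasFDerivAt
  have h3 : fderiv ℝ (fun x => a x * b x) x = _ := h.fderiv
  simp only [Dv, h3]
  simp
  ring

lemma Dv_continuous {F : Type*} [NormedAddCommGroup F] [NormedSpace ℝ F] {a : E3 → F}
    (ha : ContDiff ℝ 1 a) (i : Fin 3) : Continuous (Dv i a) := by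
  have : Continuous (fderiv ℝ a) := ha.continuous_fderiv (by simp)
  show Continuous (fun x => fderiv ℝ a x (eb i))
  fun_prop

lemma int_prod {s : Set E3} {p q : E3 → ℝ} (hp : Continuous p) (hq : Continuous q)
    (hp2 : IntegrableOn (fun x => p x ^ 2) s) (hq2 : IntegrableOn (fun x => q x ^ 2) s) :
    IntegrableOn (fun x => p x * q x) s := by
  refine Integrable.mono' (hp2.add hq2) (hp.mul hq).aestronglyMeasurable (Eventually.of_forall ?_)
  intro x
  simp only [Pi.add_apply, Real.norm_eq_abs, abs_mul]
  nlinarith [sq_nonneg (|p x| - |q x|), sq_abs (p x), sq_abs (q x), sq_nonneg (p x), sq_nonneg (q x)]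

/-- removing the cutoff, derivative term -/
lemma cut_lim1 {s : Set E3} (χ : ℕ → E3 → ℝ) (C : ℝ) (hC : 0 ≤ C)
    (h1 : ∀ n, ContDiff ℝ 1 (χ n)) (h2 : ∀ n x, |χ n x| ≤ 1) (h3 : ∀ n i x, |Dv i (χ n) x| ≤ C)
    (h4 : ∀ x, ∀ᶠ n in atTop, χ n x = 1 ∧ ∀ i, Dv i (χ n) x = 0)
    (a g : E3 → ℝ) (ha : ContDiff ℝ 1 a) (hg : Continuous g) (i : Fin 3)
    (ia : IntegrableOn (fun x => a x ^ 2) s) (ida : IntegrableOn (fun x => Dv i a x ^ 2) s)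
    (ig : IntegrableOn (fun x => g x ^ 2) s) :
    Tendsto (fun n => ∫ x in s, Dv i (fun x => χ n x * a x) x * g x) atTop
      (nhds (∫ x in s, Dv i a x * g x)) := by
  have i1 := int_prod (Dv_continuous ha i) hg ida ig
  have i2 := int_prod ha.continuous hg ia ig
  refine tendsto_integral_of_dominated_convergence
    (fun x => |Dv i a x * g x| + C * |a x * g x|) ?_ (i1.abs.add (i2.abs.const_mul C)) ?_ ?_
  · intro n
    exact ((Dv_continuous ((h1 n).mul ha) i).mul hg).aestronglyMeasurable
  · intro n
    refine Eventually.of_forall fun x => ?_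
    rw [Dv_mul (h1 n) ha, Real.norm_eq_abs]
    have : (χ n x * Dv i a x + Dv i (χ n) x * a x) * g x =
      χ n x * (Dv i a x * g x) + Dv i (χ n) x * (a x * g x) := by ring
    rw [this]
    refine (abs_add_le _ _).trans ?_
    rw [abs_mul, abs_mul (Dv i (χ n) x)]
    refine add_le_add ?_ ?_
    · exact mul_le_of_le_one_left (abs_nonneg _) (h2 n x)
    · exact mul_le_mul_of_nonneg_right (h3 n i x) (abs_nonneg _)
  · refine Eventually.of_forall fun x => ?_
    refine tendsto_const_nhds.congr' ?_
    filter_upwards [h4 x] with n hn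
    rw [Dv_mul (h1 n) ha, hn.1, hn.2 i]
    ring

lemma cut_lim0 {s : Set E3} (χ : ℕ → E3 → ℝ)
    (h1 : ∀ n, ContDiff ℝ 1 (χ n)) (h2 : ∀ n x, |χ n x| ≤ 1)
    (h4 : ∀ x, ∀ᶠ n in atTop, χ n x = 1 ∧ ∀ i, Dv i (χ n) x = 0)
    (a g : E3 → ℝ) (ha : Continuous a) (hg : Continuous g)
    (ia : IntegrableOn (fun x => a x ^ 2) s)
    (ig : IntegrableOn (fun x => g x ^ 2) s) :
    Tendsto (fun n => ∫ x in s, (χ n x * a x) * g x) atTop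
      (nhds (∫ x in s, a x * g x)) := by
  have i2 := int_prod ha hg ia ig
  refine tendsto_integral_of_dominated_convergence (fun x => |a x * g x|) ?_ i2.abs ?_ ?_
  · intro n
    exact (((h1 n).continuous.mul ha).mul hg).aestronglyMeasurable
  · intro n
    refine Eventually.of_forall fun x => ?_
    rw [Real.norm_eq_abs, mul_assoc, abs_mul]
    exact mul_le_of_le_one_left (abs_nonneg _) (h2 n x)
  · refine Eventually.of_forall fun x => ?_
    refine tendsto_const_nhds.congr' ?_
    filter_upwards [h4 x] with n hn
    rw [hn.1]
    ring

lemma exch (M : E2 → ℝ) (hM : Continuous M) {K : NNReal}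
    (hL : LipschitzWith K (fun x : E3 => M (proj2 x))) (a b : E3 → ℝ)
    (ha : ContDiff ℝ 1 a) (hb : ContDiff ℝ 1 b)
    (h0 : ∀ x : E3, M (proj2 x) = x 0 → a x = 0)
    (ia : IntegrableOn (fun x => a x ^ 2) (Omg M))
    (ida : ∀ i, IntegrableOn (fun x => Dv i a x ^ 2) (Omg M))
    (idb : ∀ i, IntegrableOn (fun x => Dv i b x ^ 2) (Omg M)) (i j : Fin 3) :
    ∫ x in Omg M, Dv i a x * Dv j b x = ∫ x in Omg M, Dv j a x * Dv i b x := by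
  obtain ⟨χ, C, hC, h1, hcs, h2, h3, h4⟩ := exists_cutoff
  have t1 := cut_lim1 χ C hC h1 h2 h3 h4 a (Dv j b) ha (Dv_continuous hb j) i ia (ida i) (idb j)
  have t2 := cut_lim1 χ C hC h1 h2 h3 h4 a (Dv i b) ha (Dv_continuous hb i) j ia (ida j) (idb i)
  refine tendsto_nhds_unique t1 (t2.congr fun n => ?_)
  exact (exch_cs M hM hL (fun x => χ n x * a x) b ((h1 n).mul ha) ((hcs n).mul_right) hb
    (fun x hx => by simp [h0 x hx]) i j).symm

lemma ibp (M : E2 → ℝ) (hM : Continuous M) {K : NNReal}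
    (hL : LipschitzWith K (fun x : E3 => M (proj2 x))) (a b : E3 → ℝ)
    (ha : ContDiff ℝ 1 a) (hb : ContDiff ℝ 1 b)
    (h0 : ∀ x : E3, M (proj2 x) = x 0 → a x = 0) (i : Fin 3)
    (ia : IntegrableOn (fun x => a x ^ 2) (Omg M))
    (ida : IntegrableOn (fun x => Dv i a x ^ 2) (Omg M))
    (ib : IntegrableOn (fun x => b x ^ 2) (Omg M))
    (idb : IntegrableOn (fun x => Dv i b x ^ 2) (Omg M)) :
    ∫ x in Omg M, Dv i a x * b x = - ∫ x in Omg M, a x * Dv i b x := by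
  obtain ⟨χ, C, hC, h1, hcs, h2, h3, h4⟩ := exists_cutoff
  have t1 := cut_lim1 χ C hC h1 h2 h3 h4 a b ha hb.continuous i ia ida ib
  have t2 := cut_lim0 χ h1 h2 h4 a (Dv i b) ha.continuous (Dv_continuous hb i) ia idb
  refine tendsto_nhds_unique t1 (t2.neg.congr fun n => ?_)
  exact (ibp_cs M hM hL (fun x => χ n x * a x) b ((h1 n).mul ha) ((hcs n).mul_right) hb
    (fun x hx => by simp [h0 x hx]) i).symm


section jets
variable {F : Type*} [NormedAddCommGroup F] [NormedSpace ℝ F]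
variable {G : Type*} [NormedAddCommGroup G] [NormedSpace ℝ G]

/-- coordinate jet: sum of squares of all iterated coordinate derivatives up to order `n` -/
def J : ℕ → (E3 → F) → E3 → ℝ
  | 0, g, x => ‖g x‖ ^ 2
  | n + 1, g, x => ‖g x‖ ^ 2 + ∑ i, J n (Dv i g) x

/-- boundedness of all iterated coordinate derivatives up to order `n` -/
def BC : ℕ → (E3 → ℝ) → Prop
  | 0, c => ∃ B, ∀ x, |c x| ≤ B
  | n + 1, c => (∃ B, ∀ x, |c x| ≤ B) ∧ ∀ i, BC n (Dv i c)

lemma J_zero (g : E3 → F) (x : E3) : J 0 g x = ‖g x‖ ^ 2 := rfl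
lemma J_succ (n : ℕ) (g : E3 → F) (x : E3) :
    J (n + 1) g x = ‖g x‖ ^ 2 + ∑ i, J n (Dv i g) x := rfl

lemma J_nonneg (n : ℕ) : ∀ (g : E3 → F) (x : E3), 0 ≤ J n g x := by
  induction n with
  | zero => intro g x; rw [J_zero]; positivity
  | succ n ih =>
    intro g x; rw [J_succ]
    exact add_nonneg (by positivity) (Finset.sum_nonneg fun i _ => ih _ _)

lemma J_mono_succ (n : ℕ) : ∀ (g : E3 → F) (x : E3), J n g x ≤ J (n + 1) g x := by
  induction n with
  | zero =>
    intro g x; rw [J_succ, J_zero]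
    have := Finset.sum_nonneg (s := Finset.univ) fun i (_ : i ∈ Finset.univ) => J_nonneg 0 (Dv i g) x
    linarith
  | succ n ih =>
    intro g x; rw [J_succ, J_succ (n + 1)]
    have := Finset.sum_le_sum (s := Finset.univ) fun i (_ : i ∈ Finset.univ) => ih (Dv i g) x
    linarith

lemma J_mono {n m : ℕ} (h : n ≤ m) (g : E3 → F) (x : E3) : J n g x ≤ J m g x := by
  induction h with
  | refl => exact le_rfl
  | step _ ih => exact ih.trans (J_mono_succ _ _ _)

lemma J_Dv (n : ℕ) (g : E3 → F) (i : Fin 3) (x : E3) : J n (Dv i g) x ≤ J (n + 1) g x := by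
  rw [J_succ]
  have := Finset.single_le_sum (s := Finset.univ) (f := fun i => J n (Dv i g) x)
    (fun i _ => J_nonneg n (Dv i g) x) (Finset.mem_univ i)
  have h2 : 0 ≤ ‖g x‖ ^ 2 := by positivity
  linarith

lemma norm_sq_le_J (n : ℕ) (g : E3 → F) (x : E3) : ‖g x‖ ^ 2 ≤ J n g x :=
  (J_zero g x).symm.le.trans (J_mono (Nat.zero_le n) g x)

lemma Dv_contDiff {n : ℕ} {g : E3 → F} (hg : ContDiff ℝ ((n + 1 : ℕ) : WithTop ℕ∞) g) (i : Fin 3) :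
    ContDiff ℝ (n : WithTop ℕ∞) (Dv i g) := by
  have : ContDiff ℝ (n : WithTop ℕ∞) (fderiv ℝ g) := hg.fderiv_right (by norm_cast)
  exact this.clm_apply contDiff_const

lemma Dv_contDiff_top {g : E3 → F} (hg : ContDiff ℝ (⊤ : ℕ∞) g) (i : Fin 3) :
    ContDiff ℝ (⊤ : ℕ∞) (Dv i g) := by
  have : ContDiff ℝ (⊤ : ℕ∞) (fderiv ℝ g) := hg.fderiv_right (by simp)
  exact this.clm_apply contDiff_const

lemma cd_le {n m : ℕ} {g : E3 → F} (hg : ContDiff ℝ (m : WithTop ℕ∞) g) (h : n ≤ m) :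
    ContDiff ℝ (n : WithTop ℕ∞) g := hg.of_le (by exact_mod_cast h)

lemma cd_top {n : ℕ} {g : E3 → F} (hg : ContDiff ℝ (⊤ : ℕ∞) g) :
    ContDiff ℝ (n : WithTop ℕ∞) g := hg.of_le (by exact_mod_cast le_top)

lemma cd_diff {n : ℕ} {g : E3 → F} (hg : ContDiff ℝ ((n + 1 : ℕ) : WithTop ℕ∞) g) :
    Differentiable ℝ g := hg.differentiable (by simp)

lemma Dv_add {f g : E3 → F} (hf : Differentiable ℝ f) (hg : Differentiable ℝ g) (i : Fin 3) :
    Dv i (fun x => f x + g x) = fun x => Dv i f x + Dv i g x := by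
  funext x
  simp [Dv, fderiv_fun_add (hf x) (hg x)]

lemma Dv_sub {f g : E3 → F} (hf : Differentiable ℝ f) (hg : Differentiable ℝ g) (i : Fin 3) :
    Dv i (fun x => f x - g x) = fun x => Dv i f x - Dv i g x := by
  funext x
  simp [Dv, fderiv_fun_sub (hf x) (hg x)]

lemma Dv_smul {c : E3 → ℝ} {g : E3 → F} (hc : Differentiable ℝ c) (hg : Differentiable ℝ g)
    (i : Fin 3) :
    Dv i (fun x => c x • g x) = fun x => Dv i c x • g x + c x • Dv i g x := by
  funext x
  simp [Dv, fderiv_fun_smul (hc x) (hg x), add_comm]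

lemma Dv_clm (A : F →L[ℝ] G) {g : E3 → F} (hg : Differentiable ℝ g) (i : Fin 3) :
    Dv i (fun x => A (g x)) = fun x => A (Dv i g x) := by
  funext x
  have := (A.hasFDerivAt.comp x (hg x).hasFDerivAt).fderiv
  simp only [Function.comp_def] at this
  simp [Dv, this]

lemma Dv_sum {ι : Type*} (s : Finset ι) {g : ι → E3 → F} (hg : ∀ j ∈ s, Differentiable ℝ (g j))
    (i : Fin 3) :
    Dv i (fun x => ∑ j ∈ s, g j x) = fun x => ∑ j ∈ s, Dv i (g j) x := by
  funext x
  simp [Dv, fderiv_fun_sum (fun j hj => hg j hj x)]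

lemma Dv_comm {g : E3 → F} (hg : ContDiff ℝ (2 : ℕ) g) (i j : Fin 3) :
    Dv i (Dv j g) = Dv j (Dv i g) := by
  funext x
  have hd : Differentiable ℝ (fderiv ℝ g) :=
    (hg.fderiv_right (m := 1) (by norm_cast)).differentiable (by simp)
  have key : ∀ a b : Fin 3, Dv a (Dv b g) x = fderiv ℝ (fderiv ℝ g) x (eb a) (eb b) := by
    intro a b
    have h1 := ((ContinuousLinearMap.apply ℝ F (eb b)).hasFDerivAt.comp x (hd x).hasFDerivAt).fderiv
    simp only [Function.comp_def] at h1
    have : Dv b g = fun y => (ContinuousLinearMap.apply ℝ F (eb b)) (fderiv ℝ g y) := rfl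
    rw [this, Dv, h1]
    simp
  rw [key, key]
  have hs : IsSymmSndFDerivAt ℝ g x := hg.contDiffAt.isSymmSndFDerivAt (by simp)
  exact hs.eq _ _

lemma sq_add_le (a b : F) : ‖a + b‖ ^ 2 ≤ 2 * (‖a‖ ^ 2 + ‖b‖ ^ 2) := by
  have := norm_add_le a b
  have h0 := norm_nonneg (a + b)
  nlinarith [sq_nonneg (‖a‖ - ‖b‖), norm_nonneg a, norm_nonneg b]

lemma J_add (n : ℕ) : ∀ {f g : E3 → F} (_ : ContDiff ℝ (n : WithTop ℕ∞) f)
    (_ : ContDiff ℝ (n : WithTop ℕ∞) g) (x : E3),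
    J n (fun x => f x + g x) x ≤ 2 * (J n f x + J n g x) := by
  induction n with
  | zero => intro f g _ _ x; exact sq_add_le _ _
  | succ n ih =>
    intro f g hf hg x
    simp only [J_succ, Dv_add (cd_diff hf) (cd_diff hg)]
    have h1 := sq_add_le (f x) (g x)
    have h2 := Finset.sum_le_sum (s := Finset.univ) fun i (_ : i ∈ Finset.univ) =>
      ih (Dv_contDiff hf i) (Dv_contDiff hg i) x
    rw [← Finset.mul_sum, Finset.sum_add_distrib] at h2
    linarith

lemma J_clm (A : F →L[ℝ] G) (n : ℕ) : ∀ {g : E3 → F} (_ : ContDiff ℝ (n : WithTop ℕ∞) g) (x : E3),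
    J n (fun x => A (g x)) x ≤ ‖A‖ ^ 2 * J n g x := by
  have h0 : ∀ v, ‖A v‖ ^ 2 ≤ ‖A‖ ^ 2 * ‖v‖ ^ 2 := fun v => by
    rw [← mul_pow]; exact pow_le_pow_left₀ (norm_nonneg _) (A.le_opNorm v) 2
  induction n with
  | zero => intro g _ x; exact h0 _
  | succ n ih =>
    intro g hg x
    simp only [J_succ, Dv_clm A (cd_diff hg)]
    have h2 := Finset.sum_le_sum (s := Finset.univ) fun i (_ : i ∈ Finset.univ) =>
      ih (Dv_contDiff hg i) x
    rw [← Finset.mul_sum] at h2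
    have := h0 (g x)
    linarith

lemma BC_mono_succ (n : ℕ) : ∀ {c : E3 → ℝ}, BC (n + 1) c → BC n c := by
  induction n with
  | zero => intro c h; exact h.1
  | succ n ih => intro c h; exact ⟨h.1, fun i => ih (h.2 i)⟩

lemma BC_mono {n m : ℕ} (h : n ≤ m) {c : E3 → ℝ} (hc : BC m c) : BC n c := by
  induction h with
  | refl => exact hc
  | step _ ih => exact ih (BC_mono_succ _ hc)

lemma BC_bd {n : ℕ} {c : E3 → ℝ} (hc : BC n c) : ∃ B, ∀ x, |c x| ≤ B :=
  BC_mono (Nat.zero_le n) hc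

lemma BC_const (a : ℝ) (n : ℕ) : BC n (fun _ => a) := by
  induction n generalizing a with
  | zero => exact ⟨|a|, fun _ => le_rfl⟩
  | succ n ih =>
    refine ⟨⟨|a|, fun _ => le_rfl⟩, fun i => ?_⟩
    have : Dv i (fun _ : E3 => a) = fun _ => 0 := by funext x; simp [Dv]
    rw [this]; exact ih 0

lemma BC_sub (n : ℕ) : ∀ {c d : E3 → ℝ} (_ : ContDiff ℝ (⊤ : ℕ∞) c) (_ : ContDiff ℝ (⊤ : ℕ∞) d),
    BC n c → BC n d → BC n (fun x => c x - d x) := by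
  have h0 : ∀ {c d : E3 → ℝ}, (∃ B, ∀ x, |c x| ≤ B) → (∃ B, ∀ x, |d x| ≤ B) →
      (∃ B, ∀ x, |c x - d x| ≤ B) := by
    rintro c d ⟨B, hB⟩ ⟨B', hB'⟩
    exact ⟨B + B', fun x => (abs_sub _ _).trans (add_le_add (hB x) (hB' x))⟩
  induction n with
  | zero => intro c d _ _ h1 h2; exact h0 h1 h2
  | succ n ih =>
    intro c d hc hd h1 h2
    refine ⟨h0 h1.1 h2.1, fun i => ?_⟩
    rw [Dv_sub (hc.differentiable (by simp)) (hd.differentiable (by simp))]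
    exact ih (Dv_contDiff_top hc i) (Dv_contDiff_top hd i) (h1.2 i) (h2.2 i)

lemma BC_of_iter (n : ℕ) : ∀ {c : E3 → ℝ} (_ : ContDiff ℝ (⊤ : ℕ∞) c) (B : ℝ)
    (_ : ∀ j ≤ n, ∀ x, ‖iteratedFDeriv ℝ j c x‖ ≤ B), BC n c := by
  induction n with
  | zero => intro c hc B h; exact ⟨B, fun x => by simpa using h 0 le_rfl x⟩
  | succ n ih =>
    intro c hc B h
    refine ⟨⟨B, fun x => by simpa using h 0 (Nat.zero_le _) x⟩, fun i => ?_⟩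
    refine ih (Dv_contDiff_top hc i) B fun j hj x => ?_
    have hfd : ContDiff ℝ (⊤ : ℕ∞) (fderiv ℝ c) := hc.fderiv_right (by simp)
    have := norm_iteratedFDeriv_clm_apply_const (c := eb i) (n := j) (x := x) (N := (⊤ : ℕ∞))
      hfd.contDiffAt (by exact_mod_cast le_top)
    rw [norm_iteratedFDeriv_fderiv] at this
    refine (this.trans ?_)
    simpa using h (j + 1) (by omega) x

lemma J_smul (n : ℕ) : ∀ {c : E3 → ℝ} (_ : ContDiff ℝ (⊤ : ℕ∞) c) (_ : BC n c),
    ∃ C, 0 ≤ C ∧ ∀ {g : E3 → F} (_ : ContDiff ℝ (n : WithTop ℕ∞) g) (x : E3),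
    J n (fun x => c x • g x) x ≤ C * J n g x := by
  have h0 : ∀ {c : E3 → ℝ} {B : ℝ}, (∀ x, |c x| ≤ B) → ∀ (g : E3 → F) x,
      ‖c x • g x‖ ^ 2 ≤ B ^ 2 * ‖g x‖ ^ 2 := by
    intro c B hB g x
    rw [norm_smul, mul_pow, Real.norm_eq_abs]
    exact mul_le_mul_of_nonneg_right (pow_le_pow_left₀ (abs_nonneg _) (hB x) 2) (by positivity)
  induction n with
  | zero =>
    rintro c _ ⟨B, hB⟩
    exact ⟨B ^ 2, by positivity, fun {g} _ x => h0 hB g x⟩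
  | succ n ih =>
    rintro c hc ⟨⟨B, hB⟩, h2⟩
    choose C hC0 hC using fun i => ih (Dv_contDiff_top hc i) (h2 i)
    obtain ⟨C', hC'0, hC'⟩ := ih hc (BC_mono_succ n ⟨⟨B, hB⟩, h2⟩)
    refine ⟨B ^ 2 + ∑ i, 2 * C i + 2 * C', ?_, ?_⟩
    · have := Finset.sum_nonneg (s := Finset.univ) fun i (_ : i ∈ Finset.univ) =>
        mul_nonneg zero_le_two (hC0 i)
      positivity
    intro g hg x
    have hcd : Differentiable ℝ c := hc.differentiable (by simp)
    simp only [J_succ n (fun x => c x • g x), Dv_smul hcd (cd_diff hg)]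
    have e1 := h0 hB g x
    have e2 : ∀ i, J n (fun x => Dv i c x • g x + c x • Dv i g x) x ≤
        2 * C i * J (n + 1) g x + 2 * C' * J n (Dv i g) x := by
      intro i
      refine (J_add n ((cd_top (Dv_contDiff_top hc i)).smul (cd_le hg (by omega)))
        ((cd_top hc).smul (Dv_contDiff hg i)) x).trans ?_
      have a1 := hC i (cd_le hg (Nat.le_succ n)) x
      have a2 := hC' (Dv_contDiff hg i) x
      have a3 := mul_le_mul_of_nonneg_left (J_mono_succ n g x) (hC0 i)
      change 2 * (J n (fun x => Dv i c x • g x) x + J n (fun x => c x • Dv i g x) x) ≤ _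
      linarith
    have e3 := Finset.sum_le_sum (s := Finset.univ) fun i (_ : i ∈ Finset.univ) => e2 i
    rw [Finset.sum_add_distrib, ← Finset.mul_sum, ← Finset.sum_mul] at e3
    have e4 : ∑ i, J n (Dv i g) x ≤ J (n + 1) g x := by
      rw [J_succ]; linarith [sq_nonneg ‖g x‖]
    have e5 := mul_le_mul_of_nonneg_left e4 (by positivity : 0 ≤ 2 * C')
    have e6 := mul_le_mul_of_nonneg_left (norm_sq_le_J (n + 1) g x) (sq_nonneg B)
    linarith

lemma J_sum {ι : Type*} (s : Finset ι) (n : ℕ) : ∃ C, 0 ≤ C ∧ ∀ {g : ι → E3 → F}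
    (_ : ∀ j ∈ s, ContDiff ℝ (n : WithTop ℕ∞) (g j)) (x : E3),
    J n (fun x => ∑ j ∈ s, g j x) x ≤ C * ∑ j ∈ s, J n (g j) x := by
  classical
  induction s using Finset.induction_on with
  | empty =>
    refine ⟨0, le_rfl, fun {g} _ x => ?_⟩
    have : ∀ n, J n (fun _ : E3 => (0 : F)) x = 0 := by
      intro n
      induction n with
      | zero => simp [J_zero]
      | succ n ih =>
        rw [J_succ]
        have : ∀ i, Dv i (fun _ : E3 => (0:F)) = fun _ => 0 := fun i => by funext x; simp [Dv]
        simp [this, ih]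
    simp [this]
  | insert a s ha ih =>
    obtain ⟨C, hC, h⟩ := ih
    refine ⟨2 + 2 * C, by positivity, fun {g} hg x => ?_⟩
    simp only [Finset.sum_insert ha]
    have h1 := J_add n (hg a (Finset.mem_insert_self _ _))
      (ContDiff.sum fun j hj => hg j (Finset.mem_insert_of_mem hj)) x
    have h2 := h (fun j hj => hg j (Finset.mem_insert_of_mem hj)) x
    have h3 := J_nonneg n (g a) x
    have h4 := Finset.sum_nonneg fun j (_ : j ∈ s) => J_nonneg n (g j) x
    nlinarith

lemma J_continuous (n : ℕ) : ∀ {g : E3 → F} (_ : ContDiff ℝ (n : WithTop ℕ∞) g),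
    Continuous (J n g) := by
  induction n with
  | zero => intro g hg; exact (hg.continuous.norm.pow 2)
  | succ n ih =>
    intro g hg
    exact (hg.continuous.norm.pow 2).add
      (continuous_finsetSum _ fun i _ => ih (Dv_contDiff hg i))

lemma J_le_iter (n : ℕ) : ∃ C, 0 ≤ C ∧ ∀ {g : E3 → F} (_ : ContDiff ℝ (n : WithTop ℕ∞) g) (x : E3),
    J n g x ≤ C * ∑ j ∈ Finset.range (n + 1), ‖iteratedFDeriv ℝ j g x‖ ^ 2 := by
  induction n with
  | zero => exact ⟨1, zero_le_one, fun {g} _ x => by simp [J_zero]⟩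
  | succ n ih =>
    obtain ⟨C, hC, h⟩ := ih
    refine ⟨1 + 3 * C, by positivity, fun {g} hg x => ?_⟩
    rw [J_succ]
    have h1 : ∀ i, J n (Dv i g) x ≤
        C * ∑ j ∈ Finset.range (n + 1 + 1), ‖iteratedFDeriv ℝ j g x‖ ^ 2 := by
      intro i
      refine (h (Dv_contDiff hg i) x).trans (mul_le_mul_of_nonneg_left ?_ hC)
      rw [Finset.sum_range_succ' _ (n + 1)]
      refine le_add_of_le_of_nonneg (Finset.sum_le_sum fun j hj => ?_) (by positivity)
      have hfd : ContDiff ℝ (n : WithTop ℕ∞) (fderiv ℝ g) := hg.fderiv_right (by norm_cast)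
      have hj' : j ≤ n := by simpa [Nat.lt_succ_iff] using hj
      have := norm_iteratedFDeriv_clm_apply_const (c := eb i) (n := j) (x := x)
        hfd.contDiffAt (by exact_mod_cast hj')
      rw [norm_iteratedFDeriv_fderiv] at this
      refine pow_le_pow_left₀ (norm_nonneg _) (this.trans (by simp)) 2
    have h2 := Finset.sum_le_sum (s := Finset.univ) fun i (_ : i ∈ Finset.univ) => h1 i
    have h3 : ‖g x‖ ^ 2 ≤ ∑ j ∈ Finset.range (n + 1 + 1), ‖iteratedFDeriv ℝ j g x‖ ^ 2 := by
      rw [Finset.sum_range_succ' _ (n + 1)]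
      simp only [norm_iteratedFDeriv_zero]
      refine le_add_of_nonneg_left (by positivity)
    simp only [Finset.sum_const, Finset.card_univ, Fintype.card_fin, nsmul_eq_mul] at h2
    push_cast at h2
    linarith

lemma fderiv_eq_sum (g : E3 → F) (x : E3) :
    fderiv ℝ g x = ∑ i : Fin 3, ContinuousLinearMap.smulRightL ℝ E3 F
      (EuclideanSpace.proj i : E3 →L[ℝ] ℝ) (Dv i g x) := by
  ext v
  have hv : v = ∑ i, v i • eb i := by
    ext j
    simp [Finset.sum_apply, Pi.single_apply]
  conv_lhs => rw [hv]
  simp [Dv]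

lemma iter_le_J (n : ℕ) : ∃ C, 0 ≤ C ∧ ∀ {g : E3 → F} (_ : ContDiff ℝ (n : WithTop ℕ∞) g) (x : E3),
    ‖iteratedFDeriv ℝ n g x‖ ^ 2 ≤ C * J n g x := by
  induction n with
  | zero => exact ⟨1, zero_le_one, fun {g} _ x => by simp [J_zero]⟩
  | succ n ih =>
    obtain ⟨C, hC, h⟩ := ih
    refine ⟨3 * ∑ i : Fin 3, ‖ContinuousLinearMap.smulRightL ℝ E3 F
      (EuclideanSpace.proj i : E3 →L[ℝ] ℝ)‖ ^ 2 * C, by positivity, fun {g} hg x => ?_⟩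
    rw [← norm_iteratedFDeriv_fderiv]
    have e : fderiv ℝ g = fun x => ∑ i : Fin 3, ContinuousLinearMap.smulRightL ℝ E3 F
      (EuclideanSpace.proj i : E3 →L[ℝ] ℝ) (Dv i g x) := by
      funext x; exact fderiv_eq_sum g x
    have hcd : ∀ i : Fin 3, ContDiff ℝ (n : WithTop ℕ∞) fun x =>
        ContinuousLinearMap.smulRightL ℝ E3 F (EuclideanSpace.proj i : E3 →L[ℝ] ℝ) (Dv i g x) :=
      fun i => (ContinuousLinearMap.contDiff _).comp (Dv_contDiff hg i)
    rw [e, iteratedFDeriv_fun_sum_apply fun i _ => (hcd i).contDiffAt]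
    have h1 : ∀ i : Fin 3, ‖iteratedFDeriv ℝ n (fun x => ContinuousLinearMap.smulRightL ℝ E3 F
        (EuclideanSpace.proj i : E3 →L[ℝ] ℝ) (Dv i g x)) x‖ ^ 2 ≤
        ‖ContinuousLinearMap.smulRightL ℝ E3 F
          (EuclideanSpace.proj i : E3 →L[ℝ] ℝ)‖ ^ 2 * C * J (n + 1) g x := by
      intro i
      have h2 := ContinuousLinearMap.norm_iteratedFDeriv_comp_left
        (ContinuousLinearMap.smulRightL ℝ E3 F (EuclideanSpace.proj i : E3 →L[ℝ] ℝ))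
        (Dv_contDiff hg i).contDiffAt (x := x) (n := n) le_rfl
      have h3 := pow_le_pow_left₀ (norm_nonneg _) h2 2
      rw [mul_pow] at h3
      refine h3.trans ?_
      rw [mul_assoc]
      refine mul_le_mul_of_nonneg_left ?_ (by positivity)
      exact (h (Dv_contDiff hg i) x).trans (mul_le_mul_of_nonneg_left (J_Dv n g i x) hC)
    refine (pow_le_pow_left₀ (norm_nonneg _) (norm_sum_le _ _) 2).trans ?_
    refine (sq_sum_le_card_mul_sum_sq).trans ?_
    have h4 := Finset.sum_le_sum (s := Finset.univ) fun i (_ : i ∈ Finset.univ) => h1 i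
    rw [← Finset.sum_mul] at h4
    simp only [Finset.card_univ, Fintype.card_fin]
    push_cast
    rw [mul_assoc]
    exact mul_le_mul_of_nonneg_left h4 (by norm_num)

end jets

attribute [irreducible] J


lemma J_sub {F : Type*} [NormedAddCommGroup F] [NormedSpace ℝ F] (n : ℕ) :
    ∀ {f g : E3 → F} (_ : ContDiff ℝ (n : WithTop ℕ∞) f)
    (_ : ContDiff ℝ (n : WithTop ℕ∞) g) (x : E3),
    J n (fun x => f x - g x) x ≤ 2 * (J n f x + J n g x) := by
  induction n with
  | zero =>
    intro f g _ _ x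
    have := sq_add_le (f x) (-g x)
    rw [norm_neg] at this
    simpa [J_zero, sub_eq_add_neg] using this
  | succ n ih =>
    intro f g hf hg x
    simp only [J_succ, Dv_sub (cd_diff hf) (cd_diff hg)]
    have h1 := sq_add_le (f x) (-g x)
    rw [norm_neg, ← sub_eq_add_neg] at h1
    have h2 := Finset.sum_le_sum (s := Finset.univ) fun i (_ : i ∈ Finset.univ) =>
      ih (Dv_contDiff hf i) (Dv_contDiff hg i) x
    rw [← Finset.mul_sum, Finset.sum_add_distrib] at h2
    linarith

/-- `P` is an operator of order `k`, with jet bounds up to order `n` -/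
def OB (n k : ℕ) (P : (E3 → E3) → E3 → E3) : Prop :=
  ∃ C, 0 ≤ C ∧ ∀ u : E3 → E3, ContDiff ℝ ((n + k : ℕ) : WithTop ℕ∞) u →
    ContDiff ℝ (n : WithTop ℕ∞) (P u) ∧ ∀ x, J n (P u) x ≤ C * J (n + k) u x

lemma OB_id (n : ℕ) : OB n 0 (fun u => u) :=
  ⟨1, zero_le_one, fun u hu => ⟨hu, fun x => by simp⟩⟩

lemma OB_Dv {n k : ℕ} {P : (E3 → E3) → E3 → E3} (h : OB n k P) (i : Fin 3) :
    OB n (k + 1) (fun u => P (Dv i u)) := by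
  obtain ⟨C, hC, h⟩ := h
  refine ⟨C, hC, fun u hu => ⟨(h _ (Dv_contDiff hu i)).1, fun x => ?_⟩⟩
  exact ((h _ (Dv_contDiff hu i)).2 x).trans (mul_le_mul_of_nonneg_left (J_Dv _ u i x) hC)

lemma OB_mono {n k k' : ℕ} {P : (E3 → E3) → E3 → E3} (h : OB n k P) (hk : k ≤ k') :
    OB n k' P := by
  obtain ⟨C, hC, h⟩ := h
  refine ⟨C, hC, fun u hu => ⟨(h _ (cd_le hu (by omega))).1, fun x => ?_⟩⟩
  exact ((h _ (cd_le hu (by omega))).2 x).trans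
    (mul_le_mul_of_nonneg_left (J_mono (by omega) u x) hC)

lemma OB_add {n k : ℕ} {P Q : (E3 → E3) → E3 → E3} (h : OB n k P) (h' : OB n k Q) :
    OB n k (fun u x => P u x + Q u x) := by
  obtain ⟨C, hC, h⟩ := h
  obtain ⟨C', hC', h'⟩ := h'
  refine ⟨2 * (C + C'), by positivity, fun u hu => ⟨(h u hu).1.add (h' u hu).1, fun x => ?_⟩⟩
  have := J_add n (h u hu).1 (h' u hu).1 x
  have h1 := (h u hu).2 x
  have h2 := (h' u hu).2 x
  linarith

lemma OB_clm {n k : ℕ} {P : (E3 → E3) → E3 → E3} (h : OB n k P) (A : E3 →L[ℝ] E3) :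
    OB n k (fun u x => A (P u x)) := by
  obtain ⟨C, hC, h⟩ := h
  refine ⟨‖A‖ ^ 2 * C, by positivity, fun u hu => ⟨A.contDiff.comp (h u hu).1, fun x => ?_⟩⟩
  have := J_clm A n (h u hu).1 x
  have h1 := mul_le_mul_of_nonneg_left ((h u hu).2 x) (sq_nonneg ‖A‖)
  linarith

lemma OB_smul {n k : ℕ} {P : (E3 → E3) → E3 → E3} (h : OB n k P) {c : E3 → ℝ}
    (hc : ContDiff ℝ (⊤ : ℕ∞) c) (hb : BC n c) :
    OB n k (fun u x => c x • P u x) := by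
  obtain ⟨C, hC, h⟩ := h
  obtain ⟨C', hC', h'⟩ := J_smul (F := E3) n hc hb
  refine ⟨C' * C, by positivity, fun u hu => ⟨(cd_top hc).smul (h u hu).1, fun x => ?_⟩⟩
  have := h' (h u hu).1 x
  have h1 := mul_le_mul_of_nonneg_left ((h u hu).2 x) hC'
  linarith

lemma OB_sub {n k : ℕ} {P Q : (E3 → E3) → E3 → E3} (h : OB n k P) (h' : OB n k Q) :
    OB n k (fun u x => P u x - Q u x) := by
  have := OB_add h (OB_clm h' (-(ContinuousLinearMap.id ℝ E3)))
  simpa [sub_eq_add_neg] using this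

lemma OB_zero (n k : ℕ) : OB n k (fun _ _ => 0) := by
  have := OB_clm (OB_mono (OB_id n) (Nat.zero_le k)) (0 : E3 →L[ℝ] E3)
  simpa using this

lemma OB_sum {ι : Type*} (s : Finset ι) {n k : ℕ} {P : ι → (E3 → E3) → E3 → E3}
    (h : ∀ j ∈ s, OB n k (P j)) : OB n k (fun u x => ∑ j ∈ s, P j u x) := by
  classical
  induction s using Finset.induction_on with
  | empty => simpa using OB_zero n k
  | insert a s ha ih =>
    simp only [Finset.sum_insert ha]
    exact OB_add (h a (Finset.mem_insert_self _ _))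
      (ih fun j hj => h j (Finset.mem_insert_of_mem hj))

/-- Tangential derivative -/
def Tn (nv : Fin 3 → E3 → ℝ) (i : Fin 3) (u : E3 → E3) (x : E3) : E3 :=
  Dv i u x - nv i x • Dv 0 u x

/-- hypotheses on the conormal field -/
structure Cf (nv : Fin 3 → E3 → ℝ) : Prop where
  smooth : ∀ i, ContDiff ℝ (⊤ : ℕ∞) (nv i)
  bd : ∀ i, BC 5 (nv i)
  n0 : ∀ x, nv 0 x = 1
  d0 : ∀ i x, Dv 0 (nv i) x = 0

/-- second order constant coefficient operator -/
def Lop (A : Fin 3 → Fin 3 → E3 →L[ℝ] E3) (u : E3 → E3) (x : E3) : E3 :=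
  ∑ l, ∑ m, A l m (Dv l (Dv m u) x)

lemma OB_D1 (n : ℕ) (i : Fin 3) : OB n 1 (fun u => Dv i u) := OB_Dv (OB_id n) i

lemma OB_D2 (n : ℕ) (i j : Fin 3) : OB n 2 (fun u => Dv i (Dv j u)) := OB_Dv (OB_D1 n i) j

lemma OB_Lop (A : Fin 3 → Fin 3 → E3 →L[ℝ] E3) (n : ℕ) : OB n 2 (Lop A) :=
  OB_sum _ fun l _ => OB_sum _ fun m _ => OB_clm (OB_D2 n l m) (A l m)

variable {nv : Fin 3 → E3 → ℝ}

lemma OB_Tn (h : Cf nv) {n : ℕ} (hn : n ≤ 5) (i : Fin 3) : OB n 1 (Tn nv i) :=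
  OB_sub (OB_D1 n i) (OB_smul (OB_D1 n 0) (h.smooth i) (BC_mono hn (h.bd i)))

lemma Tn_cd (h : Cf nv) {n : ℕ} {u : E3 → E3}
    (hu : ContDiff ℝ ((n + 1 : ℕ) : WithTop ℕ∞) u) (i : Fin 3) :
    ContDiff ℝ (n : WithTop ℕ∞) (Tn nv i u) :=
  (Dv_contDiff hu i).sub ((cd_top (h.smooth i)).smul (Dv_contDiff hu 0))

lemma Lop_cd (A : Fin 3 → Fin 3 → E3 →L[ℝ] E3) {n : ℕ} {u : E3 → E3}
    (hu : ContDiff ℝ ((n + 2 : ℕ) : WithTop ℕ∞) u) :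
    ContDiff ℝ (n : WithTop ℕ∞) (Lop A u) := by
  obtain ⟨C, hC, h⟩ := OB_Lop A n
  exact (h u hu).1

lemma Dv_Tn (h : Cf nv) {u : E3 → E3} (hu : ContDiff ℝ (2 : ℕ) u) (i m : Fin 3) :
    Dv m (Tn nv i u) = fun x => Dv m (Dv i u) x -
      (Dv m (nv i) x • Dv 0 u x + nv i x • Dv m (Dv 0 u) x) := by
  have hn : Differentiable ℝ (nv i) := (h.smooth i).differentiable (by simp)
  have h0 := cd_diff (Dv_contDiff hu 0)
  have h1 := cd_diff (Dv_contDiff hu i)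
  have e := Dv_sub h1 (hn.smul h0) m
  have e' := Dv_smul hn h0 m
  refine e.trans ?_
  funext x
  exact congrArg (fun z => _ - z) (congrFun e' x)

lemma Tn_Dv (h : Cf nv) {u : E3 → E3} (hu : ContDiff ℝ (2 : ℕ) u) (i m : Fin 3) :
    Tn nv i (Dv m u) = fun x => Dv m (Tn nv i u) x + Dv m (nv i) x • Dv 0 u x := by
  rw [Dv_Tn h hu]
  funext x
  simp only [Tn]
  rw [Dv_comm hu i m, Dv_comm hu 0 m]
  abel

lemma Lop_Dv (A : Fin 3 → Fin 3 → E3 →L[ℝ] E3) {u : E3 → E3} (hu : ContDiff ℝ (3 : ℕ) u)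
    (i : Fin 3) : Lop A (Dv i u) = Dv i (Lop A u) := by
  have hd : ∀ l m, Differentiable ℝ (fun x => A l m (Dv l (Dv m u) x)) := fun l m =>
    (A l m).differentiable.comp (cd_diff (Dv_contDiff (Dv_contDiff hu m) l))
  have e1 : Dv i (Lop A u) = fun x => ∑ l, Dv i (fun x => ∑ m, A l m (Dv l (Dv m u) x)) x :=
    Dv_sum _ (fun l _ => Differentiable.fun_sum fun m _ => hd l m) i
  rw [e1]
  funext x
  simp only [Lop]
  refine Finset.sum_congr rfl fun l _ => ?_
  rw [Dv_sum _ (fun m _ => hd l m) i]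
  refine Finset.sum_congr rfl fun m _ => ?_
  rw [Dv_clm _ (cd_diff (Dv_contDiff (Dv_contDiff hu m) l)), Dv_comm (cd_le hu (by omega)) m i,
    Dv_comm (Dv_contDiff hu m) l i]

lemma Lop_Tn (h : Cf nv) (A : Fin 3 → Fin 3 → E3 →L[ℝ] E3) {u : E3 → E3}
    (hu : ContDiff ℝ (3 : ℕ) u) (i : Fin 3) :
    Lop A (Tn nv i u) = fun x => Tn nv i (Lop A u) x -
      ∑ l, ∑ m, A l m (Dv l (nv i) x • Dv 0 (Dv m u) x + (Dv l (Dv m (nv i)) x • Dv 0 u x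
        + Dv m (nv i) x • Dv l (Dv 0 u) x)) := by
  have hu2 : ContDiff ℝ (2 : ℕ) u := cd_le hu (by omega)
  have hs : ∀ m, Differentiable ℝ (Dv m (nv i)) := fun m =>
    (Dv_contDiff_top (h.smooth i) m).differentiable (by simp)
  have key : ∀ l m x, Dv l (Dv m (Tn nv i u)) x = Tn nv i (Dv l (Dv m u)) x -
      (Dv l (nv i) x • Dv 0 (Dv m u) x + (Dv l (Dv m (nv i)) x • Dv 0 u x
        + Dv m (nv i) x • Dv l (Dv 0 u) x)) := by
    intro l m x
    have e1 : Dv m (Tn nv i u) = fun x => Tn nv i (Dv m u) x - Dv m (nv i) x • Dv 0 u x := by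
      rw [Tn_Dv h hu2]; funext x; simp
    have e2 := congrFun (Dv_sub (cd_diff (Tn_cd h (Dv_contDiff hu m) i))
      ((hs m).smul (cd_diff (Dv_contDiff hu2 0))) l) x
    have e3 := congrFun (Dv_smul (hs m) (cd_diff (Dv_contDiff hu2 0)) l) x
    have e4 := congrFun (Tn_Dv h (Dv_contDiff hu m) i l) x
    rw [e1, e4]
    refine e2.trans ?_
    refine (congrArg (fun z => _ - z) e3).trans ?_
    abel
  funext x
  have e5 : Tn nv i (Lop A u) x = ∑ l, ∑ m, A l m (Tn nv i (Dv l (Dv m u)) x) := by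
    simp only [Tn, map_sub, map_smul, Finset.sum_sub_distrib]
    rw [← congrFun (Lop_Dv A hu i) x, ← congrFun (Lop_Dv A hu 0) x]
    simp only [Lop, Finset.smul_sum]
    congr 1
    · refine Finset.sum_congr rfl fun l _ => Finset.sum_congr rfl fun m _ => ?_
      rw [Dv_comm hu2 m i, Dv_comm (Dv_contDiff hu m) l i]
    · refine Finset.sum_congr rfl fun l _ => Finset.sum_congr rfl fun m _ => ?_
      rw [Dv_comm hu2 m 0, Dv_comm (Dv_contDiff hu m) l 0]
  rw [e5]
  simp only [Lop, key, map_sub, Finset.sum_sub_distrib]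

lemma J_Lop_Tn (h : Cf nv) (A : Fin 3 → Fin 3 → E3 →L[ℝ] E3) (i : Fin 3) (n : ℕ) (hn : n ≤ 3) :
    ∃ C, 0 ≤ C ∧ ∀ u : E3 → E3, ContDiff ℝ ((n + 3 : ℕ) : WithTop ℕ∞) u → ∀ x,
      J n (Lop A (Tn nv i u)) x ≤ C * (J (n + 1) (Lop A u) x + J (n + 2) u x) := by
  have hs1 : ∀ l, ContDiff ℝ (⊤ : ℕ∞) (Dv l (nv i)) := fun l => Dv_contDiff_top (h.smooth i) l
  have hb1 : ∀ l, BC 4 (Dv l (nv i)) := fun l => (h.bd i).2 l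
  have hR : OB n 2 (fun u x => ∑ l, ∑ m, A l m (Dv l (nv i) x • Dv 0 (Dv m u) x +
      (Dv l (Dv m (nv i)) x • Dv 0 u x + Dv m (nv i) x • Dv l (Dv 0 u) x))) := by
    refine OB_sum _ fun l _ => OB_sum _ fun m _ => OB_clm ?_ (A l m)
    refine OB_add (OB_smul (OB_D2 n 0 m) (hs1 l) (BC_mono (by omega) (hb1 l))) (OB_add ?_ ?_)
    · exact OB_smul (OB_mono (OB_D1 n 0) (by omega)) (Dv_contDiff_top (hs1 m) l)
        (BC_mono hn ((hb1 m).2 l))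
    · exact OB_smul (OB_D2 n l 0) (hs1 m) (BC_mono (by omega) (hb1 m))
  obtain ⟨C, hC, hR⟩ := hR
  obtain ⟨C', hC', hT⟩ := OB_Tn h (n := n) (by omega) i
  refine ⟨2 * (C + C'), by positivity, fun u hu x => ?_⟩
  obtain ⟨r1, r2⟩ := hR u (cd_le hu (by omega))
  obtain ⟨t1, t2⟩ := hT (Lop A u) (Lop_cd A hu)
  rw [Lop_Tn h A (cd_le hu (by omega)) i]
  have h1 := J_sub n t1 r1 x
  have h2 := t2 x
  have h3 := r2 x
  have h7 := J_nonneg (n + 1) (Lop A u) x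
  have h8 := J_nonneg (n + 2) u x
  have h9 : 0 ≤ C * J (n + 1) (Lop A u) x := by positivity
  have h10 : 0 ≤ C' * J (n + 2) u x := by positivity
  refine h1.trans ?_
  linarith


/-- coercivity of the coefficients -/
def Coer (A : Fin 3 → Fin 3 → E3 →L[ℝ] E3) (μ : ℝ) : Prop :=
  0 < μ ∧ ∀ p : Fin 3 → E3, μ * ∑ l, ‖p l‖ ^ 2 ≤ -∑ l, ∑ m, inner ℝ (A l m (p m)) (p l)

variable {nv : Fin 3 → E3 → ℝ}

lemma Cf.bound (h : Cf nv) : ∃ B, 1 ≤ B ∧ (∀ i x, |nv i x| ≤ B) ∧ (∀ l i x, |Dv l (nv i) x| ≤ B) := by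
  choose B hB using fun i => BC_bd (h.bd i)
  choose B' hB' using fun l i => BC_bd ((h.bd i).2 l)
  have h1 : ∀ i, 0 ≤ B i := fun i => (abs_nonneg _).trans (hB i 0)
  have h2 : ∀ l i, 0 ≤ B' l i := fun l i => (abs_nonneg _).trans (hB' l i 0)
  have h3 : 0 ≤ ∑ l, ∑ i, B' l i := Finset.sum_nonneg fun l _ => Finset.sum_nonneg fun i _ => h2 l i
  have h4 : 0 ≤ ∑ i, B i := Finset.sum_nonneg fun i _ => h1 i
  refine ⟨1 + ∑ i, B i + ∑ l, ∑ i, B' l i, by linarith, fun i x => ?_, fun l i x => ?_⟩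
  · have := Finset.single_le_sum (f := B) (fun i _ => h1 i) (Finset.mem_univ i)
    linarith [hB i x]
  · have := Finset.single_le_sum (f := B' l) (fun i _ => h2 l i) (Finset.mem_univ i)
    have h5 := Finset.single_le_sum (f := fun l => ∑ i, B' l i)
      (fun l _ => Finset.sum_nonneg fun i _ => h2 l i) (Finset.mem_univ l)
    linarith [hB' l i x]

lemma sq3 (a b c : E3) : ‖a + b + c‖ ^ 2 ≤ 3 * (‖a‖ ^ 2 + ‖b‖ ^ 2 + ‖c‖ ^ 2) := by
  have h : ‖a + b + c‖ ≤ ‖a‖ + ‖b‖ + ‖c‖ := norm_add₃_le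
  have h0 := norm_nonneg (a + b + c)
  have := pow_le_pow_left₀ h0 h 2
  nlinarith [sq_nonneg (‖a‖ - ‖b‖), sq_nonneg (‖a‖ - ‖c‖), sq_nonneg (‖b‖ - ‖c‖)]

lemma alg0 (A : Fin 3 → Fin 3 → E3 →L[ℝ] E3) {μ : ℝ} (hA : Coer A μ)
    (n : Fin 3 → ℝ) (n0 : n 0 = 1) (r : Fin 3 → Fin 3 → E3) (w f : E3)
    (hf : f = ∑ l, ∑ m, A l m ((n l * n m) • w + r l m)) (R K : ℝ) (hK : ∀ l m, ‖A l m‖ ≤ K)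
    (hR : ∀ l m, ‖r l m‖ ≤ R) :
    μ * ‖w‖ ≤ ‖f‖ + 9 * (K * R) := by
  set g : E3 := ∑ l, ∑ m, A l m (r l m) with hg
  have hg' : ‖g‖ ≤ 9 * (K * R) := by
    have h1 : ∀ l m, ‖A l m (r l m)‖ ≤ K * R := fun l m =>
      ((A l m).le_opNorm _).trans (mul_le_mul (hK l m) (hR l m) (norm_nonneg _)
        ((norm_nonneg _).trans (hK l m)))
    have h2 : ∀ l, ‖∑ m, A l m (r l m)‖ ≤ 3 * (K * R) := fun l => by
      refine (norm_sum_le _ _).trans ?_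
      refine (Finset.sum_le_sum fun m _ => h1 l m).trans ?_
      simp
    refine (norm_sum_le _ _).trans ?_
    refine (Finset.sum_le_sum fun l _ => h2 l).trans ?_
    simp
    linarith
  have h1 : inner ℝ (g - f) w = -∑ l, ∑ m, inner ℝ (A l m (n m • w)) (n l • w) := by
    rw [hf, hg, ← Finset.sum_sub_distrib, sum_inner, ← Finset.sum_neg_distrib]
    refine Finset.sum_congr rfl fun l _ => ?_
    rw [← Finset.sum_sub_distrib, sum_inner, ← Finset.sum_neg_distrib]
    refine Finset.sum_congr rfl fun m _ => ?_
    simp only [map_add, map_smul, inner_sub_left, inner_add_left, inner_smul_left, inner_smul_right]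
    simp
    ring
  have h2 := hA.2 (fun l => n l • w)
  rw [← h1] at h2
  have h3 : ‖w‖ ^ 2 ≤ ∑ l, ‖n l • w‖ ^ 2 := by
    have := Finset.single_le_sum (f := fun l => ‖n l • w‖ ^ 2) (fun l _ => sq_nonneg _)
      (Finset.mem_univ 0)
    simpa [n0] using this
  have h4 := real_inner_le_norm (g - f) w
  have h5 := norm_sub_le g f
  have h6 := mul_le_mul_of_nonneg_left h3 hA.1.le
  have h7 : μ * ‖w‖ * ‖w‖ ≤ (‖f‖ + 9 * (K * R)) * ‖w‖ := by
    nlinarith [norm_nonneg w]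
  rcases (norm_nonneg w).eq_or_lt with hw | hw
  · rw [← hw]; nlinarith [norm_nonneg f, norm_nonneg g]
  · exact le_of_mul_le_mul_right h7 hw

lemma hess_split (h : Cf nv) {u : E3 → E3} (hu : ContDiff ℝ (2 : ℕ) u) (l m : Fin 3) (x : E3) :
    Dv l (Dv m u) x = (nv l x * nv m x) • Dv 0 (Dv 0 u) x +
      (Dv l (Tn nv m u) x + Dv l (nv m) x • Dv 0 u x + nv m x • Dv 0 (Tn nv l u) x) := by
  rw [Dv_Tn h hu, Dv_Tn h hu]
  simp only [h.d0, Dv_comm hu 0 l]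
  simp only [zero_smul, zero_add, smul_sub, mul_comm (nv l x), mul_smul]
  abel

lemma A0 (h : Cf nv) (A : Fin 3 → Fin 3 → E3 →L[ℝ] E3) {μ : ℝ} (hA : Coer A μ) :
    ∃ C, 0 ≤ C ∧ ∀ u : E3 → E3, ContDiff ℝ (2 : ℕ) u → ∀ x,
      J 2 u x ≤ C * (J 0 (Lop A u) x + ∑ i, J 1 (Tn nv i u) x + J 1 u x) := by
  obtain ⟨B, hB1, hB, hB'⟩ := h.bound
  obtain ⟨K, hK0, hK⟩ : ∃ K, 0 ≤ K ∧ ∀ l m, ‖A l m‖ ≤ K := by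
    refine ⟨∑ l, ∑ m, ‖A l m‖, by positivity, fun l m => ?_⟩
    have := Finset.single_le_sum (f := fun m => ‖A l m‖) (fun i _ => norm_nonneg _) (Finset.mem_univ m)
    have h5 := Finset.single_le_sum (f := fun l => ∑ m, ‖A l m‖)
      (fun l _ => by positivity) (Finset.mem_univ l)
    exact this.trans h5
  have hμ := hA.1
  set c1 : ℝ := 9 * B ^ 2 with hc1
  have hc1' : 0 ≤ c1 := by positivity
  set c2 : ℝ := (2 + 162 * K ^ 2 * c1) / μ ^ 2 with hc2
  have hc2' : 0 ≤ c2 := by positivity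
  refine ⟨1 + 9 * (2 * (B ^ 4 * c2 + c1)), by positivity, fun u hu x => ?_⟩
  set S : ℝ := ∑ i, J 1 (Tn nv i u) x + J 1 u x with hS
  have hT0 : 0 ≤ ∑ i, J 1 (Tn nv i u) x := Finset.sum_nonneg fun i _ => J_nonneg _ _ _
  have hu0 := J_nonneg 1 u x
  have hS0 : 0 ≤ S := add_nonneg hT0 hu0
  have hf0 := J_nonneg 0 (Lop A u) x
  have bT : ∀ l m, ‖Dv l (Tn nv m u) x‖ ^ 2 ≤ S := fun l m => by
    have a1 := J_Dv 0 (Tn nv m u) l x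
    rw [J_zero] at a1
    have a2 := Finset.single_le_sum (f := fun i => J 1 (Tn nv i u) x) (fun i _ => J_nonneg _ _ _)
      (Finset.mem_univ m)
    have a3 : ‖Dv l (Tn nv m u) x‖ ^ 2 ≤ J 1 (Tn nv m u) x := a1
    have a4 : J 1 (Tn nv m u) x ≤ ∑ i, J 1 (Tn nv i u) x := a2
    linarith
  have bu : ‖Dv 0 u x‖ ^ 2 ≤ S := by
    have a1 : ‖Dv 0 u x‖ ^ 2 ≤ J 1 u x := by rw [← J_zero (Dv 0 u) x]; exact J_Dv 0 u 0 x
    linarith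
  have bs : ∀ (c : ℝ) (v : E3), |c| ≤ B → ‖v‖ ^ 2 ≤ S → ‖c • v‖ ^ 2 ≤ B ^ 2 * S := by
    intro c v hc hv
    rw [norm_smul, mul_pow, Real.norm_eq_abs]
    exact mul_le_mul (pow_le_pow_left₀ (abs_nonneg _) hc 2) hv (by positivity) (by positivity)
  set r : Fin 3 → Fin 3 → E3 := fun l m =>
    Dv l (Tn nv m u) x + Dv l (nv m) x • Dv 0 u x + nv m x • Dv 0 (Tn nv l u) x with hr
  have hB2 : S ≤ B ^ 2 * S := le_mul_of_one_le_left hS0 (by nlinarith)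
  have br : ∀ l m, ‖r l m‖ ^ 2 ≤ c1 * S := by
    intro l m
    refine (sq3 _ _ _).trans ?_
    have a1 := bT l m
    have a2 := bs _ _ (hB' l m x) bu
    have a3 := bs _ _ (hB m x) (bT 0 l)
    rw [hc1]
    linarith
  have br' : ∀ l m, ‖r l m‖ ≤ √(c1 * S) := fun l m => Real.le_sqrt_of_sq_le (br l m)
  set w := Dv 0 (Dv 0 u) x with hw
  have hsp : ∀ l m, Dv l (Dv m u) x = (nv l x * nv m x) • w + r l m := fun l m =>
    hess_split h hu l m x
  have hm := alg0 A hA (fun i => nv i x) (h.n0 x) r w (Lop A u x) (by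
    simp only [Lop, hsp]) _ K hK br'
  have hw2 : ‖w‖ ^ 2 ≤ c2 * (J 0 (Lop A u) x + S) := by
    have e1 := pow_le_pow_left₀ (by positivity) hm 2
    have e2 : (‖Lop A u x‖ + 9 * (K * √(c1 * S))) ^ 2 ≤
        2 * ‖Lop A u x‖ ^ 2 + 162 * K ^ 2 * (c1 * S) := by
      have := Real.sq_sqrt (by positivity : 0 ≤ c1 * S)
      nlinarith [sq_nonneg (‖Lop A u x‖ - 9 * (K * √(c1 * S)))]
    rw [hc2, div_mul_eq_mul_div, le_div_iff₀ (by positivity)]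
    rw [J_zero] at *
    have e3 : 0 ≤ 162 * K ^ 2 * c1 * ‖Lop A u x‖ ^ 2 := by positivity
    nlinarith
  have hD2 : ∀ l m, ‖Dv l (Dv m u) x‖ ^ 2 ≤
      2 * (B ^ 4 * c2 + c1) * (J 0 (Lop A u) x + S) := by
    intro l m
    rw [hsp]
    refine (sq_add_le _ _).trans ?_
    have e1 : ‖(nv l x * nv m x) • w‖ ^ 2 ≤ B ^ 4 * ‖w‖ ^ 2 := by
      rw [norm_smul, mul_pow, Real.norm_eq_abs, abs_mul]
      have : (|nv l x| * |nv m x|) ^ 2 ≤ (B * B) ^ 2 := by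
        refine pow_le_pow_left₀ (by positivity) ?_ 2
        exact mul_le_mul (hB l x) (hB m x) (abs_nonneg _) (by linarith)
      calc _ ≤ (B * B) ^ 2 * ‖w‖ ^ 2 := mul_le_mul_of_nonneg_right this (by positivity)
        _ = _ := by ring
    have e2 := mul_le_mul_of_nonneg_left hw2 (by positivity : 0 ≤ B ^ 4)
    have e3 := br l m
    have e4 : 0 ≤ c1 * J 0 (Lop A u) x := by positivity
    nlinarith
  have e0 : J 2 u x = J 1 u x + ∑ m, ∑ l, ‖Dv l (Dv m u) x‖ ^ 2 := by
    simp only [J_succ, J_zero, Finset.sum_add_distrib]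
    ring
  rw [e0]
  have e5 : ∑ m, ∑ l, ‖Dv l (Dv m u) x‖ ^ 2 ≤
      9 * (2 * (B ^ 4 * c2 + c1) * (J 0 (Lop A u) x + S)) := by
    refine (Finset.sum_le_sum fun m _ => Finset.sum_le_sum fun l _ => hD2 l m).trans ?_
    simp
    linarith
  have e6 : J 1 u x ≤ J 0 (Lop A u) x + S := by linarith
  have e7 : J 0 (Lop A u) x + ∑ i, J 1 (Tn nv i u) x + J 1 u x = J 0 (Lop A u) x + S := by
    rw [hS]; ring
  rw [e7]
  linarith

lemma An (h : Cf nv) (A : Fin 3 → Fin 3 → E3 →L[ℝ] E3) {μ : ℝ} (hA : Coer A μ) (n : ℕ) (hn : n ≤ 3) :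
    ∃ C, 0 ≤ C ∧ ∀ u : E3 → E3, ContDiff ℝ ((n + 2 : ℕ) : WithTop ℕ∞) u → ∀ x,
      J (n + 2) u x ≤ C * (J n (Lop A u) x + ∑ i, J (n + 1) (Tn nv i u) x + J (n + 1) u x) := by
  induction n with
  | zero => exact A0 h A hA
  | succ n ih =>
    obtain ⟨C, hC, ih⟩ := ih (by omega)
    have hob : ∀ i m, OB (n + 1) 1 (fun u x => Dv m (nv i) x • Dv 0 u x) := fun i m =>
      OB_smul (OB_D1 _ 0) (Dv_contDiff_top (h.smooth i) m) (BC_mono (by omega) (show BC 4 (Dv m (nv i)) from (h.bd i).2 m))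
    choose c hc0 hc using hob
    set c' := ∑ i, ∑ m, c i m with hc'
    have hc'0 : 0 ≤ c' := Finset.sum_nonneg fun i _ => Finset.sum_nonneg fun m _ => hc0 i m
    have hcc : ∀ i m, c i m ≤ c' := fun i m => by
      have a1 := Finset.single_le_sum (f := fun m => c i m) (fun m _ => hc0 i m) (Finset.mem_univ m)
      have a2 := Finset.single_le_sum (f := fun i => ∑ m, c i m)
        (fun i _ => Finset.sum_nonneg fun m _ => hc0 i m) (Finset.mem_univ i)
      exact a1.trans a2
    refine ⟨1 + 3 * (C * (3 + 6 * c')), by positivity, fun u hu x => ?_⟩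
    have hu2 : ContDiff ℝ (2 : ℕ) u := cd_le hu (by omega)
    set S := J (n + 1) (Lop A u) x + ∑ i, J (n + 1 + 1) (Tn nv i u) x + J (n + 1 + 1) u x with hS
    have f0 := J_nonneg (n + 1) (Lop A u) x
    have t0 : 0 ≤ ∑ i, J (n + 1 + 1) (Tn nv i u) x := Finset.sum_nonneg fun i _ => J_nonneg _ _ _
    have u0 := J_nonneg (n + 1 + 1) u x
    have hm : ∀ m, J (n + 2) (Dv m u) x ≤ C * (3 + 6 * c') * S := by
      intro m
      refine (ih (Dv m u) (Dv_contDiff hu m) x).trans ?_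
      rw [mul_assoc]
      refine mul_le_mul_of_nonneg_left ?_ hC
      have a1 : J n (Lop A (Dv m u)) x ≤ J (n + 1) (Lop A u) x := by
        rw [Lop_Dv A (cd_le hu (by omega))]; exact J_Dv _ _ _ _
      have a2 : J (n + 1) (Dv m u) x ≤ J (n + 1 + 1) u x := J_Dv _ _ _ _
      have a3 : ∀ i, J (n + 1) (Tn nv i (Dv m u)) x ≤
          2 * J (n + 1 + 1) (Tn nv i u) x + 2 * c' * J (n + 1 + 1) u x := by
        intro i
        rw [Tn_Dv h hu2]
        obtain ⟨b1, b2⟩ := hc i m u (cd_le hu (by omega))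
        refine (J_add (n + 1) (Dv_contDiff (n := n + 1) (Tn_cd h hu i) m) b1 x).trans ?_
        have b3 := J_Dv (n + 1) (Tn nv i u) m x
        have b4 := (b2 x).trans (mul_le_mul_of_nonneg_right (hcc i m) u0)
        linarith
      have a4 := Finset.sum_le_sum (s := Finset.univ) fun i (_ : i ∈ Finset.univ) => a3 i
      rw [Finset.sum_add_distrib, ← Finset.mul_sum] at a4
      simp only [Finset.sum_const, Finset.card_univ, Fintype.card_fin, nsmul_eq_mul] at a4
      push_cast at a4
      have g1 : 0 ≤ c' * J (n + 1) (Lop A u) x := mul_nonneg hc'0 f0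
      have g2 : 0 ≤ c' * ∑ i, J (n + 1 + 1) (Tn nv i u) x := mul_nonneg hc'0 t0
      rw [hS]
      linarith
    rw [show n + 1 + 2 = n + 2 + 1 from by ring, J_succ (n + 2)]
    have hs := Finset.sum_le_sum (s := Finset.univ) fun m (_ : m ∈ Finset.univ) => hm m
    simp only [Finset.sum_const, Finset.card_univ, Fintype.card_fin, nsmul_eq_mul] at hs
    push_cast at hs
    have hx := norm_sq_le_J (n + 1 + 1) u x
    have : ‖u x‖ ^ 2 ≤ S := by linarith
    linarith


lemma int_le {F : Type*} [NormedAddCommGroup F] {s : Set E3} {f : E3 → F} {g : E3 → ℝ}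
    (hf : Continuous f) (hg : IntegrableOn g s)
    (C : ℝ) (h : ∀ x, ‖f x‖ ≤ C * g x) : IntegrableOn f s :=
  (hg.const_mul C).mono' hf.aestronglyMeasurable (Eventually.of_forall h)

lemma Dv_comp {a : E3 → E3} (ha : Differentiable ℝ a) (i l : Fin 3) :
    Dv i (fun x => a x l) = fun x => Dv i a x l :=
  Dv_clm (EuclideanSpace.proj l : E3 →L[ℝ] ℝ) ha i

lemma comp_cd {n : ℕ} {a : E3 → E3} (ha : ContDiff ℝ (n : WithTop ℕ∞) a) (l : Fin 3) :
    ContDiff ℝ (n : WithTop ℕ∞) (fun x => a x l) :=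
  (EuclideanSpace.proj l : E3 →L[ℝ] ℝ).contDiff.comp ha

lemma coord_sq_le (v : E3) (l : Fin 3) : v l ^ 2 ≤ ‖v‖ ^ 2 := by
  rw [EuclideanSpace.norm_sq_eq]
  have := Finset.single_le_sum (f := fun l => ‖v l‖ ^ 2) (fun i _ => sq_nonneg _) (Finset.mem_univ l)
  simpa using this

lemma inner_coord (v w : E3) : inner ℝ v w = ∑ l, v l * w l := by
  rw [PiLp.inner_apply]
  refine Finset.sum_congr rfl fun l _ => ?_
  simp [mul_comm]

lemma coord_int {s : Set E3} {v : E3 → E3} (hv : Continuous v) {g : E3 → ℝ} (hg : IntegrableOn g s)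
    (h : ∀ x, ‖v x‖ ^ 2 ≤ g x) (l : Fin 3) : IntegrableOn (fun x => v x l ^ 2) s := by
  refine int_le (by fun_prop) hg 1 fun x => ?_
  rw [Real.norm_of_nonneg (sq_nonneg _), one_mul]
  exact (coord_sq_le _ _).trans (h x)

lemma inner_int {s : Set E3} {v w : E3 → E3} (hv : Continuous v) (hw : Continuous w) {g g' : E3 → ℝ}
    (hg : IntegrableOn g s) (hg' : IntegrableOn g' s)
    (h : ∀ x, ‖v x‖ ^ 2 ≤ g x) (h' : ∀ x, ‖w x‖ ^ 2 ≤ g' x) :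
    IntegrableOn (fun x => (inner ℝ (v x) (w x) : ℝ)) s := by
  refine int_le (g := fun x => g x + g' x) (hv.inner hw) (hg.add hg') 1 fun x => ?_
  have h1 := norm_inner_le_norm (𝕜 := ℝ) (v x) (w x)
  have h2 := h x
  have h3 := h' x
  nlinarith [sq_nonneg (‖v x‖ - ‖w x‖), sq_nonneg ‖v x‖, sq_nonneg ‖w x‖]

section
variable {M : E2 → ℝ} (hM : Continuous M) {K : NNReal}
    (hL : LipschitzWith K (fun x : E3 => M (proj2 x)))
include hM hL

lemma exchV {a b : E3 → E3}
    (ha : ContDiff ℝ (1 : ℕ) a) (hb : ContDiff ℝ (1 : ℕ) b)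
    (h0 : ∀ x : E3, M (proj2 x) = x 0 → a x = 0)
    (ia : IntegrableOn (J 1 a) (Omg M))
    {g : E3 → ℝ} (ig : IntegrableOn g (Omg M)) (hg : ∀ i x, ‖Dv i b x‖ ^ 2 ≤ g x) (i j : Fin 3) :
    IntegrableOn (fun x => (inner ℝ (Dv j b x) (Dv i a x) - inner ℝ (Dv i b x) (Dv j a x) : ℝ)) (Omg M) ∧
    ∫ x in Omg M, (inner ℝ (Dv j b x) (Dv i a x) - inner ℝ (Dv i b x) (Dv j a x) : ℝ) = 0 := by
  have hda : ∀ i, Continuous (Dv i a) := fun i => (Dv_contDiff (n := 0) ha i).continuous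
  have hdb : ∀ i, Continuous (Dv i b) := fun i => (Dv_contDiff (n := 0) hb i).continuous
  have a1 : ∀ i x, ‖Dv i a x‖ ^ 2 ≤ J 1 a x := fun i x => by
    rw [← J_zero (Dv i a)]; exact J_Dv 0 a i x
  have I := fun i j => inner_int (hdb j) (hda i) ig ia (hg j) (a1 i)
  refine ⟨(I i j).sub (I j i), ?_⟩
  have key : ∀ i j l, ∫ x in Omg M, Dv j b x l * Dv i a x l = ∫ x in Omg M, Dv i b x l * Dv j a x l := by
    intro i j l
    have e := exch M hM hL (fun x => a x l) (fun x => b x l) (comp_cd ha l) (comp_cd hb l)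
      (fun x hx => by simp [h0 x hx])
      (coord_int ha.continuous ia (norm_sq_le_J 1 a) l)
      (fun i => by rw [Dv_comp (cd_diff ha)]; exact coord_int (hda i) ia (a1 i) l)
      (fun i => by rw [Dv_comp (cd_diff hb)]; exact coord_int (hdb i) ig (hg i) l) i j
    simp only [Dv_comp (cd_diff ha), Dv_comp (cd_diff hb)] at e
    simpa only [mul_comm] using e
  have hprod : ∀ i j l, IntegrableOn (fun x => Dv j b x l * Dv i a x l) (Omg M) := fun i j l =>
    int_prod (by have := hdb j; fun_prop) (by have := hda i; fun_prop)
      (coord_int (hdb j) ig (hg j) l) (coord_int (hda i) ia (a1 i) l)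
  rw [integral_sub (I i j) (I j i), sub_eq_zero]
  simp only [inner_coord]
  rw [integral_finsetSum _ fun l _ => hprod i j l, integral_finsetSum _ fun l _ => hprod j i l]
  exact Finset.sum_congr rfl fun l _ => key i j l

lemma ibpV {a b : E3 → E3}
    (ha : ContDiff ℝ (1 : ℕ) a) (hb : ContDiff ℝ (1 : ℕ) b)
    (h0 : ∀ x : E3, M (proj2 x) = x 0 → a x = 0)
    (ia : IntegrableOn (J 1 a) (Omg M))
    {g : E3 → ℝ} (ig : IntegrableOn g (Omg M)) (hg : ∀ i x, ‖Dv i b x‖ ^ 2 ≤ g x)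
    (hg' : ∀ x, ‖b x‖ ^ 2 ≤ g x) (i : Fin 3) :
    IntegrableOn (fun x => (inner ℝ (Dv i b x) (a x) + inner ℝ (b x) (Dv i a x) : ℝ)) (Omg M) ∧
    ∫ x in Omg M, (inner ℝ (Dv i b x) (a x) + inner ℝ (b x) (Dv i a x) : ℝ) = 0 := by
  have hda : ∀ i, Continuous (Dv i a) := fun i => (Dv_contDiff (n := 0) ha i).continuous
  have hdb : ∀ i, Continuous (Dv i b) := fun i => (Dv_contDiff (n := 0) hb i).continuous
  have a1 : ∀ i x, ‖Dv i a x‖ ^ 2 ≤ J 1 a x := fun i x => by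
    rw [← J_zero (Dv i a)]; exact J_Dv 0 a i x
  have I1 := inner_int (hdb i) ha.continuous ig ia (hg i) (norm_sq_le_J 1 a)
  have I2 := inner_int hb.continuous (hda i) ig ia hg' (a1 i)
  refine ⟨I1.add I2, ?_⟩
  have key : ∀ l, ∫ x in Omg M, b x l * Dv i a x l = - ∫ x in Omg M, Dv i b x l * a x l := by
    intro l
    have e := ibp M hM hL (fun x => a x l) (fun x => b x l) (comp_cd ha l) (comp_cd hb l)
      (fun x hx => by simp [h0 x hx]) i
      (coord_int ha.continuous ia (norm_sq_le_J 1 a) l)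
      (by rw [Dv_comp (cd_diff ha)]; exact coord_int (hda i) ia (a1 i) l)
      (coord_int hb.continuous ig hg' l)
      (by rw [Dv_comp (cd_diff hb)]; exact coord_int (hdb i) ig (hg i) l)
    simp only [Dv_comp (cd_diff ha), Dv_comp (cd_diff hb)] at e
    simpa only [mul_comm] using e
  have hp1 : ∀ l, IntegrableOn (fun x => Dv i b x l * a x l) (Omg M) := fun l =>
    int_prod (by have := hdb i; fun_prop) (by have := ha.continuous; fun_prop)
      (coord_int (hdb i) ig (hg i) l) (coord_int ha.continuous ia (norm_sq_le_J 1 a) l)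
  have hp2 : ∀ l, IntegrableOn (fun x => b x l * Dv i a x l) (Omg M) := fun l =>
    int_prod (by have := hb.continuous; fun_prop) (by have := hda i; fun_prop)
      (coord_int hb.continuous ig hg' l) (coord_int (hda i) ia (a1 i) l)
  rw [integral_add I1 I2]
  simp only [inner_coord]
  rw [integral_finsetSum _ fun l _ => hp1 l, integral_finsetSum _ fun l _ => hp2 l]
  rw [Finset.sum_congr rfl fun l _ => key l]
  simp

lemma energy (A : Fin 3 → Fin 3 → E3 →L[ℝ] E3) {μ : ℝ} (hA : Coer A μ) :
    ∃ C, 0 ≤ C ∧ ∀ u : E3 → E3, ContDiff ℝ (2 : ℕ) u → IntegrableOn (J 2 u) (Omg M) →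
      (∀ x : E3, M (proj2 x) = x 0 → u x = 0) →
      ∃ N : E3 → ℝ, IntegrableOn N (Omg M) ∧ ∫ x in Omg M, N x = 0 ∧
        ∀ x, J 1 u x ≤ C * (J 0 (Lop A u) x + J 0 u x) + N x := by
  have hμ := hA.1
  refine ⟨1 + 1 / (2 * μ), by positivity, fun u hu iu h0 => ?_⟩
  have hu1 : ContDiff ℝ (1 : ℕ) u := cd_le hu (by omega)
  have iu1 : IntegrableOn (J 1 u) (Omg M) := int_le (J_continuous 1 hu1) iu 1 fun x => by
    rw [Real.norm_of_nonneg (J_nonneg _ _ _), one_mul]; exact J_mono (by omega) u x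
  have key : ∀ l m, _ := fun l m => ibpV hM hL (a := u) (b := fun x => A l m (Dv m u x)) hu1
    ((A l m).contDiff.comp (Dv_contDiff hu m)) h0 iu1 (g := fun x => ‖A l m‖ ^ 2 * J 2 u x)
    (iu.const_mul _) (fun i x => by
      rw [Dv_clm _ (cd_diff (Dv_contDiff hu m))]
      refine (pow_le_pow_left₀ (norm_nonneg _) ((A l m).le_opNorm _) 2).trans ?_
      rw [mul_pow]
      refine mul_le_mul_of_nonneg_left ?_ (sq_nonneg _)
      rw [← J_zero (Dv i (Dv m u))]
      exact (J_Dv 0 _ i x).trans (J_Dv 1 u m x)) (fun x => by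
      refine (pow_le_pow_left₀ (norm_nonneg _) ((A l m).le_opNorm _) 2).trans ?_
      rw [mul_pow]
      refine mul_le_mul_of_nonneg_left ?_ (sq_nonneg _)
      rw [← J_zero (Dv m u)]
      exact (J_Dv 0 u m x).trans (J_mono (by omega) u x)) l
  simp only [Dv_clm _ (cd_diff (Dv_contDiff hu _))] at key
  set e : Fin 3 → Fin 3 → E3 → ℝ := fun l m x =>
    (inner ℝ (A l m (Dv l (Dv m u) x)) (u x) + inner ℝ (A l m (Dv m u x)) (Dv l u x) : ℝ) with he
  refine ⟨fun x => -(1 / μ) * ∑ l, ∑ m, e l m x, ?_, ?_, ?_⟩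
  · refine Integrable.const_mul ?_ _
    exact integrable_finsetSum _ fun l _ => integrable_finsetSum _ fun m _ => (key l m).1
  · rw [integral_const_mul, integral_finsetSum _ fun l _ => integrable_finsetSum _ fun m _ => (key l m).1]
    have : ∀ l, ∫ x in Omg M, ∑ m, e l m x = 0 := fun l => by
      rw [integral_finsetSum _ fun m _ => (key l m).1]
      exact Finset.sum_eq_zero fun m _ => (key l m).2
    rw [Finset.sum_eq_zero fun l _ => this l, mul_zero]
  · intro x
    have hs : ∑ l, ∑ m, e l m x = inner ℝ (Lop A u x) (u x) +
        ∑ l, ∑ m, (inner ℝ (A l m (Dv m u x)) (Dv l u x) : ℝ) := by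
      simp only [he, Lop, Finset.sum_add_distrib, sum_inner]
    have hc := hA.2 (fun l => Dv l u x)
    have h1 := real_inner_le_norm (Lop A u x) (u x)
    have h2 : J 1 u x = ‖u x‖ ^ 2 + ∑ l, ‖Dv l u x‖ ^ 2 := by simp only [J_succ, J_zero]
    rw [h2, J_zero, J_zero]
    have h3 : μ * ∑ l, ‖Dv l u x‖ ^ 2 ≤ 1 / 2 * (‖Lop A u x‖ ^ 2 + ‖u x‖ ^ 2) - ∑ l, ∑ m, e l m x := by
      rw [hs]
      nlinarith [sq_nonneg (‖Lop A u x‖ - ‖u x‖)]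
    have h4 : ∑ l, ‖Dv l u x‖ ^ 2 ≤
        (1 / 2 * (‖Lop A u x‖ ^ 2 + ‖u x‖ ^ 2) - ∑ l, ∑ m, e l m x) / μ := by
      rw [le_div_iff₀ hμ]; linarith
    have h5 : (1 / 2 * (‖Lop A u x‖ ^ 2 + ‖u x‖ ^ 2) - ∑ l, ∑ m, e l m x) / μ =
        1 / (2 * μ) * (‖Lop A u x‖ ^ 2 + ‖u x‖ ^ 2) + -(1 / μ) * ∑ l, ∑ m, e l m x := by
      field_simp
      ring
    have h6 := sq_nonneg ‖Lop A u x‖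
    linarith
end


lemma young (K e a b : ℝ) (he : 0 < e) : K * (a * b) ≤ e * b ^ 2 + K ^ 2 / e * a ^ 2 := by
  have h : 0 ≤ (e * b - K * a) ^ 2 := sq_nonneg _
  have h2 : e * (K * (a * b)) ≤ e * (e * b ^ 2 + K ^ 2 / e * a ^ 2) := by
    have : e * (e * b ^ 2 + K ^ 2 / e * a ^ 2) = e ^ 2 * b ^ 2 + K ^ 2 * a ^ 2 := by
      field_simp
    rw [this]
    nlinarith [sq_nonneg (e * b), sq_nonneg (K * a)]
  exact le_of_mul_le_mul_left h2 he

section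
variable {M : E2 → ℝ} (hM : Continuous M) {K : NNReal}
    (hL : LipschitzWith K (fun x : E3 => M (proj2 x))) {nv : Fin 3 → E3 → ℝ} (h : Cf nv)

/-- the commutator density -/
def Elm (nv : Fin 3 → E3 → ℝ) (A : Fin 3 → Fin 3 → E3 →L[ℝ] E3) (u : E3 → E3)
    (i l m : Fin 3) (x : E3) : ℝ :=
  inner ℝ (A l m (Dv l (Dv m u) x)) (Tn nv i (Tn nv i u) x)
  - inner ℝ (A l m (Dv m (Tn nv i u) x + Dv m (nv i) x • Dv 0 u x)) (Dv l (Tn nv i u) x)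
  + Dv l (nv i) x * inner ℝ (A l m (Dv 0 (Dv m u) x)) (Tn nv i u x)

include h in
lemma J_Tn1 (u : E3 → E3) (hu : ContDiff ℝ (2 : ℕ) u) (iu : IntegrableOn (J 2 u) (Omg M)) (i : Fin 3) :
    IntegrableOn (J 1 (Tn nv i u)) (Omg M) := by
  obtain ⟨C, hC, hT⟩ := OB_Tn h (n := 1) (by omega) i
  refine int_le (J_continuous 1 (Tn_cd h hu i)) iu C fun x => ?_
  rw [Real.norm_of_nonneg (J_nonneg _ _ _)]
  exact (hT u hu).2 x

include hM hL h in
lemma Elm_int (A : Fin 3 → Fin 3 → E3 →L[ℝ] E3) (u : E3 → E3) (hu : ContDiff ℝ (2 : ℕ) u)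
    (iu : IntegrableOn (J 2 u) (Omg M)) (i : Fin 3)
    (h0 : ∀ x : E3, M (proj2 x) = x 0 → Tn nv i u x = 0) (l m : Fin 3) :
    IntegrableOn (Elm nv A u i l m) (Omg M) ∧ ∫ x in Omg M, Elm nv A u i l m x = 0 := by
  have hz : ContDiff ℝ (1 : ℕ) (Tn nv i u) := Tn_cd h hu i
  have iz := J_Tn1 h u hu iu i
  have hn : ContDiff ℝ (⊤ : ℕ∞) (nv i) := h.smooth i
  have hnd : Differentiable ℝ (nv i) := hn.differentiable (by simp)
  have hnz : ContDiff ℝ (1 : ℕ) (fun x => nv i x • Tn nv i u x) := (cd_top hn).smul hz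
  have inz : IntegrableOn (J 1 (fun x => nv i x • Tn nv i u x)) (Omg M) := by
    obtain ⟨C, hC, hT⟩ := J_smul (F := E3) 1 hn (BC_mono (by omega) (h.bd i))
    refine int_le (J_continuous 1 hnz) iz C fun x => ?_
    rw [Real.norm_of_nonneg (J_nonneg _ _ _)]
    exact hT hz x
  have hb : ContDiff ℝ (1 : ℕ) (fun x => A l m (Dv m u x)) :=
    (A l m).contDiff.comp (Dv_contDiff hu m)
  have hg : ∀ i x, ‖Dv i (fun x => A l m (Dv m u x)) x‖ ^ 2 ≤ ‖A l m‖ ^ 2 * J 2 u x := by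
    intro i x
    rw [Dv_clm _ (cd_diff (Dv_contDiff hu m))]
    refine (pow_le_pow_left₀ (norm_nonneg _) ((A l m).le_opNorm _) 2).trans ?_
    rw [mul_pow]
    refine mul_le_mul_of_nonneg_left ?_ (sq_nonneg _)
    rw [← J_zero (Dv i (Dv m u))]
    exact (J_Dv 0 _ i x).trans (J_Dv 1 u m x)
  have k1 := exchV hM hL hz hb h0 iz (iu.const_mul _) hg i l
  have k2 := exchV hM hL hnz hb (fun x hx => by simp [h0 x hx]) inz (iu.const_mul _) hg 0 l
  have hpt : Elm nv A u i l m = fun x =>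
      ((inner ℝ (Dv l (fun x => A l m (Dv m u x)) x) (Dv i (Tn nv i u) x) -
        inner ℝ (Dv i (fun x => A l m (Dv m u x)) x) (Dv l (Tn nv i u) x) : ℝ)) -
      (inner ℝ (Dv l (fun x => A l m (Dv m u x)) x) (Dv 0 (fun x => nv i x • Tn nv i u x) x) -
        inner ℝ (Dv 0 (fun x => A l m (Dv m u x)) x) (Dv l (fun x => nv i x • Tn nv i u x) x)) := by
    funext x
    have e1 : Dv i (Dv m u) x = Dv m (Tn nv i u) x + Dv m (nv i) x • Dv 0 u x
        + nv i x • Dv 0 (Dv m u) x := by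
      rw [← congrFun (Tn_Dv h hu i m) x]; simp [Tn]
    have e2 : Tn nv i (Tn nv i u) x = Dv i (Tn nv i u) x - nv i x • Dv 0 (Tn nv i u) x := rfl
    simp only [Dv_clm _ (cd_diff (Dv_contDiff hu m)), Dv_smul hnd (cd_diff hz), h.d0, Elm]
    rw [e1, e2]
    simp only [map_add, map_smul, inner_add_left, inner_add_right, inner_sub_right, inner_smul_left,
      inner_smul_right, zero_smul, zero_add]
    simp
    ring
  rw [hpt]
  refine ⟨k1.1.sub k2.1, ?_⟩
  rw [integral_sub k1.1 k2.1, k1.2, k2.2, sub_zero]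

include h in
lemma Elm_pt (A : Fin 3 → Fin 3 → E3 →L[ℝ] E3) {μ : ℝ} (hA : Coer A μ) (ε : ℝ) (hε : 0 < ε) :
    ∃ C, 0 ≤ C ∧ ∀ u : E3 → E3, ContDiff ℝ (2 : ℕ) u → ∀ i x,
      μ * J 1 (Tn nv i u) x ≤ ∑ l, ∑ m, Elm nv A u i l m x + ε * (J 1 (Tn nv i u) x + J 2 u x)
        + C * (J 0 (Lop A u) x + J 1 u x) := by
  obtain ⟨B, hB1, hB, hB'⟩ := h.bound
  obtain ⟨K, hK0, hK⟩ : ∃ K, 0 ≤ K ∧ ∀ l m, ‖A l m‖ ≤ K := by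
    refine ⟨∑ l, ∑ m, ‖A l m‖, by positivity, fun l m => ?_⟩
    have := Finset.single_le_sum (f := fun m => ‖A l m‖) (fun i _ => norm_nonneg _) (Finset.mem_univ m)
    have h5 := Finset.single_le_sum (f := fun l => ∑ m, ‖A l m‖)
      (fun l _ => by positivity) (Finset.mem_univ l)
    exact this.trans h5
  have hμ := hA.1
  refine ⟨(1 + B) ^ 2 / (ε / 2) + (9 * (K * B)) ^ 2 / (ε / 2) +
    (9 * (B * K * (1 + B))) ^ 2 / ε + μ * (1 + B) ^ 2, by positivity, fun u hu i x => ?_⟩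
  set z := Tn nv i u with hz
  set p := √(J 1 z x) with hp
  set g := √(J 1 u x) with hg
  set H := √(J 2 u x) with hH
  have p2 : p ^ 2 = J 1 z x := Real.sq_sqrt (J_nonneg _ _ _)
  have g2 : g ^ 2 = J 1 u x := Real.sq_sqrt (J_nonneg _ _ _)
  have H2 : H ^ 2 = J 2 u x := Real.sq_sqrt (J_nonneg _ _ _)
  have p0 : 0 ≤ p := Real.sqrt_nonneg _
  have g0 : 0 ≤ g := Real.sqrt_nonneg _
  have H0 : 0 ≤ H := Real.sqrt_nonneg _
  have bz : ∀ l, ‖Dv l z x‖ ≤ p := fun l => Real.le_sqrt_of_sq_le (by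
    rw [← J_zero (Dv l z)]; exact J_Dv 0 z l x)
  have bu : ∀ l, ‖Dv l u x‖ ≤ g := fun l => Real.le_sqrt_of_sq_le (by
    rw [← J_zero (Dv l u)]; exact J_Dv 0 u l x)
  have bH : ∀ l m, ‖Dv l (Dv m u) x‖ ≤ H := fun l m => Real.le_sqrt_of_sq_le (by
    rw [← J_zero (Dv l (Dv m u))]; exact (J_Dv 0 _ l x).trans (J_Dv 1 u m x))
  have bs : ∀ (c : ℝ) (v : E3) (R : ℝ), |c| ≤ B → ‖v‖ ≤ R → ‖c • v‖ ≤ B * R := by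
    intro c v R hc hv
    rw [norm_smul, Real.norm_eq_abs]
    exact mul_le_mul hc hv (norm_nonneg _) (by linarith)
  have zz : ‖z x‖ ≤ (1 + B) * g := by
    have := norm_sub_le (Dv i u x) (nv i x • Dv 0 u x)
    have h2 := bs _ _ _ (hB i x) (bu 0)
    have h3 := bu i
    have h4 : z x = Dv i u x - nv i x • Dv 0 u x := rfl
    rw [h4]
    linarith
  have bT : ‖Tn nv i z x‖ ≤ (1 + B) * p := by
    have := norm_sub_le (Dv i z x) (nv i x • Dv 0 z x)
    have h2 := bs _ _ _ (hB i x) (bz 0)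
    have h3 := bz i
    have h4 : Tn nv i z x = Dv i z x - nv i x • Dv 0 z x := rfl
    rw [h4]
    linarith
  have t1 : -inner ℝ (Lop A u x) (Tn nv i z x) ≤ (1 + B) * (‖Lop A u x‖ * p) := by
    have h1 := (abs_le.mp (abs_real_inner_le_norm (Lop A u x) (Tn nv i z x))).1
    have h2 := mul_le_mul_of_nonneg_left bT (norm_nonneg (Lop A u x))
    linarith
  have bA : ∀ l m v, ‖A l m v‖ ≤ K * ‖v‖ := fun l m v =>
    ((A l m).le_opNorm v).trans (mul_le_mul_of_nonneg_right (hK l m) (norm_nonneg _))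
  have t2 : ∑ l, ∑ m, (inner ℝ (A l m (Dv m (nv i) x • Dv 0 u x)) (Dv l z x) : ℝ) ≤
      9 * (K * B) * (g * p) := by
    have h1 : ∀ l m, (inner ℝ (A l m (Dv m (nv i) x • Dv 0 u x)) (Dv l z x) : ℝ) ≤ K * B * (g * p) := by
      intro l m
      refine (real_inner_le_norm _ _).trans ?_
      have h2 := (bA l m (Dv m (nv i) x • Dv 0 u x)).trans
        (mul_le_mul_of_nonneg_left (bs _ _ _ (hB' m i x) (bu 0)) hK0)
      calc _ ≤ K * (B * g) * p := mul_le_mul h2 (bz l) (norm_nonneg _) (by positivity)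
        _ = _ := by ring
    refine (Finset.sum_le_sum fun l _ => Finset.sum_le_sum fun m _ => h1 l m).trans ?_
    simp
    linarith
  have t3 : -∑ l, ∑ m, (Dv l (nv i) x * inner ℝ (A l m (Dv 0 (Dv m u) x)) (z x) : ℝ) ≤
      9 * (B * K * (1 + B)) * (g * H) := by
    have h1 : ∀ l m, -(Dv l (nv i) x * inner ℝ (A l m (Dv 0 (Dv m u) x)) (z x) : ℝ) ≤
        B * K * (1 + B) * (g * H) := by
      intro l m
      refine (neg_le_abs _).trans ?_
      rw [abs_mul]
      have h2 := abs_real_inner_le_norm (A l m (Dv 0 (Dv m u) x)) (z x)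
      have h3 := (bA l m (Dv 0 (Dv m u) x)).trans (mul_le_mul_of_nonneg_left (bH 0 m) hK0)
      have h4 := mul_le_mul h3 zz (norm_nonneg _) (by positivity)
      calc _ ≤ B * (K * H * ((1 + B) * g)) :=
            mul_le_mul (hB' l i x) (h2.trans h4) (abs_nonneg _) (by linarith)
        _ = _ := by ring
    simp only [← Finset.sum_neg_distrib]
    refine (Finset.sum_le_sum fun l _ => Finset.sum_le_sum fun m _ => h1 l m).trans ?_
    simp
    linarith
  have hs : ∑ l, ∑ m, Elm nv A u i l m x = inner ℝ (Lop A u x) (Tn nv i z x)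
      - ∑ l, ∑ m, (inner ℝ (A l m (Dv m z x)) (Dv l z x) : ℝ)
      - ∑ l, ∑ m, (inner ℝ (A l m (Dv m (nv i) x • Dv 0 u x)) (Dv l z x) : ℝ)
      + ∑ l, ∑ m, (Dv l (nv i) x * inner ℝ (A l m (Dv 0 (Dv m u) x)) (z x) : ℝ) := by
    simp only [Elm, Lop, Finset.sum_add_distrib, Finset.sum_sub_distrib, sum_inner, map_add,
      inner_add_left]
    ring
  have hc := hA.2 (fun l => Dv l z x)
  have hJ : J 1 z x = ‖z x‖ ^ 2 + ∑ l, ‖Dv l z x‖ ^ 2 := by simp only [J_succ, J_zero]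
  have y1 := young (1 + B) (ε / 2) ‖Lop A u x‖ p (by positivity)
  have y2 := young (9 * (K * B)) (ε / 2) g p (by positivity)
  have y3 := young (9 * (B * K * (1 + B))) ε g H hε
  have z2 : ‖z x‖ ^ 2 ≤ (1 + B) ^ 2 * g ^ 2 := by
    rw [← mul_pow]; exact pow_le_pow_left₀ (norm_nonneg _) zz 2
  have z3 := mul_le_mul_of_nonneg_left z2 hμ.le
  rw [J_zero]
  rw [p2] at y1 y2
  rw [g2] at y2 y3 z3
  rw [H2] at y3
  have q0 := J_nonneg 1 u x
  have q1 : 0 ≤ (1 + B) ^ 2 / (ε / 2) * J 1 u x := by positivity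
  have q2 : 0 ≤ (9 * (K * B)) ^ 2 / (ε / 2) * ‖Lop A u x‖ ^ 2 := by positivity
  have q3 : 0 ≤ (9 * (B * K * (1 + B))) ^ 2 / ε * ‖Lop A u x‖ ^ 2 := by positivity
  have q4 : 0 ≤ μ * (1 + B) ^ 2 * ‖Lop A u x‖ ^ 2 := by positivity
  have hJ' : μ * J 1 z x = μ * ‖z x‖ ^ 2 + μ * ∑ l, ‖Dv l z x‖ ^ 2 := by rw [hJ]; ring
  rw [hs]
  linarith

include hM hL h in
lemma base (A : Fin 3 → Fin 3 → E3 →L[ℝ] E3) {μ : ℝ} (hA : Coer A μ)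
    (hT : ∀ u : E3 → E3, ContDiff ℝ (1 : ℕ) u → (∀ x : E3, M (proj2 x) = x 0 → u x = 0) →
      ∀ i, ∀ x : E3, M (proj2 x) = x 0 → Tn nv i u x = 0) :
    ∃ C, 0 ≤ C ∧ ∀ u : E3 → E3, ContDiff ℝ (2 : ℕ) u → IntegrableOn (J 2 u) (Omg M) →
      (∀ x : E3, M (proj2 x) = x 0 → u x = 0) →
      ∫ x in Omg M, J 2 u x ≤ C * ((∫ x in Omg M, J 0 (Lop A u) x) + ∫ x in Omg M, J 0 u x) := by
  have hμ := hA.1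
  obtain ⟨C0, hC0, hA0⟩ := A0 h A hA
  obtain ⟨C1, hC1, hen⟩ := energy hM hL A hA
  set ε : ℝ := μ / (2 * (1 + 3 * C0)) with hε
  have hε0 : 0 < ε := by positivity
  obtain ⟨C2, hC2, hE⟩ := Elm_pt h A hA ε hε0
  -- pointwise absorption
  set c3 : ℝ := (3 * ε * C0 + 3 * C2) * (2 / μ) with hc3
  have hc30 : 0 ≤ c3 := by positivity
  set c4 : ℝ := C0 * (1 + c3) with hc4
  have hc40 : 0 ≤ c4 := by positivity
  have hpt : ∀ u : E3 → E3, ContDiff ℝ (2 : ℕ) u → ∀ x,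
      J 2 u x ≤ c4 * (J 0 (Lop A u) x + J 1 u x) +
        C0 * (2 / μ) * ∑ i, ∑ l, ∑ m, Elm nv A u i l m x := by
    intro u hu x
    have a := hA0 u hu x
    have b := Finset.sum_le_sum (s := Finset.univ) fun i (_ : i ∈ Finset.univ) => hE u hu i x
    rw [← Finset.mul_sum, Finset.sum_add_distrib, Finset.sum_add_distrib, ← Finset.mul_sum,
      Finset.sum_add_distrib] at b
    simp only [Finset.sum_const, Finset.card_univ, Fintype.card_fin, nsmul_eq_mul] at b
    push_cast at b
    set Z := ∑ i, J 1 (Tn nv i u) x with hZ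
    set N := ∑ i, ∑ l, ∑ m, Elm nv A u i l m x with hN
    set F := J 0 (Lop A u) x + J 1 u x with hF
    have a' : J 2 u x ≤ C0 * (F + Z) := by rw [hF]; linarith
    have e1 : ε * (1 + 3 * C0) = μ / 2 := by rw [hε]; field_simp
    have b2 : μ * Z ≤ N + μ / 2 * Z + (3 * ε * C0 + 3 * C2) * F := by
      have := mul_le_mul_of_nonneg_left a' (by positivity : 0 ≤ 3 * ε)
      rw [← e1]
      nlinarith
    have b3 : Z ≤ 2 / μ * N + c3 * F := by
      have : μ / 2 * Z ≤ N + (3 * ε * C0 + 3 * C2) * F := by linarith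
      have h2 := mul_le_mul_of_nonneg_left this (by positivity : 0 ≤ 2 / μ)
      have e2 : 2 / μ * (μ / 2 * Z) = Z := by field_simp
      rw [e2] at h2
      rw [hc3]
      linarith
    have b4 := mul_le_mul_of_nonneg_left b3 hC0
    rw [hc4]
    linarith
  refine ⟨c4 * (1 + C1), by positivity, fun u hu iu h0 => ?_⟩
  obtain ⟨N, iN, hN, hJ1⟩ := hen u hu iu h0
  have hz := hT u (cd_le hu (by omega)) h0
  have k := fun i l m => Elm_int hM hL h A u hu iu i (hz i) l m
  set N2 : E3 → ℝ := fun x => ∑ i, ∑ l, ∑ m, Elm nv A u i l m x with hN2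
  have iN2 : IntegrableOn N2 (Omg M) :=
    integrable_finsetSum _ fun i _ => integrable_finsetSum _ fun l _ =>
      integrable_finsetSum _ fun m _ => (k i l m).1
  have zN2 : ∫ x in Omg M, N2 x = 0 := by
    rw [hN2, integral_finsetSum _ fun i _ => integrable_finsetSum _ fun l _ =>
      integrable_finsetSum _ fun m _ => (k i l m).1]
    refine Finset.sum_eq_zero fun i _ => ?_
    rw [integral_finsetSum _ fun l _ => integrable_finsetSum _ fun m _ => (k i l m).1]
    refine Finset.sum_eq_zero fun l _ => ?_
    rw [integral_finsetSum _ fun m _ => (k i l m).1]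
    exact Finset.sum_eq_zero fun m _ => (k i l m).2
  have if0 : IntegrableOn (J 0 (Lop A u)) (Omg M) := by
    obtain ⟨C, hC, hb⟩ := OB_Lop A 0
    refine int_le (J_continuous 0 (Lop_cd A hu)) iu C fun x => ?_
    rw [Real.norm_of_nonneg (J_nonneg _ _ _)]
    exact (hb u hu).2 x
  have iu0 : IntegrableOn (J 0 u) (Omg M) :=
    int_le (J_continuous 0 (cd_le hu (by omega))) iu 1 fun x => by
      rw [Real.norm_of_nonneg (J_nonneg _ _ _), one_mul]; exact J_mono (by omega) u x
  have hfin : ∀ x, J 2 u x ≤ c4 * (1 + C1) * (J 0 (Lop A u) x + J 0 u x) +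
      (c4 * N x + C0 * (2 / μ) * N2 x) := by
    intro x
    have h1 := hpt u hu x
    have h2 := mul_le_mul_of_nonneg_left (hJ1 x) hc40
    have h3 := mul_nonneg hc40 (J_nonneg 0 u x)
    linarith
  have hi := integral_mono (μ := volume.restrict (Omg M)) iu
    (((if0.add iu0).const_mul (c4 * (1 + C1))).add
      ((iN.const_mul c4).add (iN2.const_mul (C0 * (2 / μ))))) hfin
  refine hi.trans (le_of_eq ?_)
  have s1 := integral_add (μ := volume.restrict (Omg M)) ((if0.add iu0).const_mul (c4 * (1 + C1)))
    ((iN.const_mul c4).add (iN2.const_mul (C0 * (2 / μ))))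
  have s2 := integral_add (μ := volume.restrict (Omg M)) (iN.const_mul c4)
    (iN2.const_mul (C0 * (2 / μ)))
  have s3 := integral_add (μ := volume.restrict (Omg M)) if0 iu0
  simp only [Pi.add_apply] at s1 s2 s3 ⊢
  rw [s1, s2, integral_const_mul, integral_const_mul, integral_const_mul, s3, hN, zN2]
  ring
end


section
variable {M : E2 → ℝ} (hM : Continuous M) {K : NNReal}
    (hL : LipschitzWith K (fun x : E3 => M (proj2 x))) {nv : Fin 3 → E3 → ℝ} (h : Cf nv)

include hM hL h in
lemma Pk (A : Fin 3 → Fin 3 → E3 →L[ℝ] E3) {μ : ℝ} (hA : Coer A μ)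
    (hT : ∀ u : E3 → E3, ContDiff ℝ (1 : ℕ) u → (∀ x : E3, M (proj2 x) = x 0 → u x = 0) →
      ∀ i, ∀ x : E3, M (proj2 x) = x 0 → Tn nv i u x = 0) (k : ℕ) (hk : k ≤ 2) :
    ∃ C, 0 ≤ C ∧ ∀ u : E3 → E3, ContDiff ℝ ((k + 2 : ℕ) : WithTop ℕ∞) u →
      IntegrableOn (J (k + 2) u) (Omg M) →
      (∀ x : E3, M (proj2 x) = x 0 → u x = 0) →
      ∫ x in Omg M, J (k + 2) u x ≤
        C * ((∫ x in Omg M, J k (Lop A u) x) + ∫ x in Omg M, J 0 u x) := by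
  induction k with
  | zero => exact base hM hL h A hA hT
  | succ k ih =>
    obtain ⟨C, hC, ih⟩ := ih (by omega)
    obtain ⟨Ca, hCa, hAn⟩ := An h A hA (k + 1) (by omega)
    choose Cb hCb hLT using fun i => J_Lop_Tn h A i k (by omega)
    choose Cc hCc hTn using fun i => OB_Tn h (n := k + 2) (by omega) i
    choose Cd hCd hTn0 using fun i => OB_Tn h (n := 0) (by omega) i
    obtain ⟨Ce, hCe, hLo⟩ := OB_Lop A (k + 1)
    set S : ℝ := ∑ i, C * (Cb i + Cb i * C + Cd i * C) with hS
    have hS0 : 0 ≤ S := Finset.sum_nonneg fun i _ => by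
      have := hCb i; have := hCd i; positivity
    refine ⟨Ca * (1 + S + C), by positivity, fun u hu iu h0 => ?_⟩
    have iJ : ∀ n, n ≤ k + 3 → IntegrableOn (J n u) (Omg M) := fun n hn =>
      int_le (J_continuous n (cd_le hu (by omega))) iu 1 fun x => by
        rw [Real.norm_of_nonneg (J_nonneg _ _ _), one_mul]; exact J_mono (by omega) u x
    have iL1 : IntegrableOn (J (k + 1) (Lop A u)) (Omg M) := by
      refine int_le (J_continuous _ (Lop_cd A hu)) iu Ce fun x => ?_
      rw [Real.norm_of_nonneg (J_nonneg _ _ _)]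
      exact (hLo u hu).2 x
    have iL0 : IntegrableOn (J k (Lop A u)) (Omg M) := by
      refine int_le (J_continuous _ (cd_le (Lop_cd A hu) (by omega))) iL1 1 fun x => ?_
      rw [Real.norm_of_nonneg (J_nonneg _ _ _), one_mul]
      exact J_mono_succ _ _ _
    have hz := hT u (cd_le hu (by omega)) h0
    have zc : ∀ i, ContDiff ℝ ((k + 2 : ℕ) : WithTop ℕ∞) (Tn nv i u) := fun i => Tn_cd h hu i
    have iz : ∀ i, IntegrableOn (J (k + 2) (Tn nv i u)) (Omg M) := fun i => by
      refine int_le (J_continuous _ (zc i)) iu (Cc i) fun x => ?_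
      rw [Real.norm_of_nonneg (J_nonneg _ _ _)]
      exact (hTn i u hu).2 x
    have iz0 : ∀ i, IntegrableOn (J 0 (Tn nv i u)) (Omg M) := fun i => by
      refine int_le (J_continuous _ (cd_le (zc i) (by omega))) (iz i) 1 fun x => ?_
      rw [Real.norm_of_nonneg (J_nonneg _ _ _), one_mul]
      exact J_mono (by omega) _ _
    have iLz : ∀ i, IntegrableOn (J k (Lop A (Tn nv i u))) (Omg M) := fun i => by
      refine int_le (J_continuous _ (Lop_cd A (zc i))) (iL1.add (iJ (k + 2) (by omega))) (Cb i)
        fun x => ?_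
      rw [Real.norm_of_nonneg (J_nonneg _ _ _)]
      exact hLT i u hu x
    set IL := ∫ x in Omg M, J (k + 1) (Lop A u) x with hIL
    set I0 := ∫ x in Omg M, J 0 u x with hI0
    have IL0 : 0 ≤ IL := integral_nonneg fun x => J_nonneg _ _ _
    have I00 : 0 ≤ I0 := integral_nonneg fun x => J_nonneg _ _ _
    -- lower order
    have s1 : ∫ x in Omg M, J (k + 2) u x ≤ C * (IL + I0) := by
      refine (ih u (cd_le hu (by omega)) (iJ _ (by omega)) h0).trans ?_
      refine mul_le_mul_of_nonneg_left (add_le_add ?_ le_rfl) hC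
      exact integral_mono iL0 iL1 fun x => J_mono_succ _ _ _
    have s2 : ∀ i, ∫ x in Omg M, J (k + 2) (Tn nv i u) x ≤
        C * (Cb i + Cb i * C + Cd i * C) * (IL + I0) := by
      intro i
      refine (ih _ (zc i) (iz i) (hz i)).trans ?_
      rw [mul_assoc]
      refine mul_le_mul_of_nonneg_left ?_ hC
      have a1 : ∫ x in Omg M, J k (Lop A (Tn nv i u)) x ≤
          Cb i * (IL + ∫ x in Omg M, J (k + 2) u x) := by
        rw [hIL, ← integral_add iL1 (iJ _ (by omega)), ← integral_const_mul]
        exact integral_mono (iLz i) ((iL1.add (iJ _ (by omega))).const_mul _) (hLT i u hu)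
      have a2 : ∫ x in Omg M, J 0 (Tn nv i u) x ≤ Cd i * ∫ x in Omg M, J (k + 2) u x := by
        rw [← integral_const_mul]
        refine integral_mono (iz0 i) ((iJ _ (by omega)).const_mul _) fun x => ?_
        refine ((hTn0 i u (cd_le hu (by omega))).2 x).trans ?_
        exact mul_le_mul_of_nonneg_left (J_mono (by omega) u x) (hCd i)
      have a3 := mul_le_mul_of_nonneg_left s1 (hCb i)
      have a4 := mul_le_mul_of_nonneg_left s1 (hCd i)
      have a5 := mul_nonneg (hCb i) I00
      linarith
    have s3 : ∫ x in Omg M, J (k + 1 + 2) u x ≤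
        Ca * (IL + (∑ i, ∫ x in Omg M, J (k + 2) (Tn nv i u) x) +
          ∫ x in Omg M, J (k + 2) u x) := by
      have iZ : IntegrableOn (fun x => ∑ i, J (k + 2) (Tn nv i u) x) (Omg M) :=
        integrable_finsetSum _ fun i _ => iz i
      have hm := integral_mono (μ := volume.restrict (Omg M)) iu
        (((iL1.add iZ).add (iJ (k + 2) (by omega))).const_mul Ca) (hAn u hu)
      refine hm.trans (le_of_eq ?_)
      have q1 := integral_add (μ := volume.restrict (Omg M)) (iL1.add iZ) (iJ (k + 2) (by omega))
      have q2 := integral_add (μ := volume.restrict (Omg M)) iL1 iZ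
      simp only [Pi.add_apply] at q1 q2 ⊢
      rw [integral_const_mul, q1, q2, integral_finsetSum _ fun i _ => iz i]
    refine s3.trans ?_
    rw [mul_assoc]
    refine mul_le_mul_of_nonneg_left ?_ hCa
    have s4 := Finset.sum_le_sum (s := Finset.univ) fun i (_ : i ∈ Finset.univ) => s2 i
    rw [← Finset.sum_mul, ← hS] at s4
    linarith
end

section geometry
variable (M : E2 → ℝ) (hM : ContDiff ℝ (⊤ : ℕ∞) M)

/-- the conormal field of the graph -/
def nvM (M : E2 → ℝ) (i : Fin 3) (x : E3) : ℝ :=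
  (if i = 0 then 1 else 0) - Dv i (fun y => M (proj2 y)) x

include hM in
lemma Mt_smooth : ContDiff ℝ (⊤ : ℕ∞) (fun y : E3 => M (proj2 y)) :=
  hM.comp projL.contDiff

include hM in
lemma Mt_d0 : Dv 0 (fun y : E3 => M (proj2 y)) = fun _ => 0 := by
  funext x
  have hd : HasFDerivAt M (fderiv ℝ M (projL x)) (projL x) :=
    (hM.differentiable (by simp) _).hasFDerivAt
  have := (hd.comp x projL.hasFDerivAt).fderiv
  have e : (fun y : E3 => M (proj2 y)) = M ∘ projL := rfl
  rw [Dv, e, this]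
  have : projL (eb 0) = 0 := by
    rw [projL_apply]; ext i; fin_cases i <;> simp [proj2]
  simp [this]

include hM in
lemma Mt_bound (hMint : ∀ j ≤ 9, Integrable fun x' : E2 => ‖iteratedFDeriv ℝ j M x'‖ ^ 2) :
    ∃ B, 0 ≤ B ∧ ∀ j ≤ 6, ∀ x, ‖iteratedFDeriv ℝ j (fun y : E3 => M (proj2 y)) x‖ ≤ B := by
  obtain ⟨B, hB0, hB⟩ := M_bound M hM hMint
  refine ⟨B * (1 + ‖projL‖) ^ 6, by positivity, fun j hj x => ?_⟩
  have e : (fun y : E3 => M (proj2 y)) = M ∘ projL := rfl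
  rw [e, projL.iteratedFDeriv_comp_right hM x (by exact_mod_cast le_top)]
  refine (ContinuousMultilinearMap.norm_compContinuousLinearMap_le _ _).trans ?_
  simp only [Finset.prod_const, Finset.card_univ, Fintype.card_fin]
  refine mul_le_mul (hB j (by omega) _) ?_ (by positivity) hB0
  refine (pow_le_pow_left₀ (norm_nonneg projL) (show ‖projL‖ ≤ 1 + ‖projL‖ by linarith) j).trans ?_
  exact pow_le_pow_right₀ (by linarith [norm_nonneg projL]) hj

include hM in
lemma Mt_lip (hMint : ∀ j ≤ 9, Integrable fun x' : E2 => ‖iteratedFDeriv ℝ j M x'‖ ^ 2) :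
    ∃ K, LipschitzWith K (fun y : E3 => M (proj2 y)) := by
  obtain ⟨B, hB0, hB⟩ := Mt_bound M hM hMint
  refine ⟨⟨B, hB0⟩, lipschitzWith_of_nnnorm_fderiv_le
    ((Mt_smooth M hM).differentiable (by simp)) fun x => ?_⟩
  have := hB 1 (by omega) x
  rw [← norm_iteratedFDeriv_fderiv] at this
  simp only [norm_iteratedFDeriv_zero] at this
  exact this

include hM in
lemma nvM_Cf (hMint : ∀ j ≤ 9, Integrable fun x' : E2 => ‖iteratedFDeriv ℝ j M x'‖ ^ 2) :
    Cf (nvM M) := by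
  obtain ⟨B, hB0, hB⟩ := Mt_bound M hM hMint
  have hs := Mt_smooth M hM
  have hbc := BC_of_iter 6 hs B hB
  have hd := fun i => Dv_contDiff_top hs i
  refine ⟨fun i => contDiff_const.sub (hd i), fun i => ?_, fun x => ?_, fun i x => ?_⟩
  · exact BC_sub 5 contDiff_const (hd i) (BC_const _ 5) (hbc.2 i)
  · simp [nvM, Mt_d0 M hM]
  · have := congrFun (Dv_sub (f := fun _ => (if i = 0 then (1:ℝ) else 0)) (differentiable_const _)
      ((hd i).differentiable (by simp)) 0) x
    refine this.trans ?_
    rw [Dv_comm (cd_top hs) 0 i, Mt_d0 M hM]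
    simp [Dv]

include hM in
lemma Tn_van (u : E3 → E3) (hu : ContDiff ℝ (1 : ℕ) u)
    (h0 : ∀ x : E3, M (proj2 x) = x 0 → u x = 0) (i : Fin 3) (x : E3)
    (hx : M (proj2 x) = x 0) : Tn (nvM M) i u x = 0 := by
  by_cases hi : i = 0
  · subst hi
    simp [Tn, nvM, Mt_d0 M hM]
  set Mt : E3 → ℝ := fun y => M (proj2 y) with hMt
  have hl : HasDerivAt (fun t : ℝ => x + t • eb i) (eb i) 0 := by
    simpa using ((hasDerivAt_id (0:ℝ)).smul_const (eb i)).const_add x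
  have hMd : HasFDerivAt Mt (fderiv ℝ Mt (x + (0:ℝ) • eb i)) (x + (0:ℝ) • eb i) :=
    ((Mt_smooth M hM).differentiable (by simp) _).hasFDerivAt
  have h1 : HasDerivAt (fun t : ℝ => Mt (x + t • eb i)) (Dv i Mt x) 0 := by
    have := hMd.comp_hasDerivAt (0:ℝ) hl
    rw [zero_smul, add_zero] at this
    exact this
  have h2 : HasDerivAt (fun t : ℝ => (x + t • eb i) + (Mt (x + t • eb i) - Mt x) • eb 0)
      (eb i + Dv i Mt x • eb 0) 0 := hl.add ((h1.sub_const _).smul_const _)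
  set γ := fun t : ℝ => (x + t • eb i) + (Mt (x + t • eb i) - Mt x) • eb 0 with hγ
  have hγ0 : γ 0 = x := by simp [hγ]
  have hud : HasFDerivAt u (fderiv ℝ u (γ 0)) (γ 0) := (cd_diff hu _).hasFDerivAt
  have h3 := hud.comp_hasDerivAt (0:ℝ) h2
  have h4 : u ∘ γ = fun _ => 0 := by
    funext t
    refine h0 _ ?_
    simp only [hγ]
    rw [proj2_add_smul_eb]
    have hi' : (0 : Fin 3) ≠ i := fun hh => hi hh.symm
    simp [hMt, hx, hi']
  rw [h4, hγ0] at h3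
  have h5 := h3.unique (hasDerivAt_const _ _)
  rw [map_add, map_smul] at h5
  simp only [Tn, nvM, hi, if_false, zero_sub, neg_smul, sub_neg_eq_add]
  exact h5
end geometry

section lame
variable (μh νh : ℝ)

/-- Lame coefficients -/
def ALame (l m : Fin 3) : E3 →L[ℝ] E3 :=
  (if l = m then (-μh) • ContinuousLinearMap.id ℝ E3 else 0) -
    νh • (EuclideanSpace.proj m : E3 →L[ℝ] ℝ).smulRight (eb l)

lemma ALame_apply (l m : Fin 3) (v : E3) :
    ALame μh νh l m v = (if l = m then (-μh) • v else 0) - (νh * v m) • eb l := by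
  have : (EuclideanSpace.proj m : E3 →L[ℝ] ℝ) v = v m := rfl
  by_cases h : l = m <;> simp [ALame, h, mul_smul]

lemma ALame_coer (hμ : 0 < μh) (hν : 0 < νh) : Coer (ALame μh νh) μh := by
  refine ⟨hμ, fun p => ?_⟩
  have key : -∑ l, ∑ m, (inner ℝ (ALame μh νh l m (p m)) (p l) : ℝ) =
      μh * ∑ l, ‖p l‖ ^ 2 + νh * (∑ l, p l l) ^ 2 := by
    have h1 : ∀ l m, (inner ℝ (ALame μh νh l m (p m)) (p l) : ℝ) =
        (if l = m then -μh * ‖p l‖ ^ 2 else 0) - νh * (p m m * p l l) := by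
      intro l m
      rw [ALame_apply, inner_sub_left, inner_smul_left]
      have h2 : (inner ℝ (eb l) (p l) : ℝ) = p l l := by
        simp [EuclideanSpace.inner_single_left]
      rw [h2]
      by_cases h : l = m
      · subst h
        simp only [if_true, inner_smul_left, real_inner_self_eq_norm_sq]
        simp
        ring
      · simp [h]
        ring
    simp only [h1, Finset.sum_sub_distrib, Finset.sum_ite_eq, Finset.mem_univ, if_true]
    simp only [Fin.sum_univ_three]
    ring
  rw [key]
  have := mul_nonneg hν.le (sq_nonneg (∑ l, p l l))
  linarith

lemma ALame_eq {u : E3 → E3} (hu : ContDiff ℝ (2 : ℕ) u) :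
    Lop (ALame μh νh) u = fun y => -μh • vlap u y - νh • grad (vdiv u) y := by
  have d1 : Differentiable ℝ u := cd_diff hu
  have d2 : ∀ m, Differentiable ℝ (Dv m u) := fun m => cd_diff (Dv_contDiff hu m)
  have e1 : ∀ i l, pd i (fun y => u y l) = fun x => Dv i u x l := fun i l => Dv_comp d1 i l
  have e2 : ∀ i j l, pd i (fun x => Dv j u x l) = fun x => Dv i (Dv j u) x l :=
    fun i j l => Dv_comp (d2 j) i l
  have e3 : vdiv u = fun x => ∑ m, Dv m u x m := by
    funext x; simp only [vdiv, e1]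
  have e4 : ∀ l x, pd l (vdiv u) x = ∑ m, Dv l (Dv m u) x m := by
    intro l x
    rw [e3]
    have := congrFun (Dv_sum Finset.univ (g := fun m x => Dv m u x m) (fun m _ =>
      (comp_cd (Dv_contDiff hu m) m).differentiable (by simp)) l) x
    refine this.trans ?_
    refine Finset.sum_congr rfl fun m _ => ?_
    exact congrFun (e2 l m m) x
  funext x
  ext j
  have e5 : vlap u x j = ∑ l, Dv l (Dv l u) x j := by
    simp only [vlap, vecE3, e1, e2]
    rfl
  have e6 : grad (vdiv u) x j = ∑ m, Dv j (Dv m u) x m := by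
    rw [← e4]; rfl
  have e7 : (-μh • vlap u x - νh • grad (vdiv u) x) j =
      -μh * vlap u x j - νh * grad (vdiv u) x j := by simp
  rw [e7, e5, e6]
  simp only [Lop, ALame_apply]
  fin_cases j <;> simp [Fin.sum_univ_three] <;> ring
end lame


section final

lemma pd_congr {U : Set E3} (hU : IsOpen U) {f g : E3 → ℝ} (h : EqOn f g U) (i : Fin 3) :
    EqOn (pd i f) (pd i g) U := by
  intro x hx
  have : f =ᶠ[nhds x] g := by
    filter_upwards [hU.mem_nhds hx] with y hy using h hy
  simp only [pd, this.fderiv_eq]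

lemma lame_congr {U : Set E3} (hU : IsOpen U) {u w : E3 → E3} (h : EqOn u w U) (μh νh : ℝ) :
    EqOn (fun y => -μh • vlap u y - νh • grad (vdiv u) y)
      (fun y => -μh • vlap w y - νh • grad (vdiv w) y) U := by
  have hc : ∀ l : Fin 3, EqOn (fun y => u y l) (fun y => w y l) U := fun l y hy => by
    simp only [h hy]
  have h1 : EqOn (vdiv u) (vdiv w) U := fun x hx => by
    simp only [vdiv]
    exact Finset.sum_congr rfl fun m _ => pd_congr hU (hc m) m hx
  have h2 : EqOn (grad (vdiv u)) (grad (vdiv w)) U := fun x hx => by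
    ext j
    exact pd_congr hU h1 j hx
  have h3 : EqOn (vlap u) (vlap w) U := fun x hx => by
    ext j
    change ∑ m, pd m (pd m fun y => u y j) x = ∑ m, pd m (pd m fun y => w y j) x
    exact Finset.sum_congr rfl fun m _ => pd_congr hU (pd_congr hU (hc j) m) m hx
  intro x hx
  simp only [h2 hx, h3 hx]

lemma iter_congr {U : Set E3} (hU : IsOpen U) {u w : E3 → E3} (h : EqOn u w U) (j : ℕ) :
    EqOn (fun x => ‖iteratedFDeriv ℝ j u x‖ ^ 2) (fun x => ‖iteratedFDeriv ℝ j w x‖ ^ 2) U := by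
  intro x hx
  have : u =ᶠ[nhds x] w := by
    filter_upwards [hU.mem_nhds hx] with y hy using h hy
  simp only [(this.iteratedFDeriv ℝ j).eq_of_nhds]

end final


theorem lame_elliptic_estimate (M : E2 → ℝ) (hM : ContDiff ℝ (⊤ : ℕ∞) M)
    (hMint : ∀ j ≤ 9, Integrable fun x' : E2 => ‖iteratedFDeriv ℝ j M x'‖ ^ 2)
    (μh νh : ℝ) (hμh : 0 < μh) (hνh : 0 < νh)
    (k : ℕ) (hk : k ≤ 2) :
    ∃ C : ℝ, 0 < C ∧
      ∀ u : E3 → E3,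
        ContDiffOn ℝ (k + 2) u (closure (Omg M)) →
        (∀ j ≤ k + 2, IntegrableOn (fun x => ‖iteratedFDeriv ℝ j u x‖ ^ 2) (Omg M)) →
        (∀ j ≤ k, IntegrableOn
          (fun x => ‖iteratedFDeriv ℝ j (fun y => -μh • vlap u y - νh • grad (vdiv u) y) x‖ ^ 2)
          (Omg M)) →
        (∀ x' : E2, u (gph M x') = 0) →
        Filter.Tendsto u (Bornology.cobounded E3 ⊓ Filter.principal (closure (Omg M))) (nhds 0) →
        Real.sqrt (∫ x in Omg M, ‖iteratedFDeriv ℝ (k + 2) u x‖ ^ 2) ≤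
          C * (Real.sqrt (∑ j ∈ Finset.range (k + 1),
              ∫ x in Omg M,
                ‖iteratedFDeriv ℝ j (fun y => -μh • vlap u y - νh • grad (vdiv u) y) x‖ ^ 2) +
            Real.sqrt (∫ x in Omg M, ‖u x‖ ^ 2)) := by
  obtain ⟨K, hL⟩ := Mt_lip M hM hMint
  have hc := nvM_Cf M hM hMint
  obtain ⟨C1, hC1, H1⟩ := Pk hM.continuous hL hc (ALame μh νh) (ALame_coer μh νh hμh hνh)
    (fun u hu h0 i x hx => Tn_van M hM u hu h0 i x hx) k hk
  obtain ⟨C2, hC2, H2⟩ := iter_le_J (F := E3) (k + 2)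
  obtain ⟨C3, hC3, H3⟩ := J_le_iter (F := E3) (k + 2)
  obtain ⟨C4, hC4, H4⟩ := J_le_iter (F := E3) k
  obtain ⟨C5, hC5, H5⟩ := J_le_iter (F := E3) 0
  set D : ℝ := C2 * C1 * (C4 + C5) with hD
  have hD0 : 0 ≤ D := by positivity
  refine ⟨Real.sqrt D + 1, by positivity, fun u hu iu jf h0 _ => ?_⟩
  have hO := isOpen_Omg M hM.continuous
  have mO := hO.measurableSet
  obtain ⟨w, hw, hwu⟩ := omg_ext M hM (k + 2) (by omega) u (by exact_mod_cast hu)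
  have eqw : EqOn u w (Omg M) := fun x hx => (hwu x (le_of_lt hx)).symm
  have hw0 : ∀ x : E3, M (proj2 x) = x 0 → w x = 0 := fun x hx => by
    rw [hwu x hx.le, ← gph_proj2 M x hx, h0]
  have iw : ∀ j ≤ k + 2, IntegrableOn (fun x => ‖iteratedFDeriv ℝ j w x‖ ^ 2) (Omg M) :=
    fun j hj => (iu j hj).congr_fun (iter_congr hO eqw j) mO
  set f : E3 → E3 := fun y => -μh • vlap u y - νh • grad (vdiv u) y with hf
  have eL : Lop (ALame μh νh) w = fun y => -μh • vlap w y - νh • grad (vdiv w) y :=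
    ALame_eq μh νh (cd_le hw (by omega))
  have eqf : EqOn f (Lop (ALame μh νh) w) (Omg M) := by
    rw [eL]; exact lame_congr hO eqw μh νh
  have cL : ContDiff ℝ (k : ℕ) (Lop (ALame μh νh) w) := Lop_cd _ hw
  have iJ : IntegrableOn (J (k + 2) w) (Omg M) := by
    refine int_le (J_continuous _ hw) (integrable_finsetSum (Finset.range (k + 2 + 1)) fun j hj =>
      iw j (by simpa [Nat.lt_succ_iff] using hj)) C3 fun x => ?_
    rw [Real.norm_of_nonneg (J_nonneg _ _ _)]
    exact H3 hw x
  have main := H1 w hw iJ hw0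
  have iLf : ∀ j ∈ Finset.range (k + 1), IntegrableOn
      (fun x => ‖iteratedFDeriv ℝ j (Lop (ALame μh νh) w) x‖ ^ 2) (Omg M) := fun j hj =>
    (jf j (by simpa [Nat.lt_succ_iff] using hj)).congr_fun (iter_congr hO eqf j) mO
  set a : ℝ := ∑ j ∈ Finset.range (k + 1), ∫ x in Omg M, ‖iteratedFDeriv ℝ j f x‖ ^ 2 with ha
  set b : ℝ := ∫ x in Omg M, ‖u x‖ ^ 2 with hb
  have ha0 : 0 ≤ a := Finset.sum_nonneg fun j _ => integral_nonneg fun x => by positivity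
  have hb0 : 0 ≤ b := integral_nonneg fun x => by positivity
  have iLJ : IntegrableOn (J k (Lop (ALame μh νh) w)) (Omg M) := by
    refine int_le (J_continuous _ cL) (integrable_finsetSum _ iLf) C4 fun x => ?_
    rw [Real.norm_of_nonneg (J_nonneg _ _ _)]
    exact H4 cL x
  have m1 : ∫ x in Omg M, J k (Lop (ALame μh νh) w) x ≤ C4 * a := by
    have : a = ∫ x in Omg M, ∑ j ∈ Finset.range (k + 1),
        ‖iteratedFDeriv ℝ j (Lop (ALame μh νh) w) x‖ ^ 2 := by
      rw [integral_finsetSum _ iLf, ha]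
      exact Finset.sum_congr rfl fun j _ => setIntegral_congr_fun mO (iter_congr hO eqf j)
    rw [this, ← integral_const_mul]
    exact integral_mono iLJ ((integrable_finsetSum _ iLf).const_mul _) fun x => H4 cL x
  have m2 : ∫ x in Omg M, J 0 w x ≤ C5 * b := by
    have e0 : b = ∫ x in Omg M, ‖iteratedFDeriv ℝ 0 w x‖ ^ 2 := by
      refine setIntegral_congr_fun mO fun x hx => ?_
      simp only [norm_iteratedFDeriv_zero, eqw hx]
    rw [e0, ← integral_const_mul]
    refine integral_mono ?_ ((iw 0 (by omega)).const_mul _) fun x => ?_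
    · refine int_le (J_continuous _ (cd_le hw (by omega))) iJ 1 fun x => ?_
      rw [Real.norm_of_nonneg (J_nonneg _ _ _), one_mul]
      exact J_mono (by omega) _ _
    · have := H5 (cd_le hw (by omega)) x
      simpa using this
  have m3 : ∫ x in Omg M, ‖iteratedFDeriv ℝ (k + 2) u x‖ ^ 2 ≤ D * (a + b) := by
    rw [setIntegral_congr_fun mO (iter_congr hO eqw (k + 2))]
    have s1 : ∫ x in Omg M, ‖iteratedFDeriv ℝ (k + 2) w x‖ ^ 2 ≤
        C2 * ∫ x in Omg M, J (k + 2) w x := by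
      rw [← integral_const_mul]
      exact integral_mono (iw _ le_rfl) (iJ.const_mul _) fun x => H2 hw x
    refine s1.trans ?_
    rw [hD, mul_assoc, mul_assoc]
    refine mul_le_mul_of_nonneg_left (main.trans (mul_le_mul_of_nonneg_left ?_ hC1)) hC2
    nlinarith [mul_nonneg hC4 hb0, mul_nonneg hC5 ha0]
  refine (Real.sqrt_le_sqrt m3).trans ?_
  rw [Real.sqrt_mul hD0]
  refine mul_le_mul (by linarith) ?_ (Real.sqrt_nonneg _) (by positivity)
  rw [Real.sqrt_le_left (by positivity), add_sq, Real.sq_sqrt ha0, Real.sq_sqrt hb0]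
  have := mul_nonneg (Real.sqrt_nonneg a) (Real.sqrt_nonneg b)
  linarith
end
end

section
/- Let K > 0, γ ≥ 1 with p(ρ) = Kρ^γ and p'(ρ) = Kγρ^{γ-1}, and let μ₁, μ₂ ∈ ℝ. Let O ⊂ ℝ³ be open, T > 0, and suppose (ρ, u) : (0,T) × O → (0,∞) × ℝ³ is C¹ in time and C² in space and satisfies ρ_t + div(ρu) = 0 and ρ(u_t + (u·∇)u) = μ₁Δu + (μ₁+μ₂)∇(div u) − ∇p(ρ) pointwise on (0,T) × O. Suppose (ρˢ, uˢ) : O → (0,∞) × ℝ³ is C² and satisfies div(ρˢuˢ) = 0 and ρˢ(uˢ·∇)uˢ = μ₁Δuˢ + (μ₁+μ₂)∇(div uˢ) − ∇p(ρˢ) pointwise on O. Set φ := ρ − ρˢ, ψ := u − uˢ, and ℰ(t,x) := ∫_{ρˢ(x)}^{ρ(t,x)} (p(η) − p(ρˢ(x)))/η² dη + |ψ(t,x)|²/2. Define the vector fields G₁ := −ρℰ·u − (p(ρ) − p(ρˢ))·ψ and B₁ with components (B₁)_i := μ₁ ∑_{j=1}^3 (∂_i ψ_j)ψ_j + (μ₁+μ₂)(div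 ψ)ψ_i, and the scalar R₁ := −ρ((ψ·∇)uˢ)·ψ − (p(ρ) − p(ρˢ) − p'(ρˢ)φ)·div uˢ − (φ/ρˢ)(μ₁Δuˢ + (μ₁+μ₂)∇(div uˢ))·ψ. Then the pointwise identity ∂_t(ρℰ) − div(G₁ + B₁) + μ₁|∇ψ|² + (μ₁+μ₂)(div ψ)² = R₁ holds on (0,T) × O, where |∇ψ|² = ∑_{i,j=1}^3 (∂_i ψ_j)². -/
/- STATEMENT 18: the pointwise energy identity
∂ₜ(ρℰ) − div(G₁ + B₁) + μ₁|∇ψ|² + (μ₁+μ₂)(div ψ)² = R₁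
for the perturbation of a classical solution of the compressible Navier–Stokes
equations around a classical stationary solution, with pressure p(ρ) = Kρ^γ. -/

noncomputable section

open MeasureTheory Real Set Filter intervalIntegral

/-- Convective derivative `(v·∇)w`. -/
def conv (v w : E3 → E3) (x : E3) : E3 := vecE3 fun i => ∑ j, v x j * pd j (fun y => w y i) x

/-- `f` is differentiable at `x` with `i`-th partial derivative `a`. -/
def HasPd (i : Fin 3) (f : E3 → ℝ) (a : ℝ) (x : E3) : Prop :=
  DifferentiableAt ℝ f x ∧ pd i f x = a

namespace HasPd

theorem of_diff {f : E3 → ℝ} {x : E3} (i : Fin 3) (h : DifferentiableAt ℝ f x) :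
    HasPd i f (pd i f x) x := ⟨h, rfl⟩

theorem add {i : Fin 3} {f g : E3 → ℝ} {a b : ℝ} {x : E3} (hf : HasPd i f a x)
    (hg : HasPd i g b x) : HasPd i (fun y => f y + g y) (a + b) x := by
  refine ⟨hf.1.add hg.1, ?_⟩
  rw [← hf.2, ← hg.2]
  unfold pd
  rw [fderiv_fun_add hf.1 hg.1]
  rfl

theorem sub {i : Fin 3} {f g : E3 → ℝ} {a b : ℝ} {x : E3} (hf : HasPd i f a x)
    (hg : HasPd i g b x) : HasPd i (fun y => f y - g y) (a - b) x := by
  refine ⟨hf.1.sub hg.1, ?_⟩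
  rw [← hf.2, ← hg.2]
  unfold pd
  rw [fderiv_fun_sub hf.1 hg.1]
  rfl

theorem neg {i : Fin 3} {f : E3 → ℝ} {a : ℝ} {x : E3} (hf : HasPd i f a x) :
    HasPd i (fun y => - f y) (-a) x := by
  refine ⟨hf.1.neg, ?_⟩
  rw [← hf.2]
  unfold pd
  rw [fderiv_fun_neg]
  rfl

theorem mul {i : Fin 3} {f g : E3 → ℝ} {a b : ℝ} {x : E3} (hf : HasPd i f a x)
    (hg : HasPd i g b x) : HasPd i (fun y => f y * g y) (a * g x + f x * b) x := by
  refine ⟨hf.1.mul hg.1, ?_⟩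
  rw [← hf.2, ← hg.2]
  unfold pd
  rw [fderiv_fun_mul hf.1 hg.1]
  simp
  ring

theorem const (i : Fin 3) (c : ℝ) (x : E3) : HasPd i (fun _ => c) 0 x := by
  refine ⟨differentiableAt_const _, ?_⟩
  unfold pd
  simp

theorem comp {i : Fin 3} {f : E3 → ℝ} {a : ℝ} {x : E3} {g : ℝ → ℝ} {b : ℝ}
    (hg : HasDerivAt g b (f x)) (hf : HasPd i f a x) :
    HasPd i (fun y => g (f y)) (b * a) x := by
  have h := hg.comp_hasFDerivAt x hf.1.hasFDerivAt
  refine ⟨h.differentiableAt, ?_⟩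
  rw [← hf.2]
  unfold pd
  have h2 : fderiv ℝ (fun y => g (f y)) x = b • fderiv ℝ f x := h.fderiv
  rw [h2]
  rfl

theorem sum {i : Fin 3} {f : Fin 3 → E3 → ℝ} {a : Fin 3 → ℝ} {x : E3}
    (hf : ∀ j, HasPd i (f j) (a j) x) : HasPd i (fun y => ∑ j, f j y) (∑ j, a j) x := by
  simp only [Fin.sum_univ_three]
  exact ((hf 0).add (hf 1)).add (hf 2)

theorem congr {i : Fin 3} {f g : E3 → ℝ} {a : ℝ} {x : E3} (hf : HasPd i f a x)
    (h : g =ᶠ[nhds x] f) : HasPd i g a x := by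
  refine ⟨hf.1.congr_of_eventuallyEq h, ?_⟩
  rw [← hf.2]
  unfold pd
  rw [h.fderiv_eq]

end HasPd

/-- The pressure potential. -/
def potF (K γ : ℝ) (r : ℝ) : ℝ := ∫ η in (1:ℝ)..r, K * η ^ γ / η ^ 2

theorem potF_cont (K γ : ℝ) {r : ℝ} (hr : 0 < r) :
    ContinuousAt (fun η : ℝ => K * η ^ γ / η ^ 2) r := by
  have h1 : ContinuousAt (fun η : ℝ => η ^ γ) r :=
    Real.continuousAt_rpow_const r γ (Or.inl hr.ne')
  exact (continuousAt_const.mul h1).div (continuousAt_id.pow 2) (by positivity)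

theorem potF_int (K γ : ℝ) {a b : ℝ} (ha : 0 < a) (hb : 0 < b) :
    IntervalIntegrable (fun η : ℝ => K * η ^ γ / η ^ 2) volume a b := by
  apply ContinuousOn.intervalIntegrable
  intro r hr
  have : 0 < r := lt_of_lt_of_le (lt_min ha hb) hr.1
  exact (potF_cont K γ this).continuousWithinAt

theorem potF_deriv (K γ : ℝ) {r : ℝ} (hr : 0 < r) :
    HasDerivAt (potF K γ) (K * r ^ γ / r ^ 2) r := by
  refine intervalIntegral.integral_hasDerivAt_right (potF_int K γ one_pos hr) ?_
    (potF_cont K γ hr)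
  have hc : ContinuousOn (fun η : ℝ => K * η ^ γ / η ^ 2) (Set.Ioi 0) :=
    fun s hs => (potF_cont K γ hs).continuousWithinAt
  exact hc.stronglyMeasurableAtFilter isOpen_Ioi r hr

theorem pot_eq (K γ C : ℝ) {a b : ℝ} (ha : 0 < a) (hb : 0 < b) :
    (∫ η in a..b, (K * η ^ γ - C) / η ^ 2) =
      potF K γ b - potF K γ a + C * (b⁻¹ - a⁻¹) := by
  have hpos : ∀ r ∈ Set.uIcc a b, 0 < r := fun r hr => lt_of_lt_of_le (lt_min ha hb) hr.1
  have hd : ∀ r ∈ Set.uIcc a b,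
      HasDerivAt (fun r => potF K γ r + C * r⁻¹) ((K * r ^ γ - C) / r ^ 2) r := by
    intro r hr
    have h := (potF_deriv K γ (hpos r hr)).add ((hasDerivAt_inv (hpos r hr).ne').const_mul C)
    exact h.congr_deriv (by ring)
  rw [intervalIntegral.integral_eq_sub_of_hasDerivAt hd]
  · ring
  · apply ContinuousOn.intervalIntegrable
    intro r hr
    have h := hpos r hr
    have h1 : ContinuousAt (fun η : ℝ => η ^ γ) r :=
      Real.continuousAt_rpow_const r γ (Or.inl h.ne')
    exact (((continuousAt_const.mul h1).sub continuousAt_const).div (continuousAt_id.pow 2)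
      (pow_ne_zero 2 h.ne')).continuousWithinAt

theorem pd_diff {O : Set E3} (hO : IsOpen O) {f : E3 → ℝ} (hf : ContDiffOn ℝ 2 f O)
    (i : Fin 3) {x : E3} (hx : x ∈ O) : DifferentiableAt ℝ (pd i f) x := by
  have h : ContDiffAt ℝ 2 f x := hf.contDiffAt (hO.mem_nhds hx)
  have h1 : ContDiffAt ℝ 1 (fderiv ℝ f) x := h.fderiv_right (by norm_num)
  have h2 : DifferentiableAt ℝ (fderiv ℝ f) x := h1.differentiableAt (by norm_num)
  exact h2.clm_apply (differentiableAt_const _)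

theorem comp_contDiffOn {O : Set E3} {f : E3 → E3} (hf : ContDiffOn ℝ 2 f O) (i : Fin 3) :
    ContDiffOn ℝ 2 (fun y => f y i) O :=
  (contDiffOn_euclidean.1 hf) i

theorem vecE3_apply (v : Fin 3 → ℝ) (i : Fin 3) : vecE3 v i = v i := rfl

theorem final_algebra (μ₁ μ₂ r rs rt E P Ps q : ℝ) (hr : r ≠ 0) (hrs : rs ≠ 0)
    (dr drs U V Ut dP dD dDs : Fin 3 → ℝ) (dU dV ddU ddV : Fin 3 → Fin 3 → ℝ)
    (hmass : rt + ∑ i, (dr i * U i + r * dU i i) = 0)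
    (hsmass : ∑ i, (drs i * V i + rs * dV i i) = 0)
    (hmom : ∀ i, r * (Ut i + ∑ j, U j * dU j i) =
      μ₁ * ∑ j, ddU j i + (μ₁ + μ₂) * dD i - dP i)
    (hsmom : ∀ i, rs * (∑ j, V j * dV j i) =
      μ₁ * ∑ j, ddV j i + (μ₁ + μ₂) * dDs i - q * drs i) :
    (rt * E + r * ((P - Ps) / r ^ 2 * rt + ∑ j, (U j - V j) * Ut j))
      - ∑ i, ((-((dr i * E + r * ((P - Ps) / r ^ 2 * dr i + q * drs i * (r⁻¹ - rs⁻¹)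
            + ∑ j, (U j - V j) * (dU i j - dV i j))) * U i + r * E * dU i i)
          - ((dP i - q * drs i) * (U i - V i) + (P - Ps) * (dU i i - dV i i)))
          + (μ₁ * ∑ j, ((ddU i j - ddV i j) * (U j - V j)
              + (dU i j - dV i j) * (dU i j - dV i j))
            + (μ₁ + μ₂) * ((dD i - dDs i) * (U i - V i)
              + (∑ j, dU j j - ∑ j, dV j j) * (dU i i - dV i i))))
      + μ₁ * ∑ i, ∑ j, (dU i j - dV i j) ^ 2
      + (μ₁ + μ₂) * (∑ j, dU j j - ∑ j, dV j j) ^ 2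
    = -r * ∑ i, (∑ j, (U j - V j) * dV j i) * (U i - V i)
      - (P - Ps - q * (r - rs)) * ∑ j, dV j j
      - (r - rs) / rs * ∑ i, (μ₁ * ∑ j, ddV j i + (μ₁ + μ₂) * dDs i) * (U i - V i) := by
  have m0 := hmom 0
  have m1 := hmom 1
  have m2 := hmom 2
  have s0 := hsmom 0
  have s1 := hsmom 1
  have s2 := hsmom 2
  simp only [Fin.sum_univ_three] at *
  linear_combination (norm := (field_simp; ring)) (E + (P - Ps) / r) * hmass
    + (U 0 - V 0) * m0 + (U 1 - V 1) * m1 + (U 2 - V 2) * m2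
    - r / rs * ((U 0 - V 0) * s0 + (U 1 - V 1) * s1 + (U 2 - V 2) * s2)
    - (r - rs) / rs * q * hsmass

theorem energy_identity
    (K γ μ₁ μ₂ : ℝ) (hK : 0 < K) (hγ : 1 ≤ γ)
    (O : Set E3) (hO : IsOpen O) (T : ℝ) (hT : 0 < T)
    (ρ : ℝ → E3 → ℝ) (u : ℝ → E3 → E3) (ρs : E3 → ℝ) (us : E3 → E3)
    -- positivity of the densities
    (hρpos : ∀ t ∈ Set.Ioo (0:ℝ) T, ∀ x ∈ O, 0 < ρ t x)
    (hρspos : ∀ x ∈ O, 0 < ρs x)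
    -- (ρ, u) is C¹ in time and C² in space on (0,T) × O; (ρˢ, uˢ) is C² on O
    (hρt : ∀ x ∈ O, ContDiffOn ℝ 1 (fun t => ρ t x) (Set.Ioo 0 T))
    (hut : ∀ x ∈ O, ContDiffOn ℝ 1 (fun t => u t x) (Set.Ioo 0 T))
    (hρx : ∀ t ∈ Set.Ioo (0:ℝ) T, ContDiffOn ℝ 2 (ρ t) O)
    (hux : ∀ t ∈ Set.Ioo (0:ℝ) T, ContDiffOn ℝ 2 (u t) O)
    (hρsx : ContDiffOn ℝ 2 ρs O) (husx : ContDiffOn ℝ 2 us O)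
    -- (ρ, u) solves the compressible Navier–Stokes equations on (0,T) × O
    (hmass : ∀ t ∈ Set.Ioo (0:ℝ) T, ∀ x ∈ O,
      deriv (fun s => ρ s x) t + vdiv (fun y => ρ t y • u t y) x = 0)
    (hmom : ∀ t ∈ Set.Ioo (0:ℝ) T, ∀ x ∈ O,
      ρ t x • (deriv (fun s => u s x) t + conv (u t) (u t) x) =
        μ₁ • vlap (u t) x + (μ₁ + μ₂) • grad (vdiv (u t)) x
          - grad (fun y => K * ρ t y ^ γ) x)
    -- (ρˢ, uˢ) is a stationary solution on O
    (hsmass : ∀ x ∈ O, vdiv (fun y => ρs y • us y) x = 0)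
    (hsmom : ∀ x ∈ O,
      ρs x • conv us us x =
        μ₁ • vlap us x + (μ₁ + μ₂) • grad (vdiv us) x
          - grad (fun y => K * ρs y ^ γ) x) :
    -- the energy identity ∂ₜ(ρℰ) − div(G₁ + B₁) + μ₁|∇ψ|² + (μ₁+μ₂)(div ψ)² = R₁
    ∀ t ∈ Set.Ioo (0:ℝ) T, ∀ x ∈ O,
      deriv (fun s => ρ s x *
          ((∫ η in ρs x..ρ s x, (K * η ^ γ - K * ρs x ^ γ) / η ^ 2)
            + ‖u s x - us x‖ ^ 2 / 2)) t
        - vdiv (fun y =>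
            (-((ρ t y *
                ((∫ η in ρs y..ρ t y, (K * η ^ γ - K * ρs y ^ γ) / η ^ 2)
                  + ‖u t y - us y‖ ^ 2 / 2)) • u t y)
              - (K * ρ t y ^ γ - K * ρs y ^ γ) • (u t y - us y))
            + vecE3 (fun i =>
                μ₁ * ∑ j, pd i (fun z => u t z j - us z j) y * (u t y j - us y j)
                  + (μ₁ + μ₂) * vdiv (fun z => u t z - us z) y * (u t y i - us y i))) x
        + μ₁ * ∑ i, ∑ j, (pd i (fun z => u t z j - us z j) x) ^ 2
        + (μ₁ + μ₂) * (vdiv (fun z => u t z - us z) x) ^ 2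
      = -(ρ t x) * ∑ i, conv (fun z => u t z - us z) us x i * (u t x i - us x i)
        - (K * ρ t x ^ γ - K * ρs x ^ γ
            - K * γ * ρs x ^ (γ - 1) * (ρ t x - ρs x)) * vdiv us x
        - (ρ t x - ρs x) / ρs x *
            ∑ i, (μ₁ • vlap us x + (μ₁ + μ₂) • grad (vdiv us) x) i * (u t x i - us x i) := by
  intro t ht x hx
  have hOx : O ∈ nhds x := hO.mem_nhds hx
  have hTt : Set.Ioo 0 T ∈ nhds t := isOpen_Ioo.mem_nhds ht
  have hr := hρpos t ht x hx
  have hrs := hρspos x hx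
  have dU : ∀ j, ∀ y ∈ O, DifferentiableAt ℝ (fun y => u t y j) y := fun j y hy =>
    ((comp_contDiffOn (hux t ht) j).contDiffAt (hO.mem_nhds hy)).differentiableAt (by norm_num)
  have dV : ∀ j, ∀ y ∈ O, DifferentiableAt ℝ (fun y => us y j) y := fun j y hy =>
    ((comp_contDiffOn husx j).contDiffAt (hO.mem_nhds hy)).differentiableAt (by norm_num)
  have hR : ∀ i, HasPd i (ρ t) (pd i (ρ t) x) x := fun i =>
    .of_diff i (((hρx t ht).contDiffAt hOx).differentiableAt (by norm_num))
  have hS : ∀ i, HasPd i ρs (pd i ρs x) x := fun i =>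
    .of_diff i ((hρsx.contDiffAt hOx).differentiableAt (by norm_num))
  have hU : ∀ i j, HasPd i (fun y => u t y j) (pd i (fun y => u t y j) x) x :=
    fun i j => .of_diff i (dU j x hx)
  have hV : ∀ i j, HasPd i (fun y => us y j) (pd i (fun y => us y j) x) x :=
    fun i j => .of_diff i (dV j x hx)
  have hUU : ∀ i j, HasPd i (pd i (fun y => u t y j)) (pd i (pd i (fun y => u t y j)) x) x :=
    fun i j => .of_diff i (pd_diff hO (comp_contDiffOn (hux t ht) j) i hx)
  have hVV : ∀ i j, HasPd i (pd i (fun y => us y j)) (pd i (pd i (fun y => us y j)) x) x :=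
    fun i j => .of_diff i (pd_diff hO (comp_contDiffOn husx j) i hx)
  have hDU : ∀ i, HasPd i (vdiv (u t)) (pd i (vdiv (u t)) x) x := fun i =>
    .of_diff i (HasPd.sum (i := i) fun j =>
      .of_diff i (pd_diff hO (comp_contDiffOn (hux t ht) j) j hx)).1
  have hDV : ∀ i, HasPd i (vdiv us) (pd i (vdiv us) x) x := fun i =>
    .of_diff i (HasPd.sum (i := i) fun j =>
      .of_diff i (pd_diff hO (comp_contDiffOn husx j) j hx)).1
  have hrpow : ∀ r : ℝ, 0 < r → HasDerivAt (fun r : ℝ => K * r ^ γ) (K * γ * r ^ (γ - 1)) r := by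
    intro r hr
    have h := (Real.hasDerivAt_rpow_const (p := γ) (Or.inl hr.ne')).const_mul K
    exact h.congr_deriv (by ring)
  have hP : ∀ i, HasPd i (fun y => K * ρ t y ^ γ) (pd i (fun y => K * ρ t y ^ γ) x) x :=
    fun i => .of_diff i (HasPd.comp (hrpow _ hr) (hR i)).1
  have hQ : ∀ i, HasPd i (fun y => K * ρs y ^ γ) (K * γ * ρs x ^ (γ - 1) * pd i ρs x) x :=
    fun i => HasPd.comp (g := fun r : ℝ => K * r ^ γ) (hrpow _ hrs) (hS i)
  -- differences
  have ediff : ∀ i j, ∀ y ∈ O, pd i (fun z => u t z j - us z j) y =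
      pd i (fun z => u t z j) y - pd i (fun z => us z j) y := fun i j y hy =>
    ((HasPd.of_diff i (dU j y hy)).sub (HasPd.of_diff i (dV j y hy))).2
  have ediv : ∀ y ∈ O, vdiv (fun z => u t z - us z) y = vdiv (u t) y - vdiv us y := by
    intro y hy
    unfold vdiv
    rw [← Finset.sum_sub_distrib]
    exact Finset.sum_congr rfl fun i _ => ediff i i y hy
  have hnorm : ∀ v w : E3, ‖v - w‖ ^ 2 = ∑ j, (v j - w j) * (v j - w j) := by
    intro v w
    rw [EuclideanSpace.real_norm_sq_eq]
    exact Finset.sum_congr rfl fun i _ => by simp [pow_two]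
  -- time derivative
  have hrt : HasDerivAt (fun s => ρ s x) (deriv (fun s => ρ s x) t) t :=
    (((hρt x hx).contDiffAt hTt).differentiableAt (by norm_num)).hasDerivAt
  have hutv : HasDerivAt (fun s => u s x) (deriv (fun s => u s x) t) t :=
    (((hut x hx).contDiffAt hTt).differentiableAt (by norm_num)).hasDerivAt
  have hutc : ∀ j, HasDerivAt (fun s => u s x j) (deriv (fun s => u s x) t j) t := fun j =>
    ((EuclideanSpace.proj j : E3 →L[ℝ] ℝ).hasFDerivAt).comp_hasDerivAt t hutv
  set Ut : E3 := deriv (fun s => u s x) t with hUt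
  set rt : ℝ := deriv (fun s => ρ s x) t with hrtdef
  have ht1 : deriv (fun s => ρ s x *
          ((∫ η in ρs x..ρ s x, (K * η ^ γ - K * ρs x ^ γ) / η ^ 2)
            + ‖u s x - us x‖ ^ 2 / 2)) t
      = rt * ((∫ η in ρs x..ρ t x, (K * η ^ γ - K * ρs x ^ γ) / η ^ 2)
            + ‖u t x - us x‖ ^ 2 / 2)
        + ρ t x * ((K * ρ t x ^ γ - K * ρs x ^ γ) / ρ t x ^ 2 * rt
            + ∑ j, (u t x j - us x j) * Ut j) := by
    have hev : (fun s => ρ s x *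
          ((∫ η in ρs x..ρ s x, (K * η ^ γ - K * ρs x ^ γ) / η ^ 2)
            + ‖u s x - us x‖ ^ 2 / 2)) =ᶠ[nhds t] fun s => ρ s x *
          ((potF K γ (ρ s x) - potF K γ (ρs x) + K * ρs x ^ γ * ((ρ s x)⁻¹ - (ρs x)⁻¹))
            + (∑ j, (u s x j - us x j) * (u s x j - us x j)) / 2) := by
      filter_upwards [hTt] with s hs
      rw [pot_eq K γ _ hrs (hρpos s hs x hx), hnorm]
    rw [hev.deriv_eq, pot_eq K γ _ hrs hr, hnorm]
    have h1 : HasDerivAt (fun s => potF K γ (ρ s x)) (K * ρ t x ^ γ / ρ t x ^ 2 * rt) t :=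
      HasDerivAt.comp (h₂ := potF K γ) t (potF_deriv K γ hr) hrt
    have h2 : HasDerivAt (fun s => (ρ s x)⁻¹) (-(ρ t x ^ 2)⁻¹ * rt) t :=
      HasDerivAt.comp (h₂ := fun r : ℝ => r⁻¹) t (hasDerivAt_inv hr.ne') hrt
    have h3 : HasDerivAt (fun s => ∑ j, (u s x j - us x j) * (u s x j - us x j))
        (∑ j, (Ut j * (u t x j - us x j) + (u t x j - us x j) * Ut j)) t :=
      HasDerivAt.fun_sum fun j _ => ((hutc j).sub_const _).mul ((hutc j).sub_const _)
    have h4 := hrt.mul (((h1.sub_const (potF K γ (ρs x))).add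
      ((h2.sub_const (ρs x)⁻¹).const_mul (K * ρs x ^ γ))).add (h3.div_const 2))
    refine h4.deriv.trans ?_
    simp only [Fin.sum_univ_three, Pi.add_apply]
    ring
  -- the energy density
  have hE : ∀ i, HasPd i (fun y => (∫ η in ρs y..ρ t y, (K * η ^ γ - K * ρs y ^ γ) / η ^ 2)
                  + ‖u t y - us y‖ ^ 2 / 2)
      ((K * ρ t x ^ γ - K * ρs x ^ γ) / ρ t x ^ 2 * pd i (ρ t) x
        + K * γ * ρs x ^ (γ - 1) * pd i ρs x * ((ρ t x)⁻¹ - (ρs x)⁻¹)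
        + ∑ j, (u t x j - us x j) *
          (pd i (fun y => u t y j) x - pd i (fun y => us y j) x)) x := by
    intro i
    have h1 := HasPd.comp (potF_deriv K γ hr) (hR i)
    have h2 := HasPd.comp (potF_deriv K γ hrs) (hS i)
    have h3 := HasPd.comp (hasDerivAt_inv hr.ne') (hR i)
    have h4 := HasPd.comp (hasDerivAt_inv hrs.ne') (hS i)
    have h5 := HasPd.sum fun j => ((hU i j).sub (hV i j)).mul ((hU i j).sub (hV i j))
    have h6 := ((h1.sub h2).add ((hQ i).mul (h3.sub h4))).add (h5.mul (HasPd.const i (1/2) x))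
    have h7 := h6.congr (g := fun y => (∫ η in ρs y..ρ t y, (K * η ^ γ - K * ρs y ^ γ) / η ^ 2)
                  + ‖u t y - us y‖ ^ 2 / 2) (by
      filter_upwards [hOx] with y hy
      rw [pot_eq K γ _ (hρspos y hy) (hρpos t ht y hy), hnorm]
      ring)
    convert h7 using 1
    simp only [Fin.sum_univ_three]
    ring
  set Ef : E3 → ℝ := fun y => (∫ η in ρs y..ρ t y, (K * η ^ γ - K * ρs y ^ γ) / η ^ 2)
                  + ‖u t y - us y‖ ^ 2 / 2 with hEf
  have hdiv : vdiv (fun y =>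
            (-((ρ t y * Ef y) • u t y)
              - (K * ρ t y ^ γ - K * ρs y ^ γ) • (u t y - us y))
            + vecE3 (fun i =>
                μ₁ * ∑ j, pd i (fun z => u t z j - us z j) y * (u t y j - us y j)
                  + (μ₁ + μ₂) * vdiv (fun z => u t z - us z) y * (u t y i - us y i))) x = _ :=
    Finset.sum_congr rfl fun i _ => by
      have h1 := (((hR i).mul (hE i)).mul (hU i i)).neg.sub
        (((hP i).sub (hQ i)).mul ((hU i i).sub (hV i i)))
      have h2 := (HasPd.const i μ₁ x).mul (HasPd.sum fun j =>
        ((hUU i j).sub (hVV i j)).mul ((hU i j).sub (hV i j)))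
      have h3 := ((HasPd.const i (μ₁ + μ₂) x).mul ((hDU i).sub (hDV i))).mul
        ((hU i i).sub (hV i i))
      refine ((h1.add (h2.add h3)).congr ?_).2
      filter_upwards [hOx] with y hy
      simp only [PiLp.add_apply, PiLp.sub_apply, PiLp.neg_apply, PiLp.smul_apply, vecE3_apply,
        smul_eq_mul, ediv y hy, ediff i _ y hy]
  have hm := hmass t ht x hx
  have hmo := hmom t ht x hx
  have hsm := hsmass x hx
  have hsmo := hsmom x hx
  have hm1 : vdiv (fun y => ρ t y • u t y) x = _ :=
    Finset.sum_congr rfl fun i _ => ((hR i).mul (hU i i)).2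
  have hm2 : vdiv (fun y => ρs y • us y) x = _ :=
    Finset.sum_congr rfl fun i _ => ((hS i).mul (hV i i)).2
  rw [hm1] at hm
  rw [hm2] at hsm
  have key := final_algebra μ₁ μ₂ (ρ t x) (ρs x) rt (Ef x) (K * ρ t x ^ γ) (K * ρs x ^ γ)
    (K * γ * ρs x ^ (γ - 1)) hr.ne' hrs.ne' (fun i => pd i (ρ t) x) (fun i => pd i ρs x)
    (fun i => u t x i) (fun i => us x i) (fun i => Ut i)
    (fun i => pd i (fun y => K * ρ t y ^ γ) x) (fun i => pd i (vdiv (u t)) x)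
    (fun i => pd i (vdiv us) x)
    (fun i j => pd i (fun y => u t y j) x) (fun i j => pd i (fun y => us y j) x)
    (fun i j => pd i (pd i (fun y => u t y j)) x) (fun i j => pd i (pd i (fun y => us y j)) x)
    hm hsm
    (fun i => by
      have h := congrArg (fun v : E3 => v i) hmo
      simpa only [PiLp.add_apply, PiLp.sub_apply, PiLp.smul_apply, vecE3_apply,
        smul_eq_mul, conv, vlap, grad] using h)
    (fun i => by
      have h := congrArg (fun v : E3 => v i) hsmo
      simp only [PiLp.add_apply, PiLp.sub_apply, PiLp.smul_apply, vecE3_apply,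
        smul_eq_mul, conv, vlap, grad] at h
      rw [(hQ i).2] at h
      exact h)
  rw [ht1]
  have e1 : vdiv (u t) x = ∑ j, pd j (fun y => u t y j) x := rfl
  have e2 : vdiv us x = ∑ j, pd j (fun y => us y j) x := rfl
  refine Eq.trans ?_ (key.trans ?_)
  · rw [hdiv, ediv x hx, e1, e2]
    simp only [ediff _ _ x hx]
    simp only [e1, e2, zero_mul, zero_add, mul_assoc, mul_add (μ₁ + μ₂)]
    rfl
  · simp only [PiLp.add_apply, PiLp.sub_apply, PiLp.smul_apply, vecE3_apply,
        smul_eq_mul, conv, vlap, grad, e2]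
end
end
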